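/- arXiv:2507.20303 — 6 statements merged into one kernel-verified Lean document; each statement's English description precedes it below -/
import Mathlib

section
/- For every fixed w ∈ ℂ, the function z ↦ U_S(z,w) has vanishing spherical mean: ∫_ℂ U_S(z,w) dA_S(z) = 0. -/
open MeasureTheory

/-- The unipolar Green function of the sphere. -/
noncomputable def Usph (z w : ℂ) : ℝ :=
  1 / 2 + 1 / 2 * Real.log (‖z - w‖ ^ 2 / ((1 + ‖z‖ ^ 2) * (1 + ‖w‖ ^ 2)))

open Set Filter Topology Real in
theorem Usph_inner (w : ℂ) (r : ℝ) (hr : 0 < r) (hne : r ≠ ‖w‖) :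
    ∫ θ in Ioo (-π) π, r • (Usph (Complex.polarCoord.symm (r, θ)) w *
      (1 / (1 + ‖Complex.polarCoord.symm (r, θ)‖ ^ 2) ^ 2)) =
    2 * π * (r / (1 + r ^ 2) ^ 2 * (1 / 2 - 1 / 2 * log (1 + ‖w‖ ^ 2)
      + (log r + log⁺ (r⁻¹ * ‖w‖)) - 1 / 2 * log (1 + r ^ 2))) := by
  have key : ∀ θ : ℝ, r • (Usph (Complex.polarCoord.symm (r, θ)) w *
      (1 / (1 + ‖Complex.polarCoord.symm (r, θ)‖ ^ 2) ^ 2)) =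
      r / (1 + r ^ 2) ^ 2 * (log ‖circleMap 0 r θ - w‖ +
        (1 / 2 - 1 / 2 * log (1 + ‖w‖ ^ 2) - 1 / 2 * log (1 + r ^ 2))) := by
    intro θ
    have e : Complex.polarCoord.symm (r, θ) = circleMap 0 r θ := by
      simp [circleMap, Complex.exp_mul_I]
    have hn : ‖circleMap 0 r θ‖ = r := by simp [abs_of_pos hr]
    have hz : ‖circleMap 0 r θ - w‖ ≠ 0 := by
      rw [norm_ne_zero_iff, sub_ne_zero]
      rintro h
      exact hne (by rw [← hn, h])
    rw [e, Usph, hn, log_div (by positivity) (by positivity),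
      log_mul (by positivity) (by positivity), log_pow, smul_eq_mul]
    push_cast
    ring
  simp_rw [key]
  rw [← integral_Ioc_eq_integral_Ioo, ← intervalIntegral.integral_of_le (by linarith [pi_pos])]
  have hp : Function.Periodic (fun θ : ℝ => log ‖circleMap 0 r θ - w‖) (2 * π) := by
    intro θ
    simp only [periodic_circleMap 0 r θ]
  have h1 : ∫ θ in (-π)..π, log ‖circleMap 0 r θ - w‖ =
      2 * π * (log r + log⁺ (r⁻¹ * ‖w‖)) := by
    have h2 := hp.intervalIntegral_add_eq (-π) 0
    have h3 := circleAverage_log_norm_sub_const_eq_log_radius_add_posLog (a := w) (c := 0) hr.ne'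
    rw [circleAverage_def] at h3
    simp only [zero_sub, norm_neg, smul_eq_mul] at h3
    rw [show -π + 2 * π = π by ring, zero_add] at h2
    rw [h2, ← h3]
    field_simp
  have hi0 : IntervalIntegrable (fun θ : ℝ => log ‖circleMap 0 r θ - w‖) volume 0 (2 * π) :=
    circleIntegrable_log_norm_sub_const (a := w) (c := 0) r
  have hi : IntervalIntegrable (fun θ : ℝ => log ‖circleMap 0 r θ - w‖) volume (-π) π :=
    hp.intervalIntegrable₀ (by positivity) hi0 _ _
  rw [intervalIntegral.integral_const_mul, intervalIntegral.integral_add hi (by simp), h1]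
  simp
  ring

open Set Filter Topology Real in
theorem Usph_deriv1 (k r : ℝ) : HasDerivAt
    (fun r : ℝ => k * (r ^ 2 / (2 * (1 + r ^ 2))) + 1 / 4 * ((log (1 + r ^ 2) + 1) / (1 + r ^ 2)))
    (r / (1 + r ^ 2) ^ 2 * (k - 1 / 2 * log (1 + r ^ 2))) r := by
  have hs : HasDerivAt (fun r : ℝ => 1 + r ^ 2) (2 * r) r := by
    simpa using (hasDerivAt_pow 2 r).const_add 1
  have h0 : (1 + r ^ 2) ≠ 0 := by positivity
  have := (((hasDerivAt_pow 2 r).div (hs.const_mul 2) (by positivity)).const_mul k).add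
    ((((hs.log h0).add_const 1).div hs h0).const_mul (1 / 4))
  refine this.congr_deriv ?_
  field_simp
  norm_num
  ring

open Set Filter Topology Real in
theorem Usph_deriv2 (k r : ℝ) (hr : 0 < r) : HasDerivAt
    (fun r : ℝ => (k * (r ^ 2 / (2 * (1 + r ^ 2))) +
      1 / 4 * ((log (1 + r ^ 2) + 1) / (1 + r ^ 2))) +
      (r * (r * log r) / (2 * (1 + r ^ 2)) - 1 / 4 * log (1 + r ^ 2)))
    (r / (1 + r ^ 2) ^ 2 * (k + log r - 1 / 2 * log (1 + r ^ 2))) r := by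
  have hs : HasDerivAt (fun r : ℝ => 1 + r ^ 2) (2 * r) r := by
    simpa using (hasDerivAt_pow 2 r).const_add 1
  have h0 : (1 + r ^ 2) ≠ 0 := by positivity
  have hl : HasDerivAt (fun r : ℝ => r * (r * log r)) (1 * (r * log r) + r * (log r + 1)) r :=
    (hasDerivAt_id r).mul (hasDerivAt_mul_log hr.ne')
  have := (Usph_deriv1 k r).add ((hl.div (hs.const_mul 2) (by positivity)).sub
    ((hs.log h0).const_mul (1 / 4)))
  refine this.congr_deriv ?_
  field_simp
  ring

open Set Filter Topology Real in
theorem Usph_lim (k : ℝ) : Tendsto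
    (fun r : ℝ => (k * (r ^ 2 / (2 * (1 + r ^ 2))) +
      1 / 4 * ((log (1 + r ^ 2) + 1) / (1 + r ^ 2))) +
      (r * (r * log r) / (2 * (1 + r ^ 2)) - 1 / 4 * log (1 + r ^ 2))) atTop (𝓝 (k / 2)) := by
  have hs : Tendsto (fun r : ℝ => 1 + r ^ 2) atTop atTop :=
    tendsto_atTop_add_const_left _ _ (tendsto_pow_atTop two_ne_zero)
  have hi : Tendsto (fun r : ℝ => (1 + r ^ 2)⁻¹) atTop (𝓝 0) := tendsto_inv_atTop_zero.comp hs
  have hl : Tendsto (fun r : ℝ => log (1 + r ^ 2) / (1 + r ^ 2)) atTop (𝓝 0) :=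
    isLittleO_log_id_atTop.tendsto_div_nhds_zero.comp hs
  have hq : Tendsto (fun r : ℝ => log (1 + (r ^ 2)⁻¹)) atTop (𝓝 0) := by
    have : Tendsto (fun r : ℝ => 1 + (r ^ 2)⁻¹) atTop (𝓝 (1 + 0)) :=
      (tendsto_inv_atTop_zero.comp (tendsto_pow_atTop two_ne_zero)).const_add 1
    simpa using this.log (by norm_num)
  have := (((hi.const_sub 1).const_mul (k / 2)).add ((hl.add hi).const_mul (1 / 4))).sub
    ((hq.const_mul (1 / 4)).add ((hl.sub (hi.mul hq)).const_mul (1 / 4)))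
  simp only [sub_zero, mul_one, add_zero, mul_zero] at this
  refine this.congr' ?_
  filter_upwards [eventually_gt_atTop 0] with r hr
  have : log (1 + (r ^ 2)⁻¹) = log (1 + r ^ 2) - 2 * log r := by
    rw [show 1 + (r ^ 2)⁻¹ = (1 + r ^ 2) / r ^ 2 by field_simp; ring,
      log_div (by positivity) (by positivity), log_pow]
    push_cast; ring
  rw [this]
  field_simp
  ring

open Set Filter Topology Real in
theorem Usph_radial (a : ℝ) (ha : 0 ≤ a)
    (hi : IntegrableOn (fun r : ℝ => r / (1 + r ^ 2) ^ 2 * (1 / 2 - 1 / 2 * log (1 + a ^ 2)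
      + (log r + log⁺ (r⁻¹ * a)) - 1 / 2 * log (1 + r ^ 2))) (Ioi 0)) :
    ∫ r in Ioi (0 : ℝ), (r / (1 + r ^ 2) ^ 2 * (1 / 2 - 1 / 2 * log (1 + a ^ 2)
      + (log r + log⁺ (r⁻¹ * a)) - 1 / 2 * log (1 + r ^ 2))) = 0 := by
  have hi1 := hi.mono_set (Ioc_subset_Ioi_self : Ioc 0 a ⊆ Ioi 0)
  have hi2 := hi.mono_set (Ioi_subset_Ioi ha)
  rw [← Ioc_union_Ioi_eq_Ioi ha, setIntegral_union Ioc_disjoint_Ioi_same measurableSet_Ioi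
    hi1 hi2]
  set k := 1 / 2 - 1 / 2 * log (1 + a ^ 2) with hk
  have e1 : EqOn (fun r : ℝ => r / (1 + r ^ 2) ^ 2 * (k
      + (log r + log⁺ (r⁻¹ * a)) - 1 / 2 * log (1 + r ^ 2)))
      (fun r => r / (1 + r ^ 2) ^ 2 * ((k + log a) - 1 / 2 * log (1 + r ^ 2))) (Ioc 0 a) := by
    intro r ⟨h0, h1⟩
    have : 0 < a := h0.trans_le h1
    have h2 : 1 ≤ r⁻¹ * a := by rw [inv_mul_eq_div, le_div_iff₀ h0]; linarith
    simp only
    rw [posLog_eq_log (by rwa [abs_of_pos (by positivity)]), log_mul (by positivity) (by positivity),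
      log_inv]
    ring
  have e2 : EqOn (fun r : ℝ => r / (1 + r ^ 2) ^ 2 * (k
      + (log r + log⁺ (r⁻¹ * a)) - 1 / 2 * log (1 + r ^ 2)))
      (fun r => r / (1 + r ^ 2) ^ 2 * (k + log r - 1 / 2 * log (1 + r ^ 2))) (Ioi a) := by
    intro r h1
    have h0 : 0 < r := ha.trans_lt h1
    have h2 : r⁻¹ * a ≤ 1 := by rw [inv_mul_eq_div, div_le_one h0]; exact le_of_lt h1
    simp only
    rw [(posLog_eq_zero_iff _).2 (by rwa [abs_of_nonneg (by positivity)])]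
    ring
  rw [setIntegral_congr_fun measurableSet_Ioc e1, setIntegral_congr_fun measurableSet_Ioi e2]
  rw [integrableOn_congr_fun e1 measurableSet_Ioc] at hi1
  rw [integrableOn_congr_fun e2 measurableSet_Ioi] at hi2
  rw [← intervalIntegral.integral_of_le ha,
    intervalIntegral.integral_eq_sub_of_hasDerivAt (fun x _ => Usph_deriv1 (k + log a) x)
      ((intervalIntegrable_iff_integrableOn_Ioc_of_le ha).2 hi1),
    integral_Ioi_of_hasDerivAt_of_tendsto _
      (fun x hx => Usph_deriv2 k x (ha.trans_lt hx)) hi2 (Usph_lim k)]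
  · rw [hk]
    field_simp
    simp
    ring
  · have hml := continuous_mul_log
    have h1 : ∀ r : ℝ, 1 + r ^ 2 ≠ 0 := fun r => by positivity
    have h2 : ∀ r : ℝ, 2 * (1 + r ^ 2) ≠ 0 := fun r => by positivity
    apply Continuous.continuousWithinAt
    fun_prop (disch := first | exact h1 _ | exact h2 _ | assumption)

open Set Filter Topology Real in
/-- `U_S(·, w)` has vanishing spherical mean. -/
theorem Usph_mean_zero (w : ℂ) :
    ∫ z : ℂ, Usph z w * (1 / (1 + ‖z‖ ^ 2) ^ 2) = 0 := by
  rw [← Complex.integral_comp_polarCoord_symm]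
  by_cases hint : IntegrableOn (fun p : ℝ × ℝ => p.1 • (Usph (Complex.polarCoord.symm p) w *
      (1 / (1 + ‖Complex.polarCoord.symm p‖ ^ 2) ^ 2))) (Ioi 0 ×ˢ Ioo (-π) π)
      (volume.prod volume)
  swap
  · exact integral_undef hint
  change ∫ p in Ioi (0 : ℝ) ×ˢ Ioo (-π) π, _ ∂(volume.prod volume) = 0
  rw [setIntegral_prod _ hint]
  have hae : (fun r : ℝ => ∫ θ in Ioo (-π) π, r • (Usph (Complex.polarCoord.symm (r, θ)) w *
      (1 / (1 + ‖Complex.polarCoord.symm (r, θ)‖ ^ 2) ^ 2))) =ᵐ[volume.restrict (Ioi (0 : ℝ))]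
      fun r : ℝ => 2 * π * (r / (1 + r ^ 2) ^ 2 * (1 / 2 - 1 / 2 * log (1 + ‖w‖ ^ 2)
      + (log r + log⁺ (r⁻¹ * ‖w‖)) - 1 / 2 * log (1 + r ^ 2))) := by
    filter_upwards [ae_restrict_mem measurableSet_Ioi,
      ae_restrict_of_ae (Measure.ae_ne volume ‖w‖)] with r hr hne
    exact Usph_inner w r hr hne
  rw [integral_congr_ae hae, integral_const_mul, Usph_radial _ (norm_nonneg w), mul_zero]
  have h1 := hint
  rw [IntegrableOn, ← Measure.prod_restrict] at h1
  have h2 := h1.integral_prod_left.congr hae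
  have h3 := h2.const_mul (2 * π)⁻¹
  refine h3.congr (Eventually.of_forall fun r => ?_)
  simp only
  rw [inv_mul_cancel_left₀ (by positivity)]
end

section
/- For every real α > −2 and every w ∈ ℂ, one has the identity (1/π) ∫_ℂ exp(α U_S(z,w)) dA_S(z) = 2e^{α/2}/(2+α); in particular the value of this integral is independent of w. -/
open MeasureTheory

theorem Usph_ae (c : ℂ) : ∀ᵐ u : ℂ, 1 + c * u ≠ 0 := by
  rw [ae_iff]
  apply Set.Subsingleton.measure_zero
  intro x hx y hy
  simp only [not_not, Set.mem_ofPred_eq] at hx hy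
  have hc : c ≠ 0 := by rintro rfl; simp at hx
  apply mul_left_cancel₀ hc
  linear_combination hx - hy

theorem Usph_det (a : ℂ) :
    ((ContinuousLinearMap.toSpanSingleton ℂ a).restrictScalars ℝ).det = ‖a‖ ^ 2 := by
  simp [ContinuousLinearMap.det, LinearMap.det_restrictScalars,
      Algebra.norm_complex_eq, Complex.normSq_eq_norm_sq]

open Filter Topology in
theorem Usph_oneD (α : ℝ) (hα : -2 < α) :
    ∫ y in Set.Ioi (0:ℝ), y ^ (2 - 1) • (Real.exp (α * (1 / 2 + 1 / 2 * Real.log (y ^ 2 / (1 + y ^ 2))))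
      * (1 / (1 + y ^ 2) ^ 2)) = Real.exp (α / 2) / (2 + α) := by
  have h2 : (2 + α) ≠ 0 := by linarith
  have hp : 0 < α / 2 + 1 := by linarith
  have hc : Continuous (fun y : ℝ => Real.exp (α / 2) / (2 + α) *
      (y ^ 2 / (1 + y ^ 2)) ^ (α / 2 + 1)) := by
    refine continuous_const.mul (Continuous.rpow_const ?_ (fun _ => Or.inr hp.le))
    refine Continuous.div (by fun_prop) (by fun_prop) (fun x => by positivity)
  have := integral_Ioi_of_hasDerivAt_of_nonneg (a := (0:ℝ))
    (g := fun y : ℝ => Real.exp (α / 2) / (2 + α) * (y ^ 2 / (1 + y ^ 2)) ^ (α / 2 + 1))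
    (g' := fun y => y ^ (2 - 1) • (Real.exp (α * (1 / 2 + 1 / 2 * Real.log (y ^ 2 / (1 + y ^ 2))))
      * (1 / (1 + y ^ 2) ^ 2))) (l := Real.exp (α / 2) / (2 + α))
    hc.continuousWithinAt ?_ ?_ ?_
  · rw [this]
    simp [Real.zero_rpow hp.ne']
  · intro x hx
    have hx : 0 < x := hx
    have ht : 0 < x ^ 2 / (1 + x ^ 2) := by positivity
    have h1 : HasDerivAt (fun y : ℝ => y ^ 2 / (1 + y ^ 2)) (2 * x / (1 + x ^ 2) ^ 2) x := by
      have := (hasDerivAt_pow 2 x).div ((hasDerivAt_pow 2 x).const_add 1) (by positivity)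
      refine this.congr_deriv ?_
      field_simp
      simp
      ring
    refine ((h1.rpow_const (p := α / 2 + 1) (Or.inl ht.ne')).const_mul
      (Real.exp (α / 2) / (2 + α))).congr_deriv ?_
    have e : Real.exp (α * (1 / 2 + 1 / 2 * Real.log (x ^ 2 / (1 + x ^ 2)))) =
        Real.exp (α / 2) * (x ^ 2 / (1 + x ^ 2)) ^ (α / 2) := by
      rw [Real.rpow_def_of_pos ht, ← Real.exp_add]
      congr 1; ring
    rw [e, add_sub_cancel_right]
    generalize (x ^ 2 / (1 + x ^ 2)) ^ (α / 2) = T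
    simp only [smul_eq_mul]
    field_simp
    ring
  · intro x hx
    have hx : 0 < x := hx
    simp only [smul_eq_mul]
    positivity
  · have h3 : Tendsto (fun y : ℝ => y ^ 2 / (1 + y ^ 2)) atTop (𝓝 1) := by
      have : Tendsto (fun y : ℝ => 1 - (1 + y ^ 2)⁻¹) atTop (𝓝 (1 - 0)) := by
        refine tendsto_const_nhds.sub (tendsto_inv_atTop_zero.comp ?_)
        exact tendsto_atTop_add_const_left _ _ (tendsto_pow_atTop (by norm_num))
      rw [sub_zero] at this
      refine this.congr (fun y => ?_)
      have : 1 + y ^ 2 ≠ 0 := by positivity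
      field_simp
      ring
    have := (h3.rpow_const (p := α / 2 + 1) (Or.inr hp.le)).const_mul (Real.exp (α / 2) / (2 + α))
    simpa using this

open ComplexConjugate in
theorem Usph_norm (w u : ℂ) :
    ‖1 - conj w * u‖ ^ 2 + ‖u + w‖ ^ 2 = (1 + ‖u‖ ^ 2) * (1 + ‖w‖ ^ 2) := by
  simp only [← Complex.normSq_eq_norm_sq, Complex.normSq_apply]
  simp
  ring

open ComplexConjugate in
theorem Usph_change (α : ℝ) (w : ℂ) :
    ∫ z : ℂ, Real.exp (α * Usph z w) * (1 / (1 + ‖z‖ ^ 2) ^ 2) =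
    ∫ u : ℂ, Real.exp (α * (1 / 2 + 1 / 2 * Real.log (‖u‖ ^ 2 / (1 + ‖u‖ ^ 2))))
      * (1 / (1 + ‖u‖ ^ 2) ^ 2) := by
  set G : ℂ → ℝ := fun z => Real.exp (α * Usph z w) * (1 / (1 + ‖z‖ ^ 2) ^ 2) with hG
  set s : Set ℂ := {u | 1 + (-conj w) * u ≠ 0} with hs
  set f : ℂ → ℂ := fun u => (u + w) / (1 + (-conj w) * u) with hf
  have hww : (1 + conj w * w) ≠ 0 := by
    have : (1 + conj w * w) = ((1 + ‖w‖ ^ 2 : ℝ) : ℂ) := by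
      rw [← Complex.normSq_eq_conj_mul_self, Complex.normSq_eq_norm_sq]; simp
    rw [this]
    exact_mod_cast (by positivity : (1 + ‖w‖ ^ 2 : ℝ) ≠ 0)
  have hnw : ‖1 + conj w * w‖ = 1 + ‖w‖ ^ 2 := by
    have : (1 + conj w * w) = ((1 + ‖w‖ ^ 2 : ℝ) : ℂ) := by
      rw [← Complex.normSq_eq_conj_mul_self, Complex.normSq_eq_norm_sq]; simp
    rw [this, Complex.norm_real, Real.norm_of_nonneg (by positivity)]
  have himg : f '' s = {z | 1 + conj w * z ≠ 0} := by
    ext z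
    constructor
    · rintro ⟨u, hu, rfl⟩
      have hu : 1 + (-conj w) * u ≠ 0 := hu
      have : 1 + conj w * f u = (1 + conj w * w) / (1 + (-conj w) * u) := by
        simp only [hf]
        rw [eq_div_iff hu, add_mul, mul_assoc, div_mul_cancel₀ _ hu]; ring
      simp only [Set.mem_ofPred_eq, this]
      exact div_ne_zero hww hu
    · intro hz
      have hz : 1 + conj w * z ≠ 0 := hz
      have h1 : 1 + (-conj w) * ((z - w) / (1 + conj w * z)) =
          (1 + conj w * w) / (1 + conj w * z) := by
        field_simp; ring
      refine ⟨(z - w) / (1 + conj w * z), ?_, ?_⟩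
      · simp only [hs, Set.mem_ofPred_eq, h1]
        exact div_ne_zero hww hz
      · simp only [hf, h1]
        rw [div_eq_iff (div_ne_zero hww hz), mul_div_assoc', eq_div_iff hz, add_mul,
          div_mul_cancel₀ _ hz]; ring
  have hinj : Set.InjOn f s := by
    intro x hx y hy hxy
    have hx : 1 + (-conj w) * x ≠ 0 := hx
    have hy : 1 + (-conj w) * y ≠ 0 := hy
    simp only [hf] at hxy
    rw [div_eq_div_iff hx hy] at hxy
    apply mul_left_cancel₀ hww
    linear_combination hxy
  have hder : ∀ x ∈ s, HasFDerivWithinAt f ((ContinuousLinearMap.toSpanSingleton ℂ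
      ((1 + conj w * w) / (1 + (-conj w) * x) ^ 2)).restrictScalars ℝ) s x := by
    intro x hx
    have hx : 1 + (-conj w) * x ≠ 0 := hx
    have h : HasDerivAt f ((1 + conj w * w) / (1 + (-conj w) * x) ^ 2) x := by
      have := ((hasDerivAt_id x).add_const w).div
        (((hasDerivAt_id x).const_mul (-conj w)).const_add 1) hx
      refine this.congr_deriv ?_
      simp only [id]
      congr 1
      ring
    exact (h.hasFDerivAt.restrictScalars ℝ).hasFDerivWithinAt
  have hms : MeasurableSet s := by
    apply IsOpen.measurableSet
    exact isOpen_ne_fun (by fun_prop) (by fun_prop)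
  have key := integral_image_eq_integral_abs_det_fderiv_smul volume hms hder hinj G
  have e1 : ∫ z in f '' s, G z = ∫ z, G z := by
    rw [himg, Measure.restrict_eq_self_of_ae_mem]
    exact Usph_ae _
  rw [← e1, key]
  have e2 : (volume : Measure ℂ).restrict s = volume :=
    Measure.restrict_eq_self_of_ae_mem (Usph_ae _)
  rw [e2]
  apply integral_congr_ae
  filter_upwards [Usph_ae (-conj w)] with u hu
  have hN := Usph_norm w u
  have hd : 1 - conj w * u = 1 + (-conj w) * u := by ring
  rw [hd] at hN
  have hpos : 0 < ‖1 + (-conj w) * u‖ := norm_pos_iff.mpr hu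
  have h1 : f u - w = u * (1 + conj w * w) / (1 + (-conj w) * u) := by
    simp only [hf]
    rw [eq_div_iff hu, sub_mul, div_mul_cancel₀ _ hu]; ring
  have h2 : 1 + ‖f u‖ ^ 2 = (1 + ‖u‖ ^ 2) * (1 + ‖w‖ ^ 2) / ‖1 + (-conj w) * u‖ ^ 2 := by
    rw [← hN]; simp only [hf, norm_div]
    clear hN
    generalize ‖1 + (-conj w) * u‖ = N at hpos ⊢
    field_simp
  have h3 : ‖f u - w‖ ^ 2 / ((1 + ‖f u‖ ^ 2) * (1 + ‖w‖ ^ 2)) = ‖u‖ ^ 2 / (1 + ‖u‖ ^ 2) := by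
    rw [h2, h1, norm_div, norm_mul, hnw]
    clear hN h2
    generalize ‖1 + (-conj w) * u‖ = N at hpos ⊢
    field_simp
  rw [Usph_det, abs_of_nonneg (by positivity)]
  simp only [hG, Usph, smul_eq_mul]
  rw [h3, h2, norm_div, norm_pow, hnw]
  clear hN h2
  generalize ‖1 + (-conj w) * u‖ = N at hpos ⊢
  field_simp

/-- the elementary integral of `exp(α U_S(·, w))` over the sphere. -/
theorem Usph_exp_integral (α : ℝ) (hα : -2 < α) (w : ℂ) :
    1 / Real.pi * ∫ z : ℂ, Real.exp (α * Usph z w) * (1 / (1 + ‖z‖ ^ 2) ^ 2) =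
      2 * Real.exp (α / 2) / (2 + α) := by
  rw [Usph_change, integral_fun_norm_addHaar volume (fun y : ℝ =>
    Real.exp (α * (1 / 2 + 1 / 2 * Real.log (y ^ 2 / (1 + y ^ 2)))) * (1 / (1 + y ^ 2) ^ 2)),
    Complex.finrank_real_complex, Usph_oneD α hα]
  have : (volume : Measure ℂ).real (Metric.ball 0 1) = Real.pi := by
    simp [Measure.real, Complex.volume_ball]
  rw [this]
  have := Real.pi_ne_zero
  simp only [smul_eq_mul, nsmul_eq_mul]
  push_cast
  field_simp
end

section
/- Let N ≥ 1 be an integer, β > 0 a real number, and w₁, …, w_N ∈ ℂ. Then 1 ≤ (1/π) ∫_ℂ exp(β U_S(z,w₁) + ⋯ + β U_S(z,w_N)) dA_S(z) ≤ 2e^{βN/2}/(2+βN), and the upper bound is attained with equality whenever w₁ = w₂ = ⋯ = w_N. -/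
open MeasureTheory

noncomputable def qq (z w : ℂ) : ℝ := ‖z - w‖ ^ 2 / ((1 + ‖z‖ ^ 2) * (1 + ‖w‖ ^ 2))

open ComplexConjugate

noncomputable def mob (w z : ℂ) : ℂ := (z + w) / (1 - conj w * z)

lemma det_mulc (a : ℂ) :
    (((ContinuousLinearMap.toSpanSingleton ℂ a).restrictScalars ℝ : ℂ →L[ℝ] ℂ)).det = ‖a‖ ^ 2 := by
  rw [← Complex.normSq_eq_norm_sq, ← Algebra.norm_complex_apply, Algebra.norm_apply]
  unfold ContinuousLinearMap.det
  congr 1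
  ext <;> simp [mul_comm]

lemma one_add_ne (w : ℂ) : (1 : ℂ) + conj w * w ≠ 0 := by
  intro h
  rw [mul_comm, Complex.mul_conj] at h
  have h2 : (1:ℝ) + Complex.normSq w = 0 := by exact_mod_cast h
  have := Complex.normSq_nonneg w
  linarith

lemma norm_one_add (w : ℂ) : ‖(1 : ℂ) + conj w * w‖ = 1 + ‖w‖ ^ 2 := by
  rw [mul_comm, Complex.mul_conj, Complex.normSq_eq_norm_sq]
  have : (1 : ℂ) + ((‖w‖ ^ 2 : ℝ) : ℂ) = ((1 + ‖w‖ ^ 2 : ℝ) : ℂ) := by push_cast; ring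
  rw [this, Complex.norm_real, Real.norm_of_nonneg (by positivity)]

lemma mob_deriv (w z : ℂ) (hz : 1 - conj w * z ≠ 0) :
    HasDerivAt (mob w) ((1 + conj w * w) / (1 - conj w * z) ^ 2) z := by
  have h1 : HasDerivAt (fun z : ℂ => z + w) 1 z := (hasDerivAt_id z).add_const w
  have h2 : HasDerivAt (fun z : ℂ => 1 - conj w * z) (-(conj w)) z := by
    simpa using ((hasDerivAt_id z).const_mul (conj w)).const_sub 1
  refine (h1.div h2 hz).congr_deriv ?_
  congr 1
  ring

lemma mob_sub (w z : ℂ) (hz : 1 - conj w * z ≠ 0) :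
    mob w z - w = z * (1 + conj w * w) / (1 - conj w * z) := by
  unfold mob; rw [div_sub' hz]; congr 1; ring

lemma mob_add (w z : ℂ) (hz : 1 - conj w * z ≠ 0) :
    1 + conj w * mob w z = (1 + conj w * w) / (1 - conj w * z) := by
  unfold mob; field_simp; ring

lemma mob_norm (w z : ℂ) (hz : 1 - conj w * z ≠ 0) :
    1 + ‖mob w z‖ ^ 2 = (1 + ‖z‖ ^ 2) * (1 + ‖w‖ ^ 2) / ‖1 - conj w * z‖ ^ 2 := by
  have h : ‖1 - conj w * z‖ ^ 2 ≠ 0 := by positivity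
  unfold mob
  rw [norm_div, div_pow, eq_div_iff h, add_mul, div_mul_cancel₀ _ h]
  simp only [← Complex.normSq_eq_norm_sq, Complex.normSq_apply]
  simp
  ring

lemma mob_qq (w z : ℂ) (hz : 1 - conj w * z ≠ 0) :
    qq (mob w z) w = ‖z‖ ^ 2 / (1 + ‖z‖ ^ 2) := by
  have h : ‖1 - conj w * z‖ ≠ 0 := by positivity
  have h1 : 1 + ‖z‖ ^ 2 ≠ 0 := by positivity
  have h2 : 1 + ‖w‖ ^ 2 ≠ 0 := by positivity
  unfold qq
  rw [mob_norm w z hz, mob_sub w z hz, norm_div, norm_mul, norm_one_add]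
  field_simp

def SS (w : ℂ) : Set ℂ := {z | 1 - conj w * z ≠ 0}

lemma SS_open (w : ℂ) : IsOpen (SS w) :=
  isOpen_ne_fun (by fun_prop) (by fun_prop)

lemma SS_ae (w : ℂ) : (SS w : Set ℂ) =ᵐ[volume] Set.univ := by
  rw [Filter.eventuallyEq_univ, mem_ae_iff]
  apply Set.Subsingleton.measure_zero
  intro x hx y hy
  simp only [SS, Set.mem_compl_iff, Set.mem_ofPred_eq, not_not] at hx hy
  have hw : conj w ≠ 0 := by
    intro h; simp [h] at hx
  apply mul_left_cancel₀ hw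
  linear_combination hy - hx

lemma SS_image (w : ℂ) : mob w '' SS w = SS (-w) := by
  ext u
  simp only [SS, Set.mem_image, Set.mem_ofPred_eq]
  constructor
  · rintro ⟨z, hz, rfl⟩
    have := mob_add w z hz
    rw [map_neg, neg_mul, sub_neg_eq_add, this]
    exact div_ne_zero (one_add_ne w) hz
  · intro hu
    simp only [map_neg, neg_mul, sub_neg_eq_add] at hu
    have h1 : 1 - conj w * ((u - w) / (1 + conj w * u)) = (1 + conj w * w) / (1 + conj w * u) := by
      field_simp; ring
    refine ⟨(u - w) / (1 + conj w * u), ?_, ?_⟩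
    · rw [h1]; exact div_ne_zero (one_add_ne w) hu
    · have := one_add_ne w
      unfold mob
      rw [h1, div_add' _ _ _ hu, div_div_div_cancel_right₀ hu, div_eq_iff this]
      ring

lemma SS_inj (w : ℂ) : Set.InjOn (mob w) (SS w) := by
  intro x hx y hy h
  have h1 : (x + w) * (1 - conj w * y) = (y + w) * (1 - conj w * x) := by
    unfold mob at h
    rwa [div_eq_div_iff hx hy] at h
  have := one_add_ne w
  apply mul_left_cancel₀ this
  linear_combination h1

lemma SS_fderiv (w : ℂ) : ∀ z ∈ SS w, HasFDerivWithinAt (mob w)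
    ((ContinuousLinearMap.toSpanSingleton ℂ
      ((1 + conj w * w) / (1 - conj w * z) ^ 2)).restrictScalars ℝ : ℂ →L[ℝ] ℂ) (SS w) z := by
  intro z hz
  exact ((mob_deriv w z hz).hasFDerivAt.restrictScalars ℝ).hasFDerivWithinAt

lemma pull (w : ℂ) (f : ℝ → ℝ) (z : ℂ) (hz : z ∈ SS w) :
    |((ContinuousLinearMap.toSpanSingleton ℂ
      ((1 + conj w * w) / (1 - conj w * z) ^ 2)).restrictScalars ℝ : ℂ →L[ℝ] ℂ).det| •
      (f (qq (mob w z) w) * (1 / (1 + ‖mob w z‖ ^ 2) ^ 2)) =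
    f (‖z‖ ^ 2 / (1 + ‖z‖ ^ 2)) * (1 / (1 + ‖z‖ ^ 2) ^ 2) := by
  have h : ‖1 - conj w * z‖ ≠ 0 := norm_ne_zero_iff.2 hz
  have h1 : 1 + ‖z‖ ^ 2 ≠ 0 := by positivity
  have h2 : 1 + ‖w‖ ^ 2 ≠ 0 := by positivity
  rw [det_mulc, mob_qq w z hz, mob_norm w z hz, norm_div, norm_one_add, norm_pow, smul_eq_mul,
    abs_of_nonneg (by positivity)]
  field_simp

lemma step1 (w : ℂ) (f : ℝ → ℝ) :
    (∫ z : ℂ, f (qq z w) * (1 / (1 + ‖z‖ ^ 2) ^ 2) =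
      ∫ z : ℂ, f (‖z‖ ^ 2 / (1 + ‖z‖ ^ 2)) * (1 / (1 + ‖z‖ ^ 2) ^ 2)) ∧
    (Integrable (fun z : ℂ => f (qq z w) * (1 / (1 + ‖z‖ ^ 2) ^ 2)) ↔
      Integrable (fun z : ℂ => f (‖z‖ ^ 2 / (1 + ‖z‖ ^ 2)) * (1 / (1 + ‖z‖ ^ 2) ^ 2))) := by
  have hA := integral_image_eq_integral_abs_det_fderiv_smul volume (SS_open w).measurableSet
    (SS_fderiv w) (SS_inj w) (fun z : ℂ => f (qq z w) * (1 / (1 + ‖z‖ ^ 2) ^ 2))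
  have hB := integrableOn_image_iff_integrableOn_abs_det_fderiv_smul volume
    (SS_open w).measurableSet
    (SS_fderiv w) (SS_inj w) (fun z : ℂ => f (qq z w) * (1 / (1 + ‖z‖ ^ 2) ^ 2))
  rw [SS_image, setIntegral_congr_set (SS_ae (-w)),
    setIntegral_congr_fun (SS_open w).measurableSet (fun z hz => pull w f z hz),
    setIntegral_congr_set (SS_ae w), setIntegral_univ, setIntegral_univ] at hA
  rw [SS_image, integrableOn_congr_set_ae (SS_ae (-w)),
    integrableOn_congr_fun (fun z hz => pull w f z hz) (SS_open w).measurableSet,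
    integrableOn_congr_set_ae (SS_ae w), integrableOn_univ, integrableOn_univ] at hB
  exact ⟨hA, hB⟩

noncomputable def tt (r : ℝ) : ℝ := r ^ 2 / (1 + r ^ 2)

lemma tt_deriv : ∀ r ∈ Set.Ioi (0:ℝ), HasDerivWithinAt tt (2 * r / (1 + r ^ 2) ^ 2) (Set.Ioi 0) r := by
  intro r _
  have h : 1 + r ^ 2 ≠ 0 := by positivity
  have h1 : HasDerivAt (fun r : ℝ => r ^ 2) (2 * r) r := by simpa using hasDerivAt_pow 2 r
  have := h1.div (h1.const_add 1) h
  refine HasDerivAt.hasDerivWithinAt ?_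
  refine this.congr_deriv ?_
  congr 1
  ring

lemma tt_inj : Set.InjOn tt (Set.Ioi 0) := by
  intro x hx y hy h
  have hx1 : 1 + x ^ 2 ≠ 0 := by positivity
  have hy1 : 1 + y ^ 2 ≠ 0 := by positivity
  unfold tt at h
  rw [div_eq_div_iff hx1 hy1] at h
  have : x ^ 2 = y ^ 2 := by linarith
  exact (pow_left_inj₀ (le_of_lt hx) (le_of_lt hy) two_ne_zero).1 this

lemma tt_image : tt '' Set.Ioi 0 = Set.Ioo 0 1 := by
  ext t
  constructor
  · rintro ⟨r, hr, rfl⟩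
    have hr : 0 < r := hr
    unfold tt
    refine ⟨by positivity, ?_⟩
    rw [div_lt_one (by positivity)]
    linarith
  · rintro ⟨h0, h1⟩
    have : 0 < t / (1 - t) := div_pos h0 (by linarith)
    refine ⟨√(t / (1 - t)), Real.sqrt_pos.2 this, ?_⟩
    unfold tt
    rw [Real.sq_sqrt this.le]
    have : 1 - t ≠ 0 := by linarith
    field_simp
    ring

lemma tt_pull (f : ℝ → ℝ) : ∀ r ∈ Set.Ioi (0:ℝ), |2 * r / (1 + r ^ 2) ^ 2| • f (tt r) =
    2 * (r ^ (Module.finrank ℝ ℂ - 1) • (f (r ^ 2 / (1 + r ^ 2)) * (1 / (1 + r ^ 2) ^ 2))) := by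
  intro r hr
  have hr : 0 < r := hr
  rw [abs_of_nonneg (by positivity)]
  simp [tt]
  ring

lemma step2 (f : ℝ → ℝ) :
    (∫ z : ℂ, f (‖z‖ ^ 2 / (1 + ‖z‖ ^ 2)) * (1 / (1 + ‖z‖ ^ 2) ^ 2) =
      Real.pi * ∫ t in Set.Ioo 0 1, f t) ∧
    (Integrable (fun z : ℂ => f (‖z‖ ^ 2 / (1 + ‖z‖ ^ 2)) * (1 / (1 + ‖z‖ ^ 2) ^ 2)) ↔
      IntegrableOn f (Set.Ioo 0 1)) := by
  have hA := integral_image_eq_integral_abs_deriv_smul measurableSet_Ioi tt_deriv tt_inj f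
  have hB := integrableOn_image_iff_integrableOn_abs_deriv_smul measurableSet_Ioi tt_deriv tt_inj f
  rw [tt_image, setIntegral_congr_fun measurableSet_Ioi (tt_pull f), integral_const_mul] at hA
  rw [tt_image, integrableOn_congr_fun (tt_pull f) measurableSet_Ioi] at hB
  constructor
  · have := integral_fun_norm_addHaar (E := ℂ) volume
      (fun r => f (r ^ 2 / (1 + r ^ 2)) * (1 / (1 + r ^ 2) ^ 2))
    rw [this, hA]
    simp [Measure.real, Complex.volume_ball]
    ring
  · have := integrable_fun_norm_addHaar (E := ℂ) volume
      (f := fun r => f (r ^ 2 / (1 + r ^ 2)) * (1 / (1 + r ^ 2) ^ 2))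
    rw [this, hB]
    unfold IntegrableOn
    rw [integrable_const_mul_iff (by simp)]

lemma key_int (w : ℂ) (f : ℝ → ℝ) :
    ∫ z : ℂ, f (qq z w) * (1 / (1 + ‖z‖ ^ 2) ^ 2) = Real.pi * ∫ t in Set.Ioo 0 1, f t :=
  (step1 w f).1.trans (step2 f).1

lemma key_integrable (w : ℂ) (f : ℝ → ℝ) (hf : IntegrableOn f (Set.Ioo 0 1)) :
    Integrable (fun z : ℂ => f (qq z w) * (1 / (1 + ‖z‖ ^ 2) ^ 2)) :=
  (step1 w f).2.2 ((step2 f).2.2 hf)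

lemma U_integrableOn : IntegrableOn (fun t : ℝ => 1 / 2 + 1 / 2 * Real.log t) (Set.Ioo 0 1) := by
  have h : IntervalIntegrable (fun t : ℝ => 1 / 2 + 1 / 2 * Real.log t) volume 0 1 :=
    intervalIntegrable_const.add (intervalIntegral.intervalIntegrable_log'.const_mul _)
  exact ((intervalIntegrable_iff_integrableOn_Ioo_of_le zero_le_one).1 h)

lemma U_int : ∫ t in Set.Ioo (0:ℝ) 1, (1 / 2 + 1 / 2 * Real.log t) = 0 := by
  rw [← integral_Ioc_eq_integral_Ioo, ← intervalIntegral.integral_of_le zero_le_one,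
    intervalIntegral.integral_add intervalIntegrable_const
      (intervalIntegral.intervalIntegrable_log'.const_mul _),
    intervalIntegral.integral_const_mul, integral_log]
  norm_num

lemma E_eq (s : ℝ) : ∀ t ∈ Set.Ioo (0:ℝ) 1, Real.exp (2 * s * (1 / 2 + 1 / 2 * Real.log t)) =
    Real.exp s * t ^ s := by
  intro t ht
  rw [Real.rpow_def_of_pos ht.1, ← Real.exp_add]
  congr 1; ring

lemma E_integrableOn (s : ℝ) (hs : 0 < s) :
    IntegrableOn (fun t : ℝ => Real.exp (2 * s * (1 / 2 + 1 / 2 * Real.log t))) (Set.Ioo 0 1) := by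
  rw [integrableOn_congr_fun (E_eq s) measurableSet_Ioo]
  exact (intervalIntegrable_iff_integrableOn_Ioo_of_le zero_le_one).1
    ((intervalIntegral.intervalIntegrable_rpow' (by linarith)).const_mul _)

lemma E_int (s : ℝ) (hs : 0 < s) :
    ∫ t in Set.Ioo (0:ℝ) 1, Real.exp (2 * s * (1 / 2 + 1 / 2 * Real.log t)) =
      Real.exp s / (s + 1) := by
  rw [setIntegral_congr_fun measurableSet_Ioo (E_eq s),
    ← integral_Ioc_eq_integral_Ioo, ← intervalIntegral.integral_of_le zero_le_one,
    intervalIntegral.integral_const_mul, integral_rpow (Or.inl (by linarith))]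
  rw [Real.zero_rpow (by linarith)]
  simp
  ring

lemma U_eq (z w : ℂ) : Usph z w = 1 / 2 + 1 / 2 * Real.log (qq z w) := rfl

lemma Usph_meas (w : ℂ) : Measurable (fun z => Usph z w) := by
  unfold Usph
  fun_prop

/-- bounds for the exponential of a sum of unipolar Green functions
on the sphere, with equality in the upper bound when all points coincide. -/
theorem Usph_exp_sum_bounds (N : ℕ) (hN : 1 ≤ N) (β : ℝ) (hβ : 0 < β)
    (w : Fin N → ℂ) :
    1 ≤ 1 / Real.pi *
        ∫ z : ℂ, Real.exp (∑ j, β * Usph z (w j)) * (1 / (1 + ‖z‖ ^ 2) ^ 2) ∧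
    1 / Real.pi *
        ∫ z : ℂ, Real.exp (∑ j, β * Usph z (w j)) * (1 / (1 + ‖z‖ ^ 2) ^ 2) ≤
      2 * Real.exp (β * N / 2) / (2 + β * N) ∧
    ((∀ j k, w j = w k) →
      1 / Real.pi *
          ∫ z : ℂ, Real.exp (∑ j, β * Usph z (w j)) * (1 / (1 + ‖z‖ ^ 2) ^ 2) =
        2 * Real.exp (β * N / 2) / (2 + β * N)) := by
  have hN0 : (0:ℝ) < N := by exact_mod_cast hN
  have hpi := Real.pi_pos
  have hs : 0 < β * N / 2 := by positivity
  set s := β * N / 2 with hsdef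
  -- single-point integrals
  have I1 : ∀ a : ℂ, Integrable (fun z : ℂ => Real.exp (2 * s * Usph z a) * (1 / (1 + ‖z‖ ^ 2) ^ 2)) :=
    fun a => key_integrable a (fun t => Real.exp (2 * s * (1 / 2 + 1 / 2 * Real.log t)))
      (E_integrableOn s hs)
  have V1 : ∀ a : ℂ, ∫ z : ℂ, Real.exp (2 * s * Usph z a) * (1 / (1 + ‖z‖ ^ 2) ^ 2) =
      Real.pi * (Real.exp s / (s + 1)) := by
    intro a
    rw [← E_int s hs]
    exact key_int a (fun t => Real.exp (2 * s * (1 / 2 + 1 / 2 * Real.log t)))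
  have I2 : ∀ a : ℂ, Integrable (fun z : ℂ => Usph z a * (1 / (1 + ‖z‖ ^ 2) ^ 2)) :=
    fun a => key_integrable a (fun t => (1 / 2 + 1 / 2 * Real.log t)) U_integrableOn
  have V2 : ∀ a : ℂ, ∫ z : ℂ, Usph z a * (1 / (1 + ‖z‖ ^ 2) ^ 2) = 0 := by
    intro a
    have := key_int a (fun t => (1 / 2 + 1 / 2 * Real.log t))
    rw [U_int, mul_zero] at this
    exact this
  have I3 : Integrable (fun z : ℂ => (1 / (1 + ‖z‖ ^ 2) ^ 2)) := by
    simpa using key_integrable 0 (fun _ => 1) (by simp)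
  have V3 : ∫ z : ℂ, (1 / (1 + ‖z‖ ^ 2) ^ 2) = Real.pi := by
    simpa using key_int 0 (fun _ => 1)
  have hval : 2 * Real.exp s / (2 + β * N) = Real.exp s / (s + 1) := by
    rw [div_eq_div_iff (by positivity) (by positivity), hsdef]; ring
  rw [hval]
  -- convexity
  have hconv : ∀ z : ℂ, Real.exp (∑ j, β * Usph z (w j)) ≤
      ∑ j, (1 / N : ℝ) * Real.exp (2 * s * Usph z (w j)) := by
    intro z
    have := convexOn_exp.map_sum_le (t := Finset.univ) (w := fun _ : Fin N => (1 / N : ℝ))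
      (p := fun j => 2 * s * Usph z (w j)) (fun _ _ => by positivity)
      (by simp; field_simp) (fun _ _ => Set.mem_univ _)
    simp only [smul_eq_mul] at this
    refine le_trans (le_of_eq ?_) this
    congr 1
    refine Finset.sum_congr rfl fun j _ => ?_
    rw [hsdef]; field_simp
  have hdom : ∀ z : ℂ, Real.exp (∑ j, β * Usph z (w j)) * (1 / (1 + ‖z‖ ^ 2) ^ 2) ≤
      ∑ j, (1 / N : ℝ) * (Real.exp (2 * s * Usph z (w j)) * (1 / (1 + ‖z‖ ^ 2) ^ 2)) := by
    intro z
    have := mul_le_mul_of_nonneg_right (hconv z) (by positivity : 0 ≤ 1 / (1 + ‖z‖ ^ 2) ^ 2)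
    rw [Finset.sum_mul] at this
    simpa only [mul_assoc] using this
  have Idom : Integrable (fun z : ℂ =>
      ∑ j, (1 / N : ℝ) * (Real.exp (2 * s * Usph z (w j)) * (1 / (1 + ‖z‖ ^ 2) ^ 2))) :=
    integrable_finsetSum _ (fun j _ => (I1 (w j)).const_mul _)
  have I0 : Integrable (fun z : ℂ =>
      Real.exp (∑ j, β * Usph z (w j)) * (1 / (1 + ‖z‖ ^ 2) ^ 2)) := by
    refine Idom.mono' ?_ (Filter.Eventually.of_forall fun z => ?_)
    · have := fun a => Usph_meas a
      have h2 : Measurable (fun z => ∑ j, β * Usph z (w j)) :=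
        Finset.measurable_fun_sum _ (fun j _ => (this (w j)).const_mul _)
      exact ((Real.measurable_exp.comp h2).mul (by fun_prop)).aestronglyMeasurable
    · rw [Real.norm_of_nonneg (by positivity)]
      exact hdom z
  refine ⟨?_, ?_, ?_⟩
  · have hlow : ∫ z : ℂ, ((1 / (1 + ‖z‖ ^ 2) ^ 2) +
        ∑ j, β * (Usph z (w j) * (1 / (1 + ‖z‖ ^ 2) ^ 2))) ≤
        ∫ z : ℂ, Real.exp (∑ j, β * Usph z (w j)) * (1 / (1 + ‖z‖ ^ 2) ^ 2) := by
      refine integral_mono (I3.add (integrable_finsetSum _ fun j _ => (I2 (w j)).const_mul _)) I0 ?_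
      intro z
      have := mul_le_mul_of_nonneg_right (Real.add_one_le_exp (∑ j, β * Usph z (w j)))
        (by positivity : 0 ≤ 1 / (1 + ‖z‖ ^ 2) ^ 2)
      rw [add_mul, Finset.sum_mul, one_mul, add_comm] at this
      simpa only [mul_assoc] using this
    rw [integral_add I3 (integrable_finsetSum _ fun j _ => (I2 (w j)).const_mul _),
      integral_finsetSum _ (fun j _ => (I2 (w j)).const_mul _), V3] at hlow
    simp only [integral_const_mul, V2, mul_zero, Finset.sum_const_zero, add_zero] at hlow
    rw [one_div, inv_mul_eq_div, le_div_iff₀ hpi]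
    linarith
  · have hup := integral_mono I0 Idom hdom
    rw [integral_finsetSum _ (fun j _ => (I1 (w j)).const_mul _)] at hup
    simp only [integral_const_mul, V1] at hup
    rw [one_div, inv_mul_eq_div, div_le_iff₀ hpi]
    refine hup.trans (le_of_eq ?_)
    simp
    field_simp
  · intro hw
    have h0 : ∀ z : ℂ, ∑ j, β * Usph z (w j) = 2 * s * Usph z (w ⟨0, hN⟩) := by
      intro z
      rw [Finset.sum_congr rfl (fun j _ => by rw [hw j ⟨0, hN⟩])]
      simp [hsdef]
      ring
    simp only [h0, V1]
    field_simp
end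

section
/- There exists a constant K > 1 such that for every integer N ≥ 1 and every real β > 0, the spherical packing number satisfies 1 ≤ Θ_{N,β}(S) ≤ K^β; moreover Θ_{N,0}(S) = 1. -/
open MeasureTheory

/-- The spherical packing number `Θ_{N,β}(S)`. -/
noncomputable def ThetaSph (N : ℕ) (β : ℝ) : ℝ :=
  ⨅ w : Fin N → ℂ,
    1 / Real.pi *
      ∫ z : ℂ, Real.exp (∑ j, β * Usph z (w j)) * (1 / (1 + ‖z‖ ^ 2) ^ 2)


namespace SphPack

open Real

noncomputable def Phi (u : ℝ) : ℝ := 1/2 * (u * log u + (1-u) * log (1-u))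
noncomputable def hh (t : ℝ) : ℝ := 1/2 * log (1 + exp (2*t))
noncomputable def Psi (u : ℝ) : ℝ := 1/2 * ((1-u) * log (1-u) + u)

lemma mul_log_gibbs (u p : ℝ) (hu : 0 ≤ u) (hp : 0 < p) : u * log p ≤ u * log u + (p - u) := by
  rcases hu.eq_or_lt with rfl | hu
  · simpa using hp.le
  · have h := Real.log_le_sub_one_of_pos (div_pos hp hu)
    rw [Real.log_div hp.ne' hu.ne'] at h
    have h2 := mul_le_mul_of_nonneg_left h hu.le
    have : u * (p / u - 1) = p - u := by field_simp
    linarith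

lemma gibbs (u v : ℝ) (h0 : 0 ≤ u) (h1 : u ≤ 1) (hv0 : 0 < v) (hv1 : v < 1) :
    1/2 * (u * log v + (1-u) * log (1-v)) ≤ Phi u := by
  have a := mul_log_gibbs u v h0 hv0
  have b := mul_log_gibbs (1-u) (1-v) (by linarith) (by linarith)
  unfold Phi; linarith

lemma fenchel (u t : ℝ) (h0 : 0 ≤ u) (h1 : u ≤ 1) : u * t - Phi u ≤ hh t := by
  have hy := exp_pos (2*t)
  have h := gibbs u (exp (2*t) / (1 + exp (2*t))) h0 h1 (by positivity)
    (by rw [div_lt_one (by positivity)]; linarith)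
  have e : 1 - exp (2*t) / (1 + exp (2*t)) = 1 / (1 + exp (2*t)) := by field_simp; ring
  rw [e, log_div hy.ne' (by positivity), log_exp, one_div (1 + exp (2*t)), log_inv] at h
  unfold hh
  linarith

lemma hh_neg (t : ℝ) : hh (-t) = hh t - t := by
  unfold hh
  have : 1 + exp (2 * -t) = (1 + exp (2*t)) / exp (2*t) := by
    rw [mul_neg, exp_neg]; field_simp; ring
  rw [this, log_div (by positivity) (by positivity), log_exp]; ring

lemma logchord (x y : ℝ) (hx : 0 ≤ x) (hxy : x ≤ y) :
    2 * (x*y) * (y-x) / (x+y) ≤ x*y*(log y - log x) := by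
  rcases hx.eq_or_lt with rfl | hx
  · simp
  · have hy : 0 < y := by linarith
    have h := Real.le_log_one_add_of_nonneg (x := y/x - 1) (by
      rw [sub_nonneg, le_div_iff₀ hx]; linarith)
    have e : 1 + (y/x - 1) = y / x := by ring
    rw [e, log_div hy.ne' hx.ne'] at h
    have h2 := mul_le_mul_of_nonneg_left h (mul_pos hx hy).le
    refine le_trans (le_of_eq ?_) h2
    have : x + y ≠ 0 := by positivity
    have : y/x - 1 + 2 ≠ 0 := by
      have := div_pos hy hx
      linarith
    have e2 : y / x - 1 + 2 = (x+y)/x := by field_simp; ring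
    rw [e2]
    field_simp

/-- band inequality -/
lemma band (b c : ℝ) (hb : 0 ≤ b) (hbc : b < c) (hc : c ≤ 1/2) :
    Psi c - Psi b - (c-b)^3 / (2*(b+c)) ≤ b * Phi c - c * Phi b := by
  have h1 := logchord b c hb hbc.le
  have h2 := logchord (1-c) (1-b) (by linarith) (by linarith)
  have e : b * Phi c - c * Phi b - (Psi c - Psi b) = 1/2 * (b*c*(log c - log b)
      + (1-c)*(1-b)*(log (1-b) - log (1-c)) - (c-b)) := by
    unfold Phi Psi; ring
  have p1 : 0 < b + c := by linarith
  have p2 : 1 ≤ 1 - c + (1-b) := by linarith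
  have e1 : 2 * (b*c) * (c-b) / (b+c) = (c-b) * ((b+c)/2) - (c-b)^3/(2*(b+c)) := by
    field_simp; ring
  have e2 : 2 * ((1-c)*(1-b)) * (1-b-(1-c)) / (1-c+(1-b)) =
     (c-b) * ((2-b-c)/2) - (c-b)^3/(2*(1-c+(1-b))) := by
    field_simp; ring
  have e3 : (c-b)^3/(2*(1-c+(1-b))) ≤ (c-b)^3/(2*(b+c)) := by
    apply div_le_div_of_nonneg_left
    · have : 0 ≤ c - b := by linarith
      positivity
    · positivity
    · linarith
  linarith

lemma central (a : ℝ) (h0 : 0 ≤ a) (h1 : a ≤ 1/2) :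
    1/2 - (1-2*a)^3/2 ≤ 2 * Psi a - 2*(1-a) * Phi a := by
  have h := logchord a (1-a) h0 (by linarith)
  have e : 2 * Psi a - 2*(1-a) * Phi a - 1/2 = a*(1-a)*(log (1-a) - log a) - (1-2*a)/2 := by
    unfold Phi Psi; ring
  have e1 : a + (1-a) = 1 := by ring
  rw [e1, div_one] at h
  nlinarith

lemma Phi_zero : Phi 0 = 0 := by simp [Phi]
lemma Psi_zero : Psi 0 = 0 := by simp [Psi]

noncomputable def bb (N k : ℕ) : ℝ := (k:ℝ)^2 / N
noncomputable def ss (N k : ℕ) : ℝ := N * (Phi (bb N (k+1)) - Phi (bb N k)) / (2*k+1)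

lemma ss_mul (N k : ℕ) : (2*(k:ℝ)+1) * ss N k = N * (Phi (bb N (k+1)) - Phi (bb N k)) := by
  unfold ss; field_simp

lemma sum_ss (N j : ℕ) : ∑ k ∈ Finset.range j, (2*(k:ℝ)+1) * ss N k = N * Phi (bb N j) := by
  induction j with
  | zero => simp [bb, Phi_zero]
  | succ j ih => rw [Finset.sum_range_succ, ih, ss_mul]; ring

lemma sum_nn (j : ℕ) : ∑ k ∈ Finset.range j, (2*(k:ℝ)+1) = (j:ℝ)^2 := by
  induction j with
  | zero => simp
  | succ j ih => rw [Finset.sum_range_succ, ih]; push_cast; ring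

noncomputable def phi (u : ℝ) : ℝ := 1/2 * (log u - log (1-u))

lemma tangent (u v : ℝ) (h0 : 0 ≤ u) (h1 : u ≤ 1) (hv0 : 0 < v) (hv1 : v < 1) :
    Phi v + phi v * (u - v) ≤ Phi u := by
  have := gibbs u v h0 h1 hv0 hv1
  have e : Phi v + phi v * (u - v) = 1/2 * (u * log v + (1-u) * log (1-v)) := by
    unfold Phi phi; ring
  linarith

section
variable {N m R : ℕ}

lemma bb_le (hN : 0 < N) (h : 2*m^2 ≤ N) {k : ℕ} (hk : k ≤ m) : bb N k ≤ 1/2 := by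
  unfold bb
  have : (0:ℝ) < N := by exact_mod_cast hN
  rw [div_le_iff₀ this]
  have h1 : 2*k^2 ≤ N := le_trans (by gcongr) h
  have : (2*(k:ℝ)^2) ≤ N := by exact_mod_cast h1
  linarith

lemma bb_nonneg (k : ℕ) : 0 ≤ bb N k := by unfold bb; positivity
lemma bb_pos (hN : 0 < N) {k : ℕ} (hk : 0 < k) : 0 < bb N k := by
  unfold bb
  have : (0:ℝ) < N := by exact_mod_cast hN
  have : (0:ℝ) < k := by exact_mod_cast hk
  positivity

lemma bb_succ (hN : 0 < N) (k : ℕ) : N * (bb N (k+1) - bb N k) = 2*k+1 := by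
  unfold bb
  have : (0:ℝ) < N := by exact_mod_cast hN
  field_simp; push_cast; ring

lemma ss_le (hN : 0 < N) (h : 2*m^2 ≤ N) {k : ℕ} (hk : k < m) : ss N k ≤ phi (bb N (k+1)) := by
  have h1 := bb_le hN h (k := k+1) hk
  have h2 := bb_le hN h (k := k) hk.le
  have h3 := tangent (bb N k) (bb N (k+1)) (bb_nonneg _) (by linarith) (bb_pos hN (by omega))
    (by linarith)
  have hN' : (0:ℝ) < N := by exact_mod_cast hN
  have h4 := bb_succ hN k
  have h5 := ss_mul N k
  have hp : (0:ℝ) < 2*k+1 := by positivity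
  refine le_of_mul_le_mul_left ?_ hp
  rw [h5, ← h4]
  nlinarith

lemma le_ss (hN : 0 < N) (h : 2*m^2 ≤ N) {k : ℕ} (hk : k < m) (hk0 : 0 < k) :
    phi (bb N k) ≤ ss N k := by
  have h1 := bb_le hN h (k := k+1) hk
  have h2 := bb_le hN h (k := k) hk.le
  have h3 := tangent (bb N (k+1)) (bb N k) (bb_nonneg _) (by linarith) (bb_pos hN (by omega))
    (by linarith)
  have hN' : (0:ℝ) < N := by exact_mod_cast hN
  have h4 := bb_succ hN k
  have h5 := ss_mul N k
  have hp : (0:ℝ) < 2*k+1 := by positivity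
  refine le_of_mul_le_mul_left ?_ hp
  rw [h5, ← h4]
  nlinarith

lemma ss_nonpos (hN : 0 < N) (h : 2*m^2 ≤ N) {k : ℕ} (hk : k < m) : ss N k ≤ 0 := by
  refine (ss_le hN h hk).trans ?_
  have h1 := bb_le hN h (k := k+1) hk
  have := Real.log_le_log (bb_pos hN (k := k+1) (by omega)) (show bb N (k+1) ≤ 1 - bb N (k+1) by linarith)
  unfold phi; linarith

lemma phi_gap (hN : 0 < N) (h : 2*m^2 ≤ N) {j k : ℕ} (hj : 0 < j) (hjk : j ≤ k) (hk : k ≤ m) :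
    log k - log j ≤ phi (bb N k) - phi (bb N j) := by
  have h1 := bb_le hN h hk
  have hN' : (0:ℝ) < N := by exact_mod_cast hN
  have hj' : (0:ℝ) < j := by exact_mod_cast hj
  have hjk' : (j:ℝ) ≤ k := by exact_mod_cast hjk
  have hk' : (0:ℝ) < k := by linarith
  have hb : bb N j ≤ bb N k := by unfold bb; gcongr
  have := Real.log_le_log (show 0 < 1 - bb N k by linarith) (show 1 - bb N k ≤ 1 - bb N j by linarith)
  have e1 : log (bb N k) = 2 * log k - log N := by
    unfold bb; rw [log_div (by positivity) (by positivity), log_pow]; norm_num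
  have e2 : log (bb N j) = 2 * log j - log N := by
    unfold bb; rw [log_div (by positivity) (by positivity), log_pow]; norm_num
  unfold phi; rw [e1, e2]; linarith

lemma ss_gap (hN : 0 < N) (h : 2*m^2 ≤ N) {j k : ℕ} (hjk : j < k) (hk : k < m) :
    log k - log (j+1) ≤ ss N k - ss N j := by
  have h1 := ss_le hN h (show j < m by omega)
  have h2 := le_ss hN h hk (by omega)
  have h3 := phi_gap hN h (show 0 < j+1 by omega) (show j+1 ≤ k by omega) hk.le
  push_cast at h3
  linarith

lemma ss_mono (hN : 0 < N) (h : 2*m^2 ≤ N) {j k : ℕ} (hjk : j ≤ k) (hk : k < m) :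
    ss N j ≤ ss N k := by
  rcases hjk.eq_or_lt with rfl | hjk
  · exact le_rfl
  · have h1 := ss_gap hN h hjk hk
    have : ((j:ℝ)+1) ≤ k := by exact_mod_cast hjk
    have := Real.log_le_log (by positivity) this
    linarith

lemma partA0 (hN : 0 < N) (h : 2*m^2 ≤ N) (t : ℝ) (j : ℕ) (hj : j ≤ m) :
    ∑ k ∈ Finset.range j, (2*(k:ℝ)+1) * (max t (ss N k) - ss N k) ≤ N * hh t := by
  have hN' : (0:ℝ) < N := by exact_mod_cast hN
  induction j with
  | zero =>
    have := fenchel 0 t le_rfl zero_le_one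
    rw [Phi_zero] at this
    simp at this ⊢
    positivity
  | succ j ih =>
    by_cases hs : ss N j ≤ t
    · have e : ∑ k ∈ Finset.range (j+1), (2*(k:ℝ)+1) * (max t (ss N k) - ss N k)
        = ∑ k ∈ Finset.range (j+1), ((2*(k:ℝ)+1) * t - (2*(k:ℝ)+1) * ss N k) := by
        refine Finset.sum_congr rfl fun k hk => ?_
        rw [max_eq_left, mul_sub]
        exact (ss_mono hN h (Nat.lt_succ_iff.mp (Finset.mem_range.mp hk)) hj).trans hs
      rw [e, Finset.sum_sub_distrib, ← Finset.sum_mul, sum_nn, sum_ss]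
      have h1 := bb_le hN h hj
      have := fenchel (bb N (j+1)) t (bb_nonneg _) (by linarith)
      have h2 := mul_le_mul_of_nonneg_left this hN'.le
      have e3 : N * bb N (j+1) = ((j+1 : ℕ):ℝ)^2 := by unfold bb; field_simp
      rw [mul_sub, ← mul_assoc, e3] at h2
      exact h2
    · rw [Finset.sum_range_succ, max_eq_right (not_le.mp hs).le]
      simpa using ih (by omega)

lemma partA (hN : 0 < N) (h : 2*m^2+R = N) (t : ℝ) :
    ∑ k ∈ Finset.range m, (2*(k:ℝ)+1) * (max t (ss N k) + max t (-ss N k)) + R * max t 0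
      ≤ N * hh t := by
  have hm : 2*m^2 ≤ N := by omega
  have hNR : 2*(m:ℝ)^2 + R = N := by exact_mod_cast h
  rcases le_total t 0 with ht | ht
  · have h0 := partA0 hN hm t m le_rfl
    rw [max_eq_right ht, mul_zero, add_zero]
    refine le_trans (le_of_eq ?_) h0
    refine Finset.sum_congr rfl fun k hk => ?_
    have := ss_nonpos hN hm (Finset.mem_range.mp hk)
    rw [max_eq_right (b := - ss N k) (by linarith)]; ring
  · have h0 := partA0 hN hm (-t) m le_rfl
    rw [max_eq_left ht, hh_neg] at *
    have e : ∑ k ∈ Finset.range m, (2*(k:ℝ)+1) * (max t (ss N k) + max t (-ss N k))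
      = ∑ k ∈ Finset.range m, ((2*(k:ℝ)+1) * (max (-t) (ss N k) - ss N k) + (2*(k:ℝ)+1) * (2*t)) := by
      refine Finset.sum_congr rfl fun k hk => ?_
      have := ss_nonpos hN hm (Finset.mem_range.mp hk)
      rw [max_eq_left (b := ss N k) (by linarith)]
      have : max t (-ss N k) = max (-t) (ss N k) - ss N k + t := by
        rcases le_total t (-ss N k) with h | h
        · rw [max_eq_right h, max_eq_left (by linarith)]; ring
        · rw [max_eq_left h, max_eq_right (by linarith)]; ring
      rw [this]; ring
    rw [e, Finset.sum_add_distrib, ← Finset.sum_mul, sum_nn]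
    nlinarith

lemma partC (hN : 0 < N) (h : 2*m^2+R = N) (hR : R^2 ≤ 25 * N) :
    (N:ℝ)/2 - 14 ≤ ∑ k ∈ Finset.range m, (2*(k:ℝ)+1) * (hh (ss N k) + hh (-ss N k)) + R * hh 0 := by
  have hm : 2*m^2 ≤ N := by omega
  have hNR : 2*(m:ℝ)^2 + R = N := by exact_mod_cast h
  have hN' : (0:ℝ) < N := by exact_mod_cast hN
  have hb := bb_le hN hm (le_refl m)
  have key : ∀ k ∈ Finset.range m, 2 * (N * (Psi (bb N (k+1)) - Psi (bb N k))) - 2*((2*(k:ℝ)+1)/N)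
      - (2*(k:ℝ)+1) * ss N k ≤ (2*(k:ℝ)+1) * (hh (ss N k) + hh (-ss N k)) := by
    intro k hk
    have hk := Finset.mem_range.mp hk
    have h1 := bb_le hN hm (k := k+1) hk
    have h2 := bb_le hN hm (k := k) hk.le
    have hd := bb_succ hN k
    have hlt : bb N k < bb N (k+1) := by
      by_contra hc
      have : N * (bb N (k+1) - bb N k) ≤ 0 := mul_nonpos_of_nonneg_of_nonpos hN'.le (by linarith)
      have : (0:ℝ) < 2*k+1 := by positivity
      linarith
    have f := fenchel (bb N k) (ss N k) (bb_nonneg _) (by linarith)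
    have b := band (bb N k) (bb N (k+1)) (bb_nonneg _) hlt h1
    rw [hh_neg]
    have hp : (0:ℝ) < 2*k+1 := by positivity
    have f2 := mul_le_mul_of_nonneg_left f hp.le
    have b2 := mul_le_mul_of_nonneg_left b hN'.le
    have e1 : (2*(k:ℝ)+1) * (bb N k * ss N k - Phi (bb N k))
        = N * (bb N k * Phi (bb N (k+1)) - bb N (k+1) * Phi (bb N k)) := by
      have : (2*(k:ℝ)+1) * (bb N k * ss N k - Phi (bb N k)) =
        bb N k * ((2*(k:ℝ)+1) * ss N k) - (2*(k:ℝ)+1) * Phi (bb N k) := by ring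
      rw [this, ss_mul, ← hd]; ring
    have e2 : N * ((bb N (k+1) - bb N k)^3 / (2*(bb N k + bb N (k+1)))) ≤ (2*(k:ℝ)+1)/N := by
      have d1 : bb N (k+1) - bb N k = (2*(k:ℝ)+1)/N := by rw [← hd]; field_simp
      have d2 : bb N k + bb N (k+1) = (2*(k:ℝ)^2+2*k+1)/N := by
        unfold bb; push_cast; ring
      rw [d1, d2]
      have : N * (((2*(k:ℝ)+1)/N)^3 / (2*((2*(k:ℝ)^2+2*k+1)/N))) =
        (2*(k:ℝ)+1)/N * ((2*(k:ℝ)+1)^2 / (2*(2*(k:ℝ)^2+2*k+1))) := by field_simp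
      rw [this]
      apply mul_le_of_le_one_right (by positivity)
      rw [div_le_one (by positivity)]
      nlinarith
    rw [e1] at f2
    nlinarith
  have S := Finset.sum_le_sum key
  have T : ∑ k ∈ Finset.range m, (2 * (N * (Psi (bb N (k+1)) - Psi (bb N k))) - 2*((2*(k:ℝ)+1)/N)
      - (2*(k:ℝ)+1) * ss N k) = 2 * (N * Psi (bb N m)) - 2 * ((m:ℝ)^2/N) - N * Phi (bb N m) := by
    rw [Finset.sum_sub_distrib, Finset.sum_sub_distrib, sum_ss, ← Finset.mul_sum, ← Finset.mul_sum,
      ← Finset.mul_sum, ← Finset.sum_div, sum_nn, Finset.sum_range_sub (fun k => Psi (bb N k))]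
    simp [bb, Psi_zero]
  rw [T] at S
  have f0 := fenchel (bb N m) 0 (bb_nonneg _) (by linarith)
  have f1 := mul_le_mul_of_nonneg_left f0 (Nat.cast_nonneg (α := ℝ) R)
  have c := central (bb N m) (bb_nonneg _) hb
  have c1 := mul_le_mul_of_nonneg_left c hN'.le
  have e3 : N * bb N m = (m:ℝ)^2 := by unfold bb; field_simp
  have q1 : (m:ℝ)^2/N ≤ 1/2 := by rw [div_le_iff₀ hN']; have := Nat.cast_nonneg (α := ℝ) R; linarith
  have q2 : N * ((1-2*bb N m)^3/2) ≤ 13 := by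
    have : 1 - 2 * bb N m = R/N := by
      unfold bb; field_simp; linarith
    rw [this]
    have : N * (((R:ℝ)/N)^3/2) = (R:ℝ)^2/N * (R/N) / 2 := by field_simp
    rw [this]
    have r1 : (R:ℝ)^2/N ≤ 25 := by rw [div_le_iff₀ hN']; exact_mod_cast hR
    have r2 : (R:ℝ)/N ≤ 1 := by rw [div_le_one hN']; have := sq_nonneg (m:ℝ); linarith
    have : (R:ℝ)^2/N * (R/N) ≤ 25 * 1 := by gcongr
    linarith
  have e4 : N * (2 * (1-bb N m) * Phi (bb N m)) = (N + R) * Phi (bb N m) := by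
    have : (N:ℝ) * (2 * (1-bb N m) * Phi (bb N m)) = (2 * N - 2 * (N * bb N m)) * Phi (bb N m) := by ring
    rw [this, e3, ← hNR]; ring
  nlinarith

end
end SphPack


namespace SphPack

open Real

lemma geom_bound (m : ℕ) : ∑ k ∈ Finset.range m, exp (-1/2 * (k:ℝ)) ≤ 3 := by
  have hq : exp (-1/2 : ℝ) ≤ 2/3 := by
    have h := Real.add_one_le_exp (1/2 : ℝ)
    have : exp (-1/2 : ℝ) = (exp (1/2))⁻¹ := by rw [← exp_neg]; norm_num
    rw [this, inv_le_comm₀ (exp_pos _) (by norm_num)]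
    linarith
  have e : ∀ k : ℕ, exp (-1/2 * (k:ℝ)) = (exp (-1/2)) ^ k := by
    intro k; rw [← exp_nat_mul]; ring_nf
  calc ∑ k ∈ Finset.range m, exp (-1/2 * (k:ℝ)) ≤ ∑ k ∈ Finset.range m, (2/3 : ℝ)^k := by
        refine Finset.sum_le_sum fun k _ => ?_
        rw [e]; gcongr
    _ ≤ 3 := by
        rw [geom_sum_eq (by norm_num)]
        have : (0:ℝ) ≤ (2/3:ℝ)^m := by positivity
        have e : ((2/3:ℝ)^m - 1) / (2/3 - 1) = 3 - 3 * (2/3:ℝ)^m := by ring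
        linarith

lemma two_sided (m K : ℕ) : ∑ k ∈ Finset.range m, exp (-1/2 * |(k:ℝ) - K|) ≤ 6 := by
  calc ∑ k ∈ Finset.range m, exp (-1/2 * |(k:ℝ) - K|)
      ≤ ∑ k ∈ Finset.range ((K+1) + m), exp (-1/2 * |(k:ℝ) - K|) := by
        refine Finset.sum_le_sum_of_subset_of_nonneg ?_ fun _ _ _ => (exp_pos _).le
        exact Finset.range_mono (by omega)
    _ ≤ 6 := by
        rw [Finset.sum_range_add, ← Finset.sum_range_reflect]
        have h1 : ∑ j ∈ Finset.range (K+1), exp (-1/2 * |((K + 1 - 1 - j : ℕ):ℝ) - K|) ≤ 3 := by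
          refine le_trans (le_of_eq ?_) (geom_bound (K+1))
          refine Finset.sum_congr rfl fun j hj => ?_
          have : j ≤ K := Nat.lt_succ_iff.mp (Finset.mem_range.mp hj)
          congr 2
          rw [Nat.add_sub_cancel, Nat.cast_sub this]
          have : (K:ℝ) - j - K = -j := by ring
          rw [this, abs_neg, abs_of_nonneg (Nat.cast_nonneg _)]
        have h2 : ∑ j ∈ Finset.range m, exp (-1/2 * |((K + 1 + j : ℕ):ℝ) - K|) ≤ 3 := by
          refine le_trans (Finset.sum_le_sum fun j _ => ?_) (geom_bound m)
          have : ((K + 1 + j : ℕ):ℝ) - K = j + 1 := by push_cast; ring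
          rw [this, abs_of_nonneg (by positivity)]
          apply exp_le_exp.mpr; linarith
        linarith

lemma log_gap (x y : ℝ) (hx : 0 < x) (hy : 0 < y) : 1 - x / y ≤ log y - log x := by
  have := Real.log_le_sub_one_of_pos (div_pos hx hy)
  rw [log_div hx.ne' hy.ne'] at this
  linarith

lemma interf {N m : ℕ} (hN : 0 < N) (h : 2*m^2 ≤ N) (t : ℝ) :
    ∑ k ∈ Finset.range m, exp (-((2*(k:ℝ)+1) * |t - ss N k|)) ≤ 9 * exp 1 := by
  classical
  have hex : ∃ K, m ≤ K ∨ t ≤ ss N K := ⟨m, Or.inl le_rfl⟩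
  obtain ⟨K, hK, hKmin⟩ : ∃ K, (m ≤ K ∨ t ≤ ss N K) ∧ ∀ k < K, ¬ (m ≤ k ∨ t ≤ ss N k) :=
    ⟨Nat.find hex, Nat.find_spec hex, fun k hk => Nat.find_min hex hk⟩
  have key : ∀ k ∈ Finset.range m, exp (-((2*(k:ℝ)+1) * |t - ss N k|)) ≤
      exp 1 * exp (-1/2 * (k:ℝ)) + exp 1 * exp (-1/2 * |(k:ℝ) - K|) := by
    intro k hk
    have hk := Finset.mem_range.mp hk
    rw [← exp_add, ← exp_add]
    have P1 := exp_pos (1 + -1/2 * (k:ℝ))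
    have P2 := exp_pos (1 + -1/2 * |(k:ℝ) - K|)
    have hk0 : (0:ℝ) ≤ k := Nat.cast_nonneg _
    have near : |(k:ℝ) - K| ≤ 1 → exp (-((2*(k:ℝ)+1) * |t - ss N k|)) ≤
      exp (1 + -1/2 * (k:ℝ)) + exp (1 + -1/2 * |(k:ℝ) - K|) := by
      intro hh
      have : exp (-((2*(k:ℝ)+1) * |t - ss N k|)) ≤ exp (1 + -1/2 * |(k:ℝ) - K|) := by
        apply exp_le_exp.mpr
        have : 0 ≤ (2*(k:ℝ)+1) * |t - ss N k| := by positivity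
        linarith
      linarith
    rcases lt_trichotomy k K with hlt | rfl | hgt
    · rcases (show k + 1 = K ∨ k + 2 ≤ K by omega) with h1 | h1
      · apply near; rw [← h1]; push_cast; simp
      · -- k + 2 ≤ K
        have hL := hKmin (K-1) (by omega)
        push Not at hL
        obtain ⟨L, rfl⟩ : ∃ L, K = L + 1 := ⟨K-1, by omega⟩
        simp only [Nat.add_sub_cancel] at hL
        have g := ss_gap hN h (show k < L by omega) hL.1
        have hLpos : (0:ℝ) < L := by exact_mod_cast (show 0 < L by omega)
        have hkL : (k:ℝ) + 1 ≤ L := by exact_mod_cast (show k + 1 ≤ L by omega)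
        have g2 := log_gap (k+1) L (by positivity) hLpos
        have g3 : 1 - ((k:ℝ)+1)/L ≤ |t - ss N k| := by
          refine le_trans ?_ (le_abs_self _); linarith [hL.2]
        have g4 : 0 ≤ 1 - ((k:ℝ)+1)/L := by rw [sub_nonneg, div_le_one hLpos]; exact hkL
        have g5 : ((k:ℝ)+1) * (1 - ((k:ℝ)+1)/L) ≤ (2*(k:ℝ)+1) * |t - ss N k| := by
          gcongr; linarith
        have habs : |(k:ℝ) - (L+1:ℕ)| = L + 1 - k := by
          push_cast; rw [abs_of_nonpos (by linarith)]; ring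
        rw [habs] at P2 ⊢
        rcases le_total (2*((k:ℝ)+1)) L with hc | hc
        · have : exp (-((2*(k:ℝ)+1) * |t - ss N k|)) ≤ exp (1 + -1/2 * (k:ℝ)) := by
            apply exp_le_exp.mpr
            have : 1/2 ≤ 1 - ((k:ℝ)+1)/L := by
              have : ((k:ℝ)+1)/L ≤ 1/2 := by rw [div_le_iff₀ hLpos]; linarith
              linarith
            nlinarith
          linarith
        · have : exp (-((2*(k:ℝ)+1) * |t - ss N k|)) ≤ exp (1 + -1/2 * ((L:ℝ)+1-k)) := by
            apply exp_le_exp.mpr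
            have e : ((k:ℝ)+1) * (1 - ((k:ℝ)+1)/L) = ((k:ℝ)+1)/L * (L - (k+1)) := by
              field_simp
            have : 1/2 ≤ ((k:ℝ)+1)/L := by rw [le_div_iff₀ hLpos]; linarith
            nlinarith
          linarith
    · apply near; simp
    · have hts : t ≤ ss N K := by
        rcases hK with hK | hK
        · omega
        · exact hK
      have g := ss_gap hN h hgt hk
      have hkpos : (0:ℝ) < k := by exact_mod_cast (show 0 < k by omega)
      have hkK : (K:ℝ) + 1 ≤ k := by exact_mod_cast hgt
      have g2 := log_gap (K+1) k (by positivity) hkpos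
      have g3 : 1 - ((K:ℝ)+1)/k ≤ |t - ss N k| := by
        rw [abs_sub_comm]
        refine le_trans ?_ (le_abs_self _); linarith
      have g4 : 0 ≤ 1 - ((K:ℝ)+1)/k := by rw [sub_nonneg, div_le_one hkpos]; exact hkK
      have g5 : (k:ℝ) * (1 - ((K:ℝ)+1)/k) ≤ (2*(k:ℝ)+1) * |t - ss N k| := by
        gcongr; linarith
      have e : (k:ℝ) * (1 - ((K:ℝ)+1)/k) = k - (K+1) := by field_simp
      have : exp (-((2*(k:ℝ)+1) * |t - ss N k|)) ≤ exp (1 + -1/2 * |(k:ℝ) - K|) := by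
        apply exp_le_exp.mpr
        rw [abs_of_nonneg (a := (k:ℝ) - K) (by linarith)]
        linarith
      linarith
  refine (Finset.sum_le_sum key).trans ?_
  rw [Finset.sum_add_distrib, ← Finset.mul_sum, ← Finset.mul_sum]
  have a := geom_bound m
  have b := two_sided m K
  have := exp_pos 1
  nlinarith

/-- the ring -/
noncomputable def ringPts (n : ℕ) (s : ℝ) : Multiset ℂ :=
  Polynomial.nthRoots n ((exp (n * s) : ℝ) : ℂ)

lemma card_ring (n : ℕ) (s : ℝ) : Multiset.card (ringPts n s) = n := by
  rcases Nat.eq_zero_or_pos n with rfl | hn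
  · simp [ringPts]
  · unfold ringPts Polynomial.nthRoots
    rw [← (IsAlgClosed.splits _).natDegree_eq_card_roots]
    exact Polynomial.natDegree_X_pow_sub_C

lemma norm_ring (n : ℕ) (s : ℝ) (w : ℂ) (hw : w ∈ ringPts n s) : ‖w‖ = exp s := by
  rcases Nat.eq_zero_or_pos n with rfl | hn
  · simp [ringPts] at hw
  · unfold ringPts at hw
    rw [Polynomial.mem_nthRoots hn] at hw
    have : ‖w‖^n = (exp s)^n := by
      rw [← norm_pow, hw, Complex.norm_real, norm_of_nonneg (exp_pos _).le, exp_nat_mul]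
    exact (pow_left_inj₀ (norm_nonneg _) (exp_pos _).le hn.ne').mp this

lemma prod_ring (n : ℕ) (hn : 0 < n) (s : ℝ) (z : ℂ) :
    ((ringPts n s).map (fun w => z - w)).prod = z^n - ((exp (n*s) : ℝ) : ℂ) := by
  have hs := (IsAlgClosed.splits (Polynomial.X^n - Polynomial.C (((exp (n*s) : ℝ) : ℂ))))
  have := hs.eq_prod_roots_of_monic (Polynomial.monic_X_pow_sub_C _ hn.ne')
  have h2 := congrArg (Polynomial.eval z) this
  rw [Polynomial.eval_multiset_prod] at h2
  rw [Multiset.map_map] at h2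
  simp only [Function.comp_def, Polynomial.eval_sub, Polynomial.eval_pow, Polynomial.eval_X,
    Polynomial.eval_C] at h2
  rw [h2]
  rfl

lemma ring_bound (n : ℕ) (s : ℝ) (z : ℂ) (hz : z ≠ 0) (hzr : z ∉ ringPts n s) :
    ((ringPts n s).map (fun w => Usph z w)).sum ≤ n/2 + n * max (log ‖z‖) s
      + exp (-(n * |log ‖z‖ - s|)) - n * hh (log ‖z‖) - n * hh s := by
  rcases Nat.eq_zero_or_pos n with rfl | hn
  · simp [ringPts]
  have hzn : 0 < ‖z‖ := norm_pos_iff.mpr hz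
  set t := log ‖z‖ with ht
  have hzt : ‖z‖ = exp t := (exp_log hzn).symm
  have hU : ∀ w ∈ ringPts n s, Usph z w = log ‖z - w‖ + (1/2 - hh t - hh s) := by
    intro w hw
    have h1 : 0 < ‖z - w‖ := by
      rw [norm_pos_iff, sub_ne_zero]; rintro rfl; exact hzr hw
    unfold Usph hh
    rw [norm_ring n s w hw, hzt, log_div (by positivity) (by positivity),
      log_mul (by positivity) (by positivity), log_pow, ← exp_nat_mul, ← exp_nat_mul]
    push_cast
    ring
  rw [Multiset.map_congr rfl hU, Multiset.sum_map_add]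
  have h2 : ((ringPts n s).map (fun w => log ‖z - w‖)).sum = log ‖z^n - ((exp (n*s) : ℝ) : ℂ)‖ := by
    rw [← prod_ring n hn]
    have : ∀ M : Multiset ℂ, z ∉ M → (M.map (fun w => log ‖z - w‖)).sum =
        log ‖(M.map (fun w => z - w)).prod‖ := by
      intro M
      induction M using Multiset.induction with
      | empty => simp
      | cons a M ih =>
        intro hM
        simp only [Multiset.mem_cons, not_or] at hM
        rw [Multiset.map_cons, Multiset.sum_cons, Multiset.map_cons, Multiset.prod_cons, norm_mul,
          log_mul, ih hM.2]
        · rw [norm_ne_zero_iff, sub_ne_zero]; exact hM.1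
        · rw [norm_ne_zero_iff]
          apply Multiset.prod_ne_zero
          intro h0
          obtain ⟨w, hw, hw0⟩ := Multiset.mem_map.mp h0
          rw [sub_eq_zero] at hw0
          subst hw0; exact hM.2 hw
    exact this _ hzr
  have hne : 0 < ‖z^n - ((exp (n*s) : ℝ) : ℂ)‖ := by
    rw [norm_pos_iff, sub_ne_zero]
    intro h0
    exact hzr ((Polynomial.mem_nthRoots hn).mpr h0)
  rw [h2, Multiset.map_const', Multiset.sum_replicate, card_ring, nsmul_eq_mul]
  have h3 : ‖z^n - ((exp (n*s) : ℝ) : ℂ)‖ ≤ exp (n * max t s) * (1 + exp (-(n * |t - s|))) := by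
    refine (norm_sub_le _ _).trans (le_of_eq ?_)
    rw [norm_pow, hzt, ← exp_nat_mul, Complex.norm_real, norm_of_nonneg (exp_pos _).le, mul_add,
      mul_one, ← exp_add]
    rcases le_total t s with h | h
    · rw [max_eq_right h, abs_of_nonpos (by linarith), add_comm]; ring_nf
    · rw [max_eq_left h, abs_of_nonneg (by linarith)]; ring_nf
  have h4 := Real.log_le_log hne h3
  rw [log_mul (by positivity) (by positivity), log_exp] at h4
  have h5 := Real.log_le_sub_one_of_pos (show 0 < 1 + exp (-(n * |t - s|)) by positivity)
  linarith

/-- the full configuration -/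
noncomputable def conf (N m R : ℕ) : Multiset ℂ :=
  ∑ k ∈ Finset.range m, (ringPts (2*k+1) (ss N k) + ringPts (2*k+1) (-ss N k)) + ringPts R 0

lemma card_conf {N m R : ℕ} (h : 2*m^2+R = N) : Multiset.card (conf N m R) = N := by
  unfold conf
  rw [Multiset.card_add, Multiset.card_sum]
  simp only [Multiset.card_add, card_ring]
  rw [← h]
  congr 1
  clear h
  induction m with
  | zero => simp
  | succ j ih => rw [Finset.sum_range_succ, ih]; ring

lemma conf_bound {N m R : ℕ} (hN : 0 < N) (h : 2*m^2+R = N) (hR : R^2 ≤ 25 * N)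
    (z : ℂ) (hz : z ≠ 0) (hzc : z ∉ conf N m R) :
    ((conf N m R).map (fun w => Usph z w)).sum ≤ 15 + 18 * exp 1 := by
  have hm : 2*m^2 ≤ N := by omega
  have hNR : 2*(m:ℝ)^2 + R = N := by exact_mod_cast h
  unfold conf at hzc ⊢
  rw [Multiset.mem_add, not_or, Multiset.mem_sum] at hzc
  obtain ⟨hz1, hz2⟩ := hzc
  push Not at hz1
  have hr := ring_bound R 0 z hz hz2
  have hk : ∀ k ∈ Finset.range m,
      ((ringPts (2*k+1) (ss N k) + ringPts (2*k+1) (-ss N k)).map (fun w => Usph z w)).sum ≤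
      (2*(k:ℝ)+1) * (1 - 2 * hh (log ‖z‖))
      + (2*(k:ℝ)+1) * (max (log ‖z‖) (ss N k) + max (log ‖z‖) (-ss N k))
      + exp (-((2*(k:ℝ)+1) * |log ‖z‖ - ss N k|)) + exp (-((2*(k:ℝ)+1) * |-log ‖z‖ - ss N k|))
      - (2*(k:ℝ)+1) * (hh (ss N k) + hh (-ss N k)) := by
    intro k hk
    have := hz1 k hk
    rw [Multiset.mem_add, not_or] at this
    have a := ring_bound _ _ z hz this.1
    have b := ring_bound _ _ z hz this.2
    have e : |log ‖z‖ - -ss N k| = |-log ‖z‖ - ss N k| := by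
      rw [← abs_neg]; ring_nf
    rw [e] at b
    rw [Multiset.map_add, Multiset.sum_add]
    push_cast at a b
    linarith
  have S := Finset.sum_le_sum hk
  rw [Finset.sum_sub_distrib, Finset.sum_add_distrib, Finset.sum_add_distrib,
    Finset.sum_add_distrib, ← Finset.sum_mul, sum_nn] at S
  have e1 : ((∑ k ∈ Finset.range m, (ringPts (2*k+1) (ss N k) + ringPts (2*k+1) (-ss N k))
      + ringPts R 0).map (fun w => Usph z w)).sum =
      ∑ k ∈ Finset.range m,
        ((ringPts (2*k+1) (ss N k) + ringPts (2*k+1) (-ss N k)).map (fun w => Usph z w)).sum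
      + ((ringPts R 0).map (fun w => Usph z w)).sum := by
    rw [Multiset.map_add, Multiset.sum_add]
    congr 1
    have := map_sum (Multiset.sumAddMonoidHom.comp (Multiset.mapAddMonoidHom (fun w => Usph z w)))
      (fun k => ringPts (2*k+1) (ss N k) + ringPts (2*k+1) (-ss N k)) (Finset.range m)
    exact this
  rw [e1]
  have A := partA hN h (log ‖z‖)
  have B1 := interf hN hm (log ‖z‖)
  have B2 := interf hN hm (-log ‖z‖)
  have C := partC hN h hR
  have D : exp (-(R * |log ‖z‖ - 0|)) ≤ 1 := by
    rw [exp_le_one_iff]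
    have : 0 ≤ R * |log ‖z‖ - 0| := by positivity
    linarith
  have E : (m:ℝ)^2 * (1 - 2 * hh (log ‖z‖)) + (R/2 - R * hh (log ‖z‖)) = N/2 - N * hh (log ‖z‖) := by
    rw [← hNR]; ring
  linarith

lemma exists_decomp (N : ℕ) (hN : 0 < N) : ∃ m R : ℕ, 2*m^2+R = N ∧ R^2 ≤ 25 * N := by
  have h1 := Nat.sqrt_le' (N/2)
  have h2 := Nat.lt_succ_sqrt' (N/2)
  set m := Nat.sqrt (N/2)
  have h3 : 2*m^2 ≤ N := by omega
  refine ⟨m, N - 2*m^2, by omega, ?_⟩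
  obtain ⟨R, hR⟩ := Nat.exists_eq_add_of_le h3
  have h4 : N < 2 * (m+1)^2 := by
    have : N/2 + 1 ≤ (m+1)^2 := h2
    omega
  have h5 : N - 2*m^2 = R := by omega
  rw [h5]
  have h6 : R ≤ 4*m+1 := by nlinarith
  rcases Nat.eq_zero_or_pos m with h0 | h0
  · rw [h0] at h6; nlinarith
  · nlinarith

lemma exists_conf (N : ℕ) (hN : 0 < N) : ∃ w : Fin N → ℂ, ∀ z : ℂ, z ≠ 0 → (∀ j, z ≠ w j) →
    ∑ j, Usph z (w j) ≤ 15 + 18 * exp 1 := by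
  obtain ⟨m, R, h, hR⟩ := exists_decomp N hN
  have hc : (conf N m R).toList.length = N := by rw [Multiset.length_toList, card_conf h]
  refine ⟨fun j => (conf N m R).toList.get (j.cast hc.symm), fun z hz hzw => ?_⟩
  have hzc : z ∉ conf N m R := by
    intro hm
    rw [← Multiset.mem_toList] at hm
    obtain ⟨i, hi⟩ := List.get_of_mem hm
    exact hzw (i.cast hc) (by simp [← hi])
  refine le_trans (le_of_eq ?_) (conf_bound hN h hR z hz hzc)
  conv_rhs => rw [← Multiset.coe_toList (conf N m R), Multiset.map_coe, Multiset.sum_coe]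
  rw [← Fin.sum_univ_fun_getElem]
  refine Fintype.sum_equiv (finCongr hc.symm) _ _ fun j => ?_
  simp

end SphPack


namespace SphPack

open Real Set Filter Topology

noncomputable def rho (r : ℝ) : ℝ := 2 * r / (1 + r^2)^2

lemma rho_deriv (r : ℝ) : HasDerivAt (fun r : ℝ => -(1 + r^2)⁻¹) (rho r) r := by
  have h1 : HasDerivAt (fun r : ℝ => 1 + r^2) (2*r) r := by
    simpa using (hasDerivAt_pow 2 r).const_add 1
  have h2 := (h1.inv (by positivity)).neg
  exact h2.congr_deriv (by unfold rho; ring)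

lemma tendsto_q : Tendsto (fun r : ℝ => (1 + r^2)) atTop atTop :=
  tendsto_atTop_add_const_left _ _ (tendsto_pow_atTop (by norm_num))

lemma rho_nonneg {r : ℝ} (hr : 0 ≤ r) : 0 ≤ rho r := by unfold rho; positivity

lemma rho_tendsto : Tendsto (fun r : ℝ => -(1 + r^2)⁻¹) atTop (𝓝 0) := by
  simpa using (tendsto_inv_atTop_zero.comp tendsto_q).neg

lemma rho_int (a : ℝ) (ha : 0 ≤ a) : IntegrableOn rho (Ioi a) :=
  integrableOn_Ioi_deriv_of_nonneg' (fun x _ => rho_deriv x)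
    (fun x hx => rho_nonneg (ha.trans (le_of_lt hx))) rho_tendsto

lemma rho_integral (a : ℝ) (ha : 0 ≤ a) : ∫ r in Ioi a, rho r = (1 + a^2)⁻¹ := by
  rw [integral_Ioi_of_hasDerivAt_of_nonneg' (fun x _ => rho_deriv x)
    (fun x hx => rho_nonneg (ha.trans (le_of_lt hx))) rho_tendsto]
  ring

lemma q_deriv (r : ℝ) : HasDerivAt (fun r : ℝ => 1 + r^2) (2*r) r := by
  simpa using (hasDerivAt_pow 2 r).const_add 1

lemma logq_deriv (r : ℝ) : HasDerivAt (fun r : ℝ => log (1 + r^2)) (2*r/(1+r^2)) r :=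
  (q_deriv r).log (by positivity)

/-- antiderivative outside -/
noncomputable def EE (a r : ℝ) : ℝ :=
  r^2/(1+r^2) * (1/2 * log (1+a^2) + 1/2 * log (1+r^2)) - r * (r * log r) / (1+r^2)
    - 1/2 * (1+r^2)⁻¹

lemma EE_deriv (a r : ℝ) (hr : 0 < r) : HasDerivAt (EE a)
    ((1/2 * log (1+a^2) + 1/2 * log (1+r^2) - log r) * rho r) r := by
  have h1 : HasDerivAt (fun r : ℝ => r^2) (2*r) r := by simpa using (hasDerivAt_pow 2 r)
  have hl := Real.hasDerivAt_log hr.ne'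
  have hx := (hasDerivAt_id r).mul ((hasDerivAt_id r).mul hl)
  have h2 := (((h1.div (q_deriv r) (by positivity)).mul
    (((logq_deriv r).const_mul (1/2)).const_add (1/2 * log (1+a^2)))).sub
    (hx.div (q_deriv r) (by positivity))).sub (((q_deriv r).inv (by positivity)).const_mul (1/2))
  refine (h2.congr_deriv ?_).congr_of_eventuallyEq ?_
  · unfold rho; simp
    have : 0 < 1 + r^2 := by positivity
    field_simp
    ring
  · exact Eventually.of_forall fun x => by simp [EE]

lemma EE_cont (a : ℝ) : Continuous (EE a) := by
  unfold EE
  have h : ∀ x : ℝ, 1 + x^2 ≠ 0 := fun x => by positivity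
  have := Real.continuous_mul_log
  have h3 : Continuous fun x : ℝ => log (1+x^2) := Continuous.log (by fun_prop) h
  have h4 : Continuous fun x : ℝ => (1+x^2)⁻¹ := Continuous.inv₀ (by fun_prop) h
  refine ((Continuous.div (by fun_prop) (by fun_prop) h).mul (by fun_prop)).sub
    (Continuous.div (by fun_prop) (by fun_prop) h) |>.sub (by fun_prop)

lemma EE_tendsto (a : ℝ) : Tendsto (EE a) atTop (𝓝 (1/2 * log (1+a^2))) := by
  have i := rho_tendsto
  have u : Tendsto (fun r : ℝ => r^2/(1+r^2)) atTop (𝓝 1) := by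
    have := i.const_add 1
    rw [add_zero] at this
    refine this.congr fun r => ?_
    have : 0 < 1 + r^2 := by positivity
    field_simp; ring
  have l : Tendsto (fun r : ℝ => 1/2 * log (1+r^2) - log r) atTop (𝓝 0) := by
    have h1 : Tendsto (fun r : ℝ => 1/2 * log (1 + (r^2)⁻¹)) atTop (𝓝 (1/2 * log (1+0))) := by
      refine Tendsto.const_mul _ (Tendsto.log ?_ (by norm_num))
      exact (tendsto_inv_atTop_zero.comp (tendsto_pow_atTop (by norm_num))).const_add 1
    simp only [add_zero, log_one, mul_zero] at h1
    refine h1.congr' ?_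
    filter_upwards [eventually_gt_atTop 0] with r hr
    have e : 1 + (r^2)⁻¹ = (1+r^2)/r^2 := by field_simp; ring
    rw [e, log_div (by positivity) (by positivity), log_pow]
    push_cast; ring
  have := (u.mul (l.const_add (1/2 * log (1+a^2)))).add (i.const_mul (1/2))
  simp only [add_zero, mul_zero, one_mul] at this
  refine this.congr fun r => ?_
  unfold EE
  ring

noncomputable def gg (a r : ℝ) : ℝ :=
  1/2 + (log r + log⁺ (r⁻¹ * a)) - 1/2 * log (1+r^2) - 1/2 * log (1+a^2)

lemma gg_out (a r : ℝ) (ha : 0 ≤ a) (hr : a < r) :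
    gg a r * rho r = 1/2 * rho r -
      (1/2 * log (1+a^2) + 1/2 * log (1+r^2) - log r) * rho r := by
  have hr0 : 0 < r := by linarith
  have : log⁺ (r⁻¹ * a) = 0 := by
    rw [posLog_eq_zero_iff, abs_of_nonneg (by positivity), inv_mul_le_iff₀ hr0]; linarith
  unfold gg; rw [this]; ring

lemma gg_in (a r : ℝ) (hr0 : 0 < r) (hr : r ≤ a) :
    gg a r * rho r = (1/2 + log a - 1/2 * log (1+r^2) - 1/2 * log (1+a^2)) * rho r := by
  have ha : 0 < a := by linarith
  have : log⁺ (r⁻¹ * a) = log a - log r := by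
    rw [posLog_eq_log, log_mul (by positivity) (by positivity), log_inv]
    · ring
    · rw [abs_of_nonneg (by positivity), le_inv_mul_iff₀ hr0]; linarith
  unfold gg; rw [this]; ring

lemma out_nonneg (a r : ℝ) (hr : 0 < r) :
    0 ≤ 1/2 * log (1+a^2) + 1/2 * log (1+r^2) - log r := by
  have h1 : 0 ≤ log (1+a^2) := log_nonneg (by nlinarith [sq_nonneg a])
  have h2 : log (r^2) ≤ log (1+r^2) := log_le_log (by positivity) (by linarith)
  rw [log_pow] at h2
  push_cast at h2
  linarith

lemma gg_integral (a : ℝ) (ha : 0 ≤ a) :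
    IntegrableOn (fun r => gg a r * rho r) (Ioi 0) ∧ ∫ r in Ioi 0, gg a r * rho r = 0 := by
  -- outside
  have hpos : ∀ x ∈ Ioi a, 0 ≤ (1/2 * log (1+a^2) + 1/2 * log (1+x^2) - log x) * rho x := by
    intro x hx
    have : 0 < x := lt_of_le_of_lt ha hx
    exact mul_nonneg (out_nonneg a x this) (rho_nonneg this.le)
  have hd : ∀ x ∈ Ioi a, HasDerivAt (EE a)
      ((1/2 * log (1+a^2) + 1/2 * log (1+x^2) - log x) * rho x) x :=
    fun x hx => EE_deriv a x (lt_of_le_of_lt ha hx)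
  have o1 := integrableOn_Ioi_deriv_of_nonneg (EE_cont a).continuousWithinAt hd hpos (EE_tendsto a)
  have o2 := integral_Ioi_of_hasDerivAt_of_nonneg (EE_cont a).continuousWithinAt hd hpos
    (EE_tendsto a)
  have o3 : IntegrableOn (fun r => gg a r * rho r) (Ioi a) := by
    refine Integrable.congr (((rho_int a ha).const_mul (1/2)).sub o1) ?_
    filter_upwards [ae_restrict_mem measurableSet_Ioi] with r hr
    exact (gg_out a r ha hr).symm
  have o4 : ∫ r in Ioi a, gg a r * rho r = 1/2 * (1+a^2)⁻¹ - (1/2 * log (1+a^2) - EE a a) := by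
    rw [setIntegral_congr_fun measurableSet_Ioi (fun r hr => gg_out a r ha hr),
      integral_sub ((rho_int a ha).const_mul (1/2)) o1, o2, integral_const_mul, rho_integral a ha]
  -- inside
  have hne : ∀ x : ℝ, 1 + x^2 ≠ 0 := fun x => by positivity
  have c1 : Continuous fun x : ℝ => log (1+x^2) := Continuous.log (by fun_prop) hne
  have c2 : Continuous rho := by
    unfold rho
    exact Continuous.div (by fun_prop) (by fun_prop) (fun x => by positivity)
  have c3 : Continuous fun r => (1/2 + log a - 1/2 * log (1+r^2) - 1/2 * log (1+a^2)) * rho r := by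
    fun_prop
  have hB : ∀ r, HasDerivAt (fun r : ℝ => (1/2 + log a - 1/2 * log (1+a^2)) * (-(1+r^2)⁻¹)
      + 1/2 * ((log (1+r^2) + 1) * (1+r^2)⁻¹))
      ((1/2 + log a - 1/2 * log (1+r^2) - 1/2 * log (1+a^2)) * rho r) r := by
    intro r
    have := ((rho_deriv r).const_mul (1/2 + log a - 1/2 * log (1+a^2))).add
      ((((logq_deriv r).add_const 1).mul ((q_deriv r).inv (hne r))).const_mul (1/2))
    refine this.congr_deriv ?_
    unfold rho
    have : 0 < 1 + r^2 := by positivity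
    simp only [Pi.inv_apply]
    field_simp
    ring
  have i1 := intervalIntegral.integral_eq_sub_of_hasDerivAt (a := 0) (b := a)
    (fun r _ => hB r) (c3.intervalIntegrable _ _)
  have i3 : IntegrableOn (fun r => gg a r * rho r) (Ioc 0 a) := by
    refine ((c3.integrableOn_Icc (a := 0) (b := a)).mono_set Ioc_subset_Icc_self).congr_fun_ae ?_
    filter_upwards [ae_restrict_mem measurableSet_Ioc] with r hr
    exact (gg_in a r hr.1 hr.2).symm
  have i4 := (setIntegral_congr_fun (μ := volume) measurableSet_Ioc
    (fun r (hr : r ∈ Ioc 0 a) => gg_in a r hr.1 hr.2)).trans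
    ((intervalIntegral.integral_of_le ha).symm.trans i1)
  have hU : Ioc 0 a ∪ Ioi a = Ioi 0 := Ioc_union_Ioi_eq_Ioi ha
  refine ⟨hU ▸ i3.union o3, ?_⟩
  rw [← hU, setIntegral_union Ioc_disjoint_Ioi_same measurableSet_Ioi i3 o3, i4, o4]
  unfold EE
  have : 0 < 1 + a^2 := by positivity
  simp
  field_simp
  ring

/-- polar -/
lemma polar (F : ℂ → ℝ) (hF : Measurable F) (C : ℝ) (hC : ∀ z, |F z| ≤ C) :
    IntegrableOn (fun r => circleAverage F 0 r * rho r) (Ioi 0) ∧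
    ∫ z : ℂ, F z * (1 / (1 + ‖z‖^2)^2) = π * ∫ r in Ioi 0, circleAverage F 0 r * rho r := by
  have hcm : ∀ p : ℝ × ℝ, Complex.polarCoord.symm p = circleMap 0 p.1 p.2 := by
    intro p
    rw [Complex.polarCoord_symm_apply, circleMap_zero, Complex.exp_mul_I]
    push_cast; rfl
  have hmeas : Measurable fun p : ℝ × ℝ => F (circleMap 0 p.1 p.2) :=
    hF.comp (circleMap.continuous (c := 0)).measurable
  have hint : IntegrableOn (fun p : ℝ × ℝ => 1/2 * rho p.1 * F (circleMap 0 p.1 p.2))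
      (Ioi 0 ×ˢ Ioo (-π) π) (volume.prod volume) := by
    have h1 : Integrable (fun p : ℝ × ℝ => rho p.1 * C)
        ((volume.restrict (Ioi 0)).prod (volume.restrict (Ioo (-π) π))) :=
      Integrable.mul_prod (rho_int 0 le_rfl) (integrable_const C)
    rw [IntegrableOn, ← Measure.prod_restrict]
    refine h1.mono' ?_ ?_
    · apply Measurable.aestronglyMeasurable
      unfold rho
      fun_prop
    · rw [Measure.prod_restrict]
      filter_upwards [ae_restrict_mem (measurableSet_Ioi.prod measurableSet_Ioo)] with p hp
      have := rho_nonneg (le_of_lt hp.1)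
      rw [norm_mul, Real.norm_eq_abs, Real.norm_eq_abs, abs_of_nonneg (by positivity)]
      have := hC (circleMap 0 p.1 p.2)
      have h0 := abs_nonneg (F (circleMap 0 p.1 p.2))
      nlinarith
  have hinner : ∀ r : ℝ, ∫ θ in Ioo (-π) π, 1/2 * rho r * F (circleMap 0 r θ)
      = π * (circleAverage F 0 r * rho r) := by
    intro r
    rw [integral_const_mul, ← integral_Ioc_eq_integral_Ioo,
      ← intervalIntegral.integral_of_le (by linarith [pi_pos])]
    have per : Function.Periodic (fun θ => F (circleMap 0 r θ)) (2*π) :=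
      fun θ => by simp [periodic_circleMap 0 r θ]
    have := per.intervalIntegral_add_eq (-π) 0
    have e : -π + 2*π = π := by ring
    rw [e, zero_add] at this
    rw [this, circleAverage_def, smul_eq_mul]
    field_simp
  have hI : IntegrableOn (fun r => π * (circleAverage F 0 r * rho r)) (Ioi 0) := by
    rw [IntegrableOn, ← Measure.prod_restrict] at hint
    refine (hint.integral_prod_left).congr ?_
    exact Eventually.of_forall fun r => hinner r
  refine ⟨?_, ?_⟩
  · have := hI.const_mul π⁻¹
    refine this.congr (Eventually.of_forall fun r => ?_)
    have := pi_pos.ne'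
    simp only
    field_simp
  · rw [← Complex.integral_comp_polarCoord_symm, polarCoord_target, ← integral_const_mul]
    have : ∀ p ∈ Ioi (0:ℝ) ×ˢ Ioo (-π) π, p.1 • (F (Complex.polarCoord.symm p) *
        (1 / (1 + ‖Complex.polarCoord.symm p‖^2)^2)) = 1/2 * rho p.1 * F (circleMap 0 p.1 p.2) := by
      intro p hp
      rw [Complex.norm_polarCoord_symm, hcm, sq_abs, smul_eq_mul]
      unfold rho
      field_simp
    rw [setIntegral_congr_fun (measurableSet_Ioi.prod measurableSet_Ioo) this]
    rw [Measure.volume_eq_prod, setIntegral_prod _ hint]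
    exact setIntegral_congr_fun measurableSet_Ioi fun r _ => hinner r

lemma wt_integral : ∫ z : ℂ, (1 / (1 + ‖z‖^2)^2 : ℝ) = π := by
  have := (polar (fun _ => 1) measurable_const 1 (by simp)).2
  simp only [circleAverage_const, one_mul] at this
  rw [this, rho_integral 0 le_rfl]; simp

lemma wt_integrable : Integrable (fun z : ℂ => (1 / (1 + ‖z‖^2)^2 : ℝ)) := by
  by_contra h
  have := wt_integral
  rw [integral_undef h] at this
  exact pi_pos.ne this

lemma Usph_le (z w : ℂ) : Usph z w ≤ 1/2 := by
  have : log (‖z - w‖^2 / ((1 + ‖z‖^2) * (1 + ‖w‖^2))) ≤ 0 := by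
    apply log_nonpos (by positivity)
    rw [div_le_one (by positivity)]
    have h1 := norm_sub_le z w
    have h2 : ‖z - w‖^2 ≤ (‖z‖ + ‖w‖)^2 := by gcongr
    nlinarith [sq_nonneg (1 - ‖z‖ * ‖w‖)]
  unfold Usph; linarith

noncomputable def VV (z w : ℂ) : ℝ :=
  log ‖z - w‖ + (1/2 - 1/2 * log (1 + ‖z‖^2) - 1/2 * log (1 + ‖w‖^2))

lemma VV_le (z w : ℂ) : VV z w ≤ Usph z w := by
  unfold VV Usph
  by_cases h : z = w
  · subst h
    have : 0 ≤ log (1 + ‖z‖^2) := log_nonneg (by nlinarith [sq_nonneg ‖z‖])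
    simp
    linarith
  · have h1 : 0 < ‖z - w‖ := by rwa [norm_pos_iff, sub_ne_zero]
    rw [log_div (by positivity) (by positivity), log_mul (by positivity) (by positivity), log_pow]
    push_cast
    linarith

lemma Usph_meas (w : ℂ) : Measurable fun z => Usph z w := by
  unfold Usph; fun_prop

lemma lower (N : ℕ) (β : ℝ) (hβ : 0 < β) (w : Fin N → ℂ) :
    π ≤ ∫ z : ℂ, exp (∑ j, β * Usph z (w j)) * (1 / (1 + ‖z‖ ^ 2) ^ 2) := by
  have hm : Measurable fun z => exp (∑ j, β * Usph z (w j)) := by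
    have := fun j => Usph_meas (w j)
    fun_prop
  have hb : ∀ z, |exp (∑ j, β * Usph z (w j))| ≤ exp (∑ _j : Fin N, β * (1/2)) := by
    intro z
    rw [abs_of_pos (exp_pos _), exp_le_exp]
    refine Finset.sum_le_sum fun j _ => ?_
    have := Usph_le z (w j)
    gcongr
  obtain ⟨p1, p2⟩ := polar _ hm _ hb
  rw [p2]
  have hci : ∀ r, CircleIntegrable (fun z => exp (∑ j, β * Usph z (w j))) 0 r := by
    intro r
    refine (intervalIntegrable_const (c := exp (∑ _j : Fin N, β * (1/2)))).mono_fun' ?_ ?_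
    · exact (hm.comp (measurable_circleMap 0 r)).aestronglyMeasurable
    · exact Eventually.of_forall fun θ => by simpa using hb (circleMap 0 r θ)
  have key : ∀ r ∈ Ioi (0:ℝ), (1 + ∑ j, β * gg ‖w j‖ r) * rho r ≤
      circleAverage (fun z => exp (∑ j, β * Usph z (w j))) 0 r * rho r := by
    intro r hr
    have hr : 0 < r := hr
    refine mul_le_mul_of_nonneg_right ?_ (rho_nonneg hr.le)
    let k : Fin N → ℝ := fun j => 1/2 - 1/2 * log (1 + r^2) - 1/2 * log (1 + ‖w j‖^2)
    have ci1 : ∀ j, CircleIntegrable (fun z => log ‖z - w j‖) 0 r :=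
      fun j => circleIntegrable_log_norm_sub_const r
    have ci2 : ∀ j, CircleIntegrable (fun z => log ‖z - w j‖ + k j) 0 r :=
      fun j => (ci1 j).add (circleIntegrable_const _ _ _)
    have ci3 : ∀ j, CircleIntegrable (fun z => β • (log ‖z - w j‖ + k j)) 0 r :=
      fun j => (ci2 j).const_smul
    have ci4 : CircleIntegrable (fun z => ∑ j, β • (log ‖z - w j‖ + k j)) 0 r := by
      have := CircleIntegrable.sum Finset.univ (fun j _ => ci3 j)
      convert this using 1
      ext z; simp
    have ci5 : CircleIntegrable (fun z => 1 + ∑ j, β • (log ‖z - w j‖ + k j)) 0 r :=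
      (circleIntegrable_const _ _ _).add ci4
    have e : circleAverage (fun z => 1 + ∑ j, β • (log ‖z - w j‖ + k j)) 0 r
        = 1 + ∑ j, β * gg ‖w j‖ r := by
      rw [circleAverage_fun_add (circleIntegrable_const _ _ _) ci4, circleAverage_const,
        circleAverage_fun_sum (fun j _ => ci3 j)]
      congr 1
      refine Finset.sum_congr rfl fun j _ => ?_
      rw [circleAverage_fun_smul, circleAverage_fun_add (ci1 j) (circleIntegrable_const _ _ _),
        circleAverage_const, circleAverage_log_norm_sub_const_eq_log_radius_add_posLog hr.ne',
        zero_sub, norm_neg, smul_eq_mul]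
      simp only [k, gg]
      ring
    rw [← e]
    refine circleAverage_mono ci5 (hci r) fun z hz => ?_
    have hzr : ‖z‖ = r := by simpa [abs_of_pos hr] using hz
    have h1 : ∑ j, β • (log ‖z - w j‖ + k j) ≤ ∑ j, β * Usph z (w j) := by
      refine Finset.sum_le_sum fun j _ => ?_
      rw [smul_eq_mul]
      have := VV_le z (w j)
      unfold VV at this
      rw [hzr] at this
      exact mul_le_mul_of_nonneg_left this hβ.le
    have h2 := add_one_le_exp (∑ j, β * Usph z (w j))
    linarith
  have e2 : (fun r => (1 + ∑ j, β * gg ‖w j‖ r) * rho r) =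
      fun r => rho r + ∑ j, β * (gg ‖w j‖ r * rho r) := by
    ext r
    rw [add_mul, one_mul, Finset.sum_mul]
    congr 1
    exact Finset.sum_congr rfl fun j _ => by ring
  have hg := fun j => gg_integral ‖w j‖ (norm_nonneg _)
  have is : ∀ j ∈ (Finset.univ : Finset (Fin N)), Integrable (fun r => β * (gg ‖w j‖ r * rho r))
      (volume.restrict (Ioi 0)) := fun j _ => (hg j).1.const_mul β
  have i1 : IntegrableOn (fun r => (1 + ∑ j, β * gg ‖w j‖ r) * rho r) (Ioi 0) := by
    rw [e2]
    exact (rho_int 0 le_rfl).add (integrable_finsetSum _ is)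
  have i2 : ∫ r in Ioi 0, (1 + ∑ j, β * gg ‖w j‖ r) * rho r = 1 := by
    rw [e2, integral_add (rho_int 0 le_rfl) (integrable_finsetSum _ is), integral_finsetSum _ is,
      rho_integral 0 le_rfl]
    simp [integral_const_mul, (hg _).2]
  have := setIntegral_mono_on i1 p1 measurableSet_Ioi key
  rw [i2] at this
  have := pi_pos
  nlinarith

lemma theta_bdd (N : ℕ) (β : ℝ) : BddBelow (range fun w : Fin N → ℂ =>
    1 / Real.pi *
      ∫ z : ℂ, Real.exp (∑ j, β * Usph z (w j)) * (1 / (1 + ‖z‖ ^ 2) ^ 2)) := by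
  refine ⟨0, ?_⟩
  rintro _ ⟨w, rfl⟩
  have := pi_pos
  have : 0 ≤ ∫ z : ℂ, Real.exp (∑ j, β * Usph z (w j)) * (1 / (1 + ‖z‖ ^ 2) ^ 2) :=
    integral_nonneg fun z => by positivity
  positivity

lemma upper (N : ℕ) (hN : 1 ≤ N) (β : ℝ) (hβ : 0 < β) :
    ThetaSph N β ≤ (exp (15 + 18 * exp 1)) ^ β := by
  obtain ⟨w, hw⟩ := exists_conf N hN
  refine (ciInf_le (theta_bdd N β) w).trans ?_
  have h : ∫ z : ℂ, Real.exp (∑ j, β * Usph z (w j)) * (1 / (1 + ‖z‖ ^ 2) ^ 2) ≤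
      ∫ z : ℂ, (exp (15 + 18 * exp 1)) ^ β * (1 / (1 + ‖z‖ ^ 2) ^ 2) := by
    refine integral_mono_of_nonneg (Eventually.of_forall fun z => by positivity)
      (wt_integrable.const_mul _) ?_
    have hfin : (insert 0 (range w)).Finite := (finite_range w).insert 0
    filter_upwards [hfin.countable.ae_notMem volume] with z hz
    simp only [mem_insert_iff, mem_range, not_or, not_exists] at hz
    have := hw z hz.1 (fun j => fun h => hz.2 j h.symm)
    refine mul_le_mul_of_nonneg_right ?_ (by positivity)
    rw [← exp_mul, exp_le_exp, ← Finset.mul_sum, mul_comm]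
    gcongr
  rw [integral_const_mul, wt_integral] at h
  rw [one_div, inv_mul_le_iff₀ pi_pos, mul_comm]
  exact h

end SphPack

/-- uniform bounds on the spherical packing number. -/
theorem thetaSph_bounds :
    (∃ K : ℝ, 1 < K ∧ ∀ N : ℕ, 1 ≤ N → ∀ β : ℝ, 0 < β →
      1 ≤ ThetaSph N β ∧ ThetaSph N β ≤ K ^ β) ∧
    ∀ N : ℕ, 1 ≤ N → ThetaSph N 0 = 1 := by
  refine ⟨⟨Real.exp (15 + 18 * Real.exp 1), ?_, fun N hN β hβ => ⟨?_, SphPack.upper N hN β hβ⟩⟩, ?_⟩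
  · rw [Real.one_lt_exp_iff]
    positivity
  · refine le_ciInf fun w => ?_
    rw [one_div, le_inv_mul_iff₀ Real.pi_pos, mul_one]
    exact SphPack.lower N β hβ w
  · intro N _
    have : ∀ w : Fin N → ℂ, 1 / Real.pi *
      ∫ z : ℂ, Real.exp (∑ j, 0 * Usph z (w j)) * (1 / (1 + ‖z‖ ^ 2) ^ 2) = 1 := by
      intro w
      simp only [zero_mul, Finset.sum_const_zero, Real.exp_zero, one_mul]
      rw [SphPack.wt_integral, one_div, inv_mul_cancel₀ Real.pi_pos.ne']
    unfold ThetaSph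
    simp only [this]
    exact ciInf_const
end

section
/- Let Λ = ω₁ℤ + ω₂ℤ with ω₁ > 0 real, Im ω₂ > 0, and ω₁·Im ω₂ = π/2. Then the modified Weierstrass sigma function σ_* satisfies, for j = 1, 2 and all z ∈ ℂ, the periodicity-type identity σ_*(z) = −e^{−2ω̄_j z − |ω_j|²} σ_*(z + ω_j); consequently, the function z ↦ e^{−|z|²} |σ_*(z)| is Λ-periodic. -/
open MeasureTheory

/-- The lattice `Λ = ω₁ℤ + ω₂ℤ` as a subset of `ℂ`. -/
def latticeSet (ω₁ ω₂ : ℂ) : Set ℂ :=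
  {w : ℂ | ∃ m n : ℤ, w = (m : ℂ) * ω₁ + (n : ℂ) * ω₂}

/-- The Weierstrass sigma function of the lattice `ω₁ℤ + ω₂ℤ`. -/
noncomputable def wSigma (ω₁ ω₂ : ℂ) (z : ℂ) : ℂ :=
  z * ∏' p : {p : ℤ × ℤ // p ≠ 0},
      (1 - z / ((p.1.1 : ℂ) * ω₁ + (p.1.2 : ℂ) * ω₂)) *
        Complex.exp (z / ((p.1.1 : ℂ) * ω₁ + (p.1.2 : ℂ) * ω₂) +
          z ^ 2 / (2 * ((p.1.1 : ℂ) * ω₁ + (p.1.2 : ℂ) * ω₂) ^ 2))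

/-- The Weierstrass zeta function `ζ = σ'/σ`. -/
noncomputable def wZeta (ω₁ ω₂ : ℂ) (z : ℂ) : ℂ :=
  deriv (wSigma ω₁ ω₂) z / wSigma ω₁ ω₂ z

/-- The quasi-period `λ₁ = 2ζ(ω₁/2)`. -/
noncomputable def lambda1 (ω₁ ω₂ : ℂ) : ℂ := 2 * wZeta ω₁ ω₂ (ω₁ / 2)

/-- The constant `b = 1 − λ₁/(2ω₁)`. -/
noncomputable def bconst (ω₁ ω₂ : ℂ) : ℂ := 1 - lambda1 ω₁ ω₂ / (2 * ω₁)

/-- The modified Weierstrass sigma function `σ_*(z) = e^{b z²} σ(z)`. -/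
noncomputable def sigmaStar (ω₁ ω₂ : ℂ) (z : ℂ) : ℂ :=
  Complex.exp (bconst ω₁ ω₂ * z ^ 2) * wSigma ω₁ ω₂ z

/-- A fundamental domain of the lattice `ω₁ℤ + ω₂ℤ`. -/
def fundDomain (ω₁ ω₂ : ℂ) : Set ℂ :=
  (fun p : ℝ × ℝ => (p.1 : ℂ) * ω₁ + (p.2 : ℂ) * ω₂) ''
    (Set.Ico (0 : ℝ) 1 ×ˢ Set.Ico (0 : ℝ) 1)

/-- The normalizing constant `A_Λ`. -/
noncomputable def Aconst (ω₁ ω₂ : ℂ) : ℝ :=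
  2 / Real.pi * ∫ z in fundDomain ω₁ ω₂, (Real.log ‖sigmaStar ω₁ ω₂ z‖ - ‖z‖ ^ 2)

/-- The unipolar Green function of the torus `ℂ/Λ`. -/
noncomputable def Utorus (ω₁ ω₂ : ℂ) (z w : ℂ) : ℝ :=
  Real.log ‖sigmaStar ω₁ ω₂ (z - w)‖ - ‖z - w‖ ^ 2 - Aconst ω₁ ω₂

/-- The monic first degree pseudopolynomial on the torus with root `α`. -/
noncomputable def pseudoPoly (ω₁ ω₂ : ℂ) (α z : ℂ) : ℂ :=
  Complex.exp (2 * Complex.I * ((((starRingEnd ℂ) α) * z).im : ℂ)) *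
    (Complex.exp (-((‖z - α‖ ^ 2 : ℝ) : ℂ)) * sigmaStar ω₁ ω₂ (z - α))

namespace SigmaAux
open Filter Topology

abbrev J := {p : ℤ × ℤ // p ≠ 0}

noncomputable def lat (L : PeriodPair) (p : J) : ℂ := (p.1.1 : ℂ) * L.ω₁ + (p.1.2 : ℂ) * L.ω₂

noncomputable def fac (L : PeriodPair) (p : J) (z : ℂ) : ℂ :=
  (1 - z / lat L p) * Complex.exp (z / lat L p + z ^ 2 / (2 * lat L p ^ 2))

noncomputable def tp (L : PeriodPair) (z : ℂ) : ℂ := ∏' p : J, fac L p z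

lemma wSigma_eq (L : PeriodPair) (z : ℂ) : wSigma L.ω₁ L.ω₂ z = z * tp L z := rfl

lemma lat_eq (L : PeriodPair) (p : J) : lat L p = (L.latticeEquivProd.symm p.1 : ℂ) := by
  rw [L.latticeEquiv_symm_apply]; rfl

lemma lat_mem (L : PeriodPair) (p : J) : lat L p ∈ L.lattice := by
  rw [lat_eq]; exact Subtype.mem _

lemma lat_ne (L : PeriodPair) (p : J) : lat L p ≠ 0 := by
  rw [lat_eq]
  intro h
  have : L.latticeEquivProd.symm p.1 = 0 := Subtype.ext h
  exact p.2 (by simpa using this)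

lemma summable_lat (L : PeriodPair) : Summable fun p : J => (‖lat L p‖ ^ 3)⁻¹ := by
  have h : Summable fun l : L.lattice => ‖l‖ ^ (-3 : ℝ) :=
    ZLattice.summable_norm_rpow _ _ (by simp; norm_num)
  have h2 := (h.comp_injective (L.latticeEquivProd.symm.injective)).comp_injective
    (Subtype.val_injective (p := fun p : ℤ × ℤ => p ≠ 0))
  refine h2.congr fun p => ?_
  simp only [Function.comp]
  rw [lat_eq, Real.rpow_neg (norm_nonneg _)]
  norm_cast

lemma lat_lb (L : PeriodPair) : ∃ c > 0, ∀ p : J, c ≤ ‖lat L p‖ := by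
  obtain ⟨C, hC⟩ : ∃ C, ∀ p : J, (‖lat L p‖ ^ 3)⁻¹ ≤ C :=
    ⟨_, fun p => (summable_lat L).le_tsum p (fun _ _ => by positivity)⟩
  have hC' : 0 < max C 1 := by positivity
  refine ⟨min 1 (max C 1)⁻¹, by positivity, fun p => ?_⟩
  by_cases h1 : 1 ≤ ‖lat L p‖
  · exact (min_le_left _ _).trans h1
  push Not at h1
  have hp : 0 < ‖lat L p‖ := norm_pos_iff.2 (lat_ne L p)
  refine (min_le_right _ _).trans ?_
  rw [inv_le_comm₀ hC' hp]
  refine le_trans ?_ ((hC p).trans (le_max_left _ _))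
  gcongr
  exact pow_le_of_le_one hp.le h1.le (by norm_num)

lemma E_bound (u : ℂ) (M : ℝ) (hu : ‖u‖ ≤ M) :
    ‖(1 - u) * Complex.exp (u + u ^ 2 / 2) - 1‖ ≤ Real.exp (M + M ^ 2) * ‖u‖ ^ 3 := by
  have hd : ∀ x ∈ Metric.closedBall (0:ℂ) ‖u‖, HasDerivWithinAt
      (fun x : ℂ => (1 - x) * Complex.exp (x + x ^ 2 / 2))
      (- x ^ 2 * Complex.exp (x + x ^ 2 / 2)) (Metric.closedBall (0:ℂ) ‖u‖) x := by
    intro x _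
    have h1 : HasDerivAt (fun x : ℂ => x + x ^ 2 / 2) (1 + x) x := by
      have := (hasDerivAt_id x).add (((hasDerivAt_id x).pow 2).div_const 2)
      convert! this using 1; simp
    have h2 := ((hasDerivAt_id x).const_sub 1).mul h1.cexp
    refine HasDerivAt.hasDerivWithinAt ?_
    convert! h2 using 1
    simp; ring
  have := (convex_closedBall (0:ℂ) ‖u‖).norm_image_sub_le_of_norm_hasDerivWithin_le
    (C := ‖u‖ ^ 2 * Real.exp (M + M ^ 2)) hd ?_ (x := 0) (y := u) (by simp) (by simp)
  · simp at this
    calc _ ≤ _ := this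
      _ = _ := by ring
  · intro x hx
    have hx : ‖x‖ ≤ ‖u‖ := by simpa using hx
    rw [norm_mul, norm_neg, norm_pow, Complex.norm_exp]
    gcongr
    refine (Complex.re_le_norm _).trans ((norm_add_le _ _).trans ?_)
    have : ‖x ^ 2 / 2‖ ≤ M ^ 2 := by
      rw [norm_div, norm_pow]
      have : ‖x‖ ^ 2 ≤ M ^ 2 := by gcongr; exact hx.trans hu
      simp; nlinarith [sq_nonneg M]
    linarith

lemma fac_bound (L : PeriodPair) (R : ℝ) (hR : 0 ≤ R) : ∃ C, ∀ z, ‖z‖ ≤ R → ∀ p : J,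
    ‖fac L p z - 1‖ ≤ C * (‖lat L p‖ ^ 3)⁻¹ := by
  obtain ⟨c, hc, hl⟩ := lat_lb L
  refine ⟨Real.exp (R / c + (R / c) ^ 2) * R ^ 3, fun z hz p => ?_⟩
  have hp : 0 < ‖lat L p‖ := norm_pos_iff.2 (lat_ne L p)
  have h := E_bound (z / lat L p) (R / c) (by rw [norm_div]; gcongr; exact hl p)
  have e : fac L p z = (1 - z / lat L p) * Complex.exp (z / lat L p + (z / lat L p) ^ 2 / 2) := by
    unfold fac; congr 3; rw [div_pow, div_div, mul_comm]
  rw [e]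
  refine h.trans ?_
  rw [norm_div, div_pow ‖z‖, div_eq_mul_inv (‖z‖ ^ 3), mul_assoc (Real.exp _)]
  gcongr

lemma fac_diff (L : PeriodPair) (p : J) : Differentiable ℂ (fac L p) := by
  unfold fac; fun_prop

lemma summable_fac (L : PeriodPair) (z : ℂ) : Summable fun p => ‖fac L p z - 1‖ := by
  obtain ⟨C, hC⟩ := fac_bound L ‖z‖ (norm_nonneg _)
  exact ((summable_lat L).mul_left C).of_nonneg_of_le (fun _ => norm_nonneg _) (hC z le_rfl)

lemma tp_ne (L : PeriodPair) (z : ℂ) (hz : ∀ p, z ≠ lat L p) : tp L z ≠ 0 := by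
  have := tprod_one_add_ne_zero_of_summable (f := fun p => fac L p z - 1) ?_ (summable_fac L z)
  · simpa [tp] using this
  · intro p
    simp only [add_sub_cancel, fac]
    refine mul_ne_zero ?_ (Complex.exp_ne_zero _)
    rw [sub_ne_zero]
    intro h
    rw [eq_comm, div_eq_one_iff_eq (lat_ne L p)] at h
    exact hz p h

lemma hasProd_tp (L : PeriodPair) : HasProdLocallyUniformlyOn (fac L) (tp L) Set.univ := by
  apply hasProdLocallyUniformlyOn_of_forall_compact isOpen_univ
  intro K _ hK
  obtain ⟨R, hR⟩ := hK.isBounded.exists_norm_le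
  obtain ⟨C, hC⟩ := fac_bound L (max R 0) (by simp)
  have := Summable.hasProdUniformlyOn_one_add (f := fun p z => fac L p z - 1) hK
    ((summable_lat L).mul_left C) (Eventually.of_forall fun p z hz =>
      hC z ((hR z hz).trans (le_max_left _ _)) p)
    (fun p => ((fac_diff L p).continuous.sub continuous_const).continuousOn)
  simpa [tp] using! this

noncomputable def pp (L : PeriodPair) (s : Finset J) (z : ℂ) : ℂ := ∏ p ∈ s, fac L p z

lemma pp_diff (L : PeriodPair) (s : Finset J) : Differentiable ℂ (pp L s) := by
  unfold pp
  exact Differentiable.fun_finsetProd fun i _ => fac_diff L i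

lemma pp_tendsto (L : PeriodPair) : TendstoLocallyUniformlyOn (pp L) (tp L) atTop Set.univ :=
  hasProdLocallyUniformlyOn_iff_tendstoLocallyUniformlyOn.1 (hasProd_tp L)

lemma tp_diff (L : PeriodPair) : Differentiable ℂ (tp L) := by
  rw [← differentiableOn_univ]
  exact (pp_tendsto L).differentiableOn (Eventually.of_forall fun s => (pp_diff L s).differentiableOn)
    isOpen_univ

lemma deriv_diff {f : ℂ → ℂ} (hf : Differentiable ℂ f) : Differentiable ℂ (deriv f) := by
  rw [← differentiableOn_univ] at *
  exact hf.deriv isOpen_univ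

lemma deriv_logDeriv {f : ℂ → ℂ} (hf : Differentiable ℂ f) (z : ℂ) (hz : f z ≠ 0) :
    HasDerivAt (logDeriv f) (deriv (deriv f) z / f z - (deriv f z / f z) ^ 2) z := by
  have := ((deriv_diff hf) z).hasDerivAt.div (hf z).hasDerivAt hz
  convert! this using 1
  field_simp

lemma logDeriv_fac (L : PeriodPair) (p : J) (z : ℂ) (hz : z ≠ lat L p) :
    logDeriv (fac L p) z = 1 / (z - lat L p) + 1 / lat L p + z / lat L p ^ 2 := by
  have hl := lat_ne L p
  have hz' : z - lat L p ≠ 0 := sub_ne_zero.2 hz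
  have h1 : HasDerivAt (fun x : ℂ => x / lat L p + x ^ 2 / (2 * lat L p ^ 2))
      (1 / lat L p + 2 * z / (2 * lat L p ^ 2)) z := by
    have := ((hasDerivAt_id z).div_const (lat L p)).add
      (((hasDerivAt_id z).pow 2).div_const (2 * lat L p ^ 2))
    convert! this using 1; simp
  have h2 := (((hasDerivAt_id z).div_const (lat L p)).const_sub 1).mul h1.cexp
  have h3 : HasDerivAt (fac L p) _ z := h2
  rw [logDeriv_apply, h3.deriv]
  have hz'' : 1 - z / lat L p ≠ 0 := by
    rw [sub_ne_zero]; intro h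
    rw [eq_comm, div_eq_one_iff_eq hl] at h; exact hz h
  have hz3 : lat L p - z ≠ 0 := sub_ne_zero.2 hz.symm
  have he := Complex.exp_ne_zero (z / lat L p + z ^ 2 / (2 * lat L p ^ 2))
  unfold fac
  simp only [id]
  generalize Complex.exp (z / lat L p + z ^ 2 / (2 * lat L p ^ 2)) = e at *
  generalize lat L p = l at *
  field_simp
  ring

lemma fac_ne (L : PeriodPair) (p : J) (z : ℂ) (hz : z ≠ lat L p) : fac L p z ≠ 0 := by
  refine mul_ne_zero ?_ (Complex.exp_ne_zero _)
  rw [sub_ne_zero]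
  intro h
  rw [eq_comm, div_eq_one_iff_eq (lat_ne L p)] at h
  exact hz h

lemma pp_second (L : PeriodPair) (s : Finset J) (z : ℂ) (hz : z ∉ L.lattice) :
    deriv (deriv (pp L s)) z / pp L s z - (deriv (pp L s) z / pp L s z) ^ 2
      = ∑ p ∈ s, -(1 / (z - lat L p) ^ 2 - 1 / lat L p ^ 2) := by
  have hne : ∀ w ∉ L.lattice, ∀ p, w ≠ lat L p := fun w hw p h => hw (h ▸ lat_mem L p)
  have h0 : pp L s z ≠ 0 := Finset.prod_ne_zero_iff.2 fun p _ => fac_ne L p z (hne z hz p)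
  have h1 := deriv_logDeriv (pp_diff L s) z h0
  have h2 : HasDerivAt (fun w => ∑ p ∈ s, (1 / (w - lat L p) + 1 / lat L p + w / lat L p ^ 2))
     (∑ p ∈ s, -(1 / (z - lat L p) ^ 2 - 1 / lat L p ^ 2)) z := by
    refine HasDerivAt.fun_sum fun p _ => ?_
    have hz' : z - lat L p ≠ 0 := sub_ne_zero.2 (hne z hz p)
    have := ((((hasDerivAt_id z).sub_const (lat L p)).inv hz').add_const (1 / lat L p)).add
      ((hasDerivAt_id z).div_const (lat L p ^ 2))
    convert! this using 1
    · ext w; simp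
    · simp only [id]; ring
  refine h1.unique (h2.congr_of_eventuallyEq ?_)
  filter_upwards [L.isClosed_lattice.isOpen_compl.mem_nhds hz] with w hw
  unfold pp
  rw [logDeriv_prod (fun p _ => fac_ne L p w (hne w hw p)) (fun p _ => fac_diff L p w)]
  exact Finset.sum_congr rfl fun p _ => logDeriv_fac L p w (hne w hw p)

lemma hasSum_J (L : PeriodPair) (z : ℂ) :
    HasSum (fun p : J => (1 / (z - lat L p) ^ 2 - 1 / lat L p ^ 2))
      (L.weierstrassP z - 1 / z ^ 2) := by
  have h := L.hasSum_weierstrassP z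
  have h1 := (L.latticeEquivProd.symm.toEquiv.hasSum_iff).2 h
  have h2 := h1.update 0 0
  have h3 := (hasSum_subtype_iff_of_support_subset (s := {p : ℤ × ℤ | p ≠ 0}) ?_).2 h2
  · convert! h3 using 1
    · ext p
      have := p.2
      simp only [Function.comp]
      rw [Function.update_of_ne this, lat_eq]
      rfl
    · simp; ring
  · intro p hp
    simp at hp ⊢
    rintro rfl
    simp at hp

lemma tp_second (L : PeriodPair) (z : ℂ) (hz : z ∉ L.lattice) :
    HasDerivAt (logDeriv (tp L)) (-(L.weierstrassP z - 1 / z ^ 2)) z := by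
  have hne : ∀ p, z ≠ lat L p := fun p h => hz (h ▸ lat_mem L p)
  have h0 : tp L z ≠ 0 := tp_ne L z hne
  have h := deriv_logDeriv (tp_diff L) z h0
  have t0 := pp_tendsto L
  have t1 := t0.deriv (Eventually.of_forall fun s => (pp_diff L s).differentiableOn) isOpen_univ
  have t2 := t1.deriv (Eventually.of_forall fun s =>
    (deriv_diff (pp_diff L s)).differentiableOn) isOpen_univ
  have a0 := t0.tendsto_at (Set.mem_univ z)
  have a1 := t1.tendsto_at (Set.mem_univ z)
  have a2 := t2.tendsto_at (Set.mem_univ z)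
  have a := (a2.div a0 h0).sub ((a1.div a0 h0).pow 2)
  have b : Tendsto (fun s : Finset J => ∑ p ∈ s, -(1 / (z - lat L p) ^ 2 - 1 / lat L p ^ 2))
    atTop (𝓝 (-(L.weierstrassP z - 1 / z ^ 2))) := (hasSum_J L z).neg
  convert! h using 1
  refine tendsto_nhds_unique b (a.congr fun s => ?_)
  simp only [Function.comp]
  exact pp_second L s z hz

noncomputable def S (L : PeriodPair) (z : ℂ) : ℂ := z * tp L z

lemma S_diff (L : PeriodPair) : Differentiable ℂ (S L) := by
  have := tp_diff L
  unfold S; fun_prop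

lemma ne_lat (L : PeriodPair) {z : ℂ} (hz : z ∉ L.lattice) (p : J) : z ≠ lat L p :=
  fun h => hz (h ▸ lat_mem L p)

lemma ne_zero' (L : PeriodPair) {z : ℂ} (hz : z ∉ L.lattice) : z ≠ 0 := by
  rintro rfl; exact hz (zero_mem _)

lemma S_ne (L : PeriodPair) {z : ℂ} (hz : z ∉ L.lattice) : S L z ≠ 0 :=
  mul_ne_zero (ne_zero' L hz) (tp_ne L z (ne_lat L hz))

lemma logDeriv_S (L : PeriodPair) {z : ℂ} (h0 : z ≠ 0) (hz : ∀ p, z ≠ lat L p) :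
    logDeriv (S L) z = 1 / z + logDeriv (tp L) z := by
  have := logDeriv_mul (f := fun z : ℂ => z) (g := tp L) z h0 (tp_ne L z hz)
    differentiableAt_id (tp_diff L z)
  rw [logDeriv_id'] at this
  exact this

lemma tp_even (L : PeriodPair) (z : ℂ) : tp L (-z) = tp L z := by
  let e : J ≃ J := (Equiv.neg (ℤ × ℤ)).subtypeEquiv (fun p => by simp)
  unfold tp
  rw [← e.tprod_eq]
  refine tprod_congr fun p => ?_
  have : lat L (e p) = - lat L p := by
    simp [lat, e]; ring
  unfold fac
  rw [this]
  simp

lemma S_odd (L : PeriodPair) (z : ℂ) : S L (-z) = - S L z := by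
  simp [S, tp_even]

lemma logDeriv_S_odd (L : PeriodPair) (z : ℂ) : logDeriv (S L) (-z) = - logDeriv (S L) z := by
  have h : deriv (S L) (-z) = deriv (S L) z := by
    have h1 : (fun z => S L (-z)) = fun z => - S L z := funext (S_odd L)
    have h2 := congrArg (fun f => deriv f z) h1
    simp only [deriv_comp_neg, deriv.fun_neg] at h2
    exact neg_injective h2
  rw [logDeriv_apply, logDeriv_apply, h, S_odd, div_neg]

lemma hasDerivAt_Z (L : PeriodPair) {z : ℂ} (hz : z ∉ L.lattice) :
    HasDerivAt (logDeriv (S L)) (-L.weierstrassP z) z := by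
  have h1 := (hasDerivAt_inv (ne_zero' L hz)).add (tp_second L z hz)
  have h2 : HasDerivAt (fun z => z⁻¹ + logDeriv (tp L) z) (-L.weierstrassP z) z := by
    convert! h1 using 1
    rw [one_div]; ring
  refine h2.congr_of_eventuallyEq ?_
  filter_upwards [L.isClosed_lattice.isOpen_compl.mem_nhds hz] with w hw
  rw [logDeriv_S L (ne_zero' L hw) (ne_lat L hw), one_div]

lemma lattice_countable (L : PeriodPair) : (L.lattice : Set ℂ).Countable := by
  have : Countable L.lattice := L.latticeEquivProd.toEquiv.injective.countable
  exact Set.countable_coe_iff.1 this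

lemma preconn (L : PeriodPair) : IsPreconnected ((L.lattice : Set ℂ)ᶜ) :=
  ((lattice_countable L).isPathConnected_compl_of_one_lt_rank (by simp)).isConnected.isPreconnected

lemma const_off (L : PeriodPair) (f : ℂ → ℂ) (hf : ∀ z ∉ L.lattice, HasDerivAt f 0 z) {z w : ℂ}
    (hz : z ∉ L.lattice) (hw : w ∉ L.lattice) : f z = f w :=
  L.isClosed_lattice.isOpen_compl.is_const_of_deriv_eq_zero (preconn L)
    (fun z hz => (hf z hz).differentiableAt.differentiableWithinAt)
    (fun z hz => (hf z hz).deriv) hz hw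

lemma add_notMem (L : PeriodPair) {z l : ℂ} (hl : l ∈ L.lattice) (hz : z ∉ L.lattice) :
    z + l ∉ L.lattice := fun h => hz (by simpa using sub_mem h hl)

lemma Z_add (L : PeriodPair) {l : ℂ} (hl : l ∈ L.lattice) (hl2 : l / 2 ∉ L.lattice) {z : ℂ}
    (hz : z ∉ L.lattice) :
    logDeriv (S L) (z + l) = logDeriv (S L) z + 2 * logDeriv (S L) (l / 2) := by
  have hm : -(l / 2) ∉ L.lattice := fun h => hl2 (by simpa using neg_mem h)
  have := const_off L (fun z => logDeriv (S L) (z + l) - logDeriv (S L) z) (fun z hz => by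
    have h1 := (hasDerivAt_Z L (add_notMem L hl hz)).comp_add_const z l
    have h2 := h1.sub (hasDerivAt_Z L hz)
    convert! h2 using 1
    have := L.weierstrassP_add_coe z ⟨l, hl⟩
    simp only at this
    rw [this]; ring) hz hm
  simp only [logDeriv_S_odd] at this
  rw [show -(l / 2) + l = l / 2 by ring] at this
  linear_combination this

lemma S_add (L : PeriodPair) {l : ℂ} (hl : l ∈ L.lattice) (hl2 : l / 2 ∉ L.lattice) (z : ℂ) :
    S L (z + l) = - Complex.exp (2 * logDeriv (S L) (l / 2) * (z + l / 2)) * S L z := by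
  have hm : -(l / 2) ∉ L.lattice := fun h => hl2 (by simpa using neg_mem h)
  set η := 2 * logDeriv (S L) (l / 2) with hη
  have key : ∀ z ∉ L.lattice, S L (z + l) = - Complex.exp (η * (z + l / 2)) * S L z := by
    intro z hz
    have := const_off L (fun z => S L (z + l) / (Complex.exp (η * (z + l / 2)) * S L z))
      (fun z hz => by
        have n1 := S_ne L hz
        have n2 := S_ne L (add_notMem L hl hz)
        have ne := Complex.exp_ne_zero (η * (z + l / 2))
        have h1 := (S_diff L (z + l)).hasDerivAt.comp_add_const z l
        have h2 : HasDerivAt (fun z => Complex.exp (η * (z + l / 2)))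
            (Complex.exp (η * (z + l / 2)) * η) z := by
          have := (((hasDerivAt_id z).add_const (l / 2)).const_mul η).cexp
          simpa using this
        have h3 := h1.div (h2.mul (S_diff L z).hasDerivAt) (mul_ne_zero ne n1)
        convert! h3 using 1
        have hZ := Z_add L hl hl2 hz
        rw [← hη, logDeriv_apply, logDeriv_apply] at hZ
        rw [eq_comm, div_eq_zero_iff]
        left
        field_simp at hZ
        simp only [Pi.mul_apply]
        linear_combination Complex.exp (η * (z + l / 2)) * hZ) hz hm
    rw [show -(l / 2) + l = l / 2 by ring, S_odd] at this
    have n1 := S_ne L hz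
    have n2 := S_ne L hl2
    have ne := Complex.exp_ne_zero (η * (z + l / 2))
    rw [show -(l / 2) + l / 2 = 0 by ring, mul_zero, Complex.exp_zero, one_mul, div_neg,
      div_self n2, div_eq_iff (mul_ne_zero ne n1)] at this
    rw [this]; ring
  have hd : Dense ((L.lattice : Set ℂ)ᶜ) := (lattice_countable L).dense_compl ℝ
  have := Continuous.ext_on hd (f := fun z => S L (z + l))
    (g := fun z => - Complex.exp (η * (z + l / 2)) * S L z)
    (by have := (S_diff L).continuous; fun_prop)
    (by have := (S_diff L).continuous; fun_prop) key
  exact congrFun this z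

open Complex in
lemma rect_inv (a c : ℝ) (ha : 0 < a) (hc : 0 < c) :
    (∫ x : ℝ in (-a)..a, ((x : ℂ) + ((-c : ℝ) : ℂ) * I)⁻¹)
      - (∫ x : ℝ in (-a)..a, ((x : ℂ) + (c : ℂ) * I)⁻¹)
      + I • (∫ y : ℝ in (-c)..c, ((a : ℂ) + (y : ℂ) * I)⁻¹)
      - I • (∫ y : ℝ in (-c)..c, (((-a : ℝ) : ℂ) + (y : ℂ) * I)⁻¹) = 2 * Real.pi * I := by
  have hor : ∀ t : ℝ, t ≠ 0 → (∫ x : ℝ in (-a)..a, ((x : ℂ) + (t : ℂ) * I)⁻¹)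
      = log (a + t * I) - log (-a + t * I) := by
    intro t ht
    have hs : ∀ x : ℝ, (x : ℂ) + t * I ∈ slitPlane := fun x => by
      right; simpa using ht
    have := intervalIntegral.integral_eq_sub_of_hasDerivAt (a := -a) (b := a)
      (f := fun x : ℝ => log ((x : ℂ) + t * I)) (f' := fun x : ℝ => ((x : ℂ) + (t : ℂ) * I)⁻¹)
      (fun x _ => by
        have h := (((hasDerivAt_id x).ofReal_comp).add_const (t * I : ℂ)).clog_real (hs x)
        simpa using h) ?_
    · simpa using this
    · apply Continuous.intervalIntegrable
      exact Continuous.inv₀ (by fun_prop) (fun x => slitPlane_ne_zero (hs x))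
  have hr : I • (∫ y : ℝ in (-c)..c, ((a : ℂ) + (y : ℂ) * I)⁻¹)
      = log (a + c * I) - log (a + (-c) * I) := by
    have hs : ∀ y : ℝ, (a : ℂ) + y * I ∈ slitPlane := fun x => by
      left; simpa using ha
    rw [← intervalIntegral.integral_smul]
    have := intervalIntegral.integral_eq_sub_of_hasDerivAt (a := -c) (b := c)
      (f := fun y : ℝ => log ((a : ℂ) + y * I)) (f' := fun y : ℝ => I • ((a : ℂ) + (y : ℂ) * I)⁻¹)
      (fun x _ => by
        have h := ((((hasDerivAt_id x).ofReal_comp).mul_const I).const_add (a : ℂ)).clog_real (hs x)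
        simpa [div_eq_mul_inv] using h) ?_
    · simpa using this
    · apply Continuous.intervalIntegrable
      exact (Continuous.inv₀ (by fun_prop : Continuous fun y : ℝ => (a : ℂ) + (y : ℂ) * I)
        (fun x => slitPlane_ne_zero (hs x))).const_smul I
  have hl : I • (∫ y : ℝ in (-c)..c, (((-a : ℝ) : ℂ) + (y : ℂ) * I)⁻¹)
      = log (a + (-c) * I) - log (a + c * I) := by
    have hs : ∀ y : ℝ, (a : ℂ) - y * I ∈ slitPlane := fun x => by
      left; simpa using ha
    have hn : ∀ y : ℝ, (((-a : ℝ) : ℂ) + (y : ℂ) * I) = -((a : ℂ) - y * I) := fun y => by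
      push_cast; ring
    rw [← intervalIntegral.integral_smul]
    have := intervalIntegral.integral_eq_sub_of_hasDerivAt (a := -c) (b := c)
      (f := fun y : ℝ => log ((a : ℂ) - y * I))
      (f' := fun y : ℝ => I • (((-a : ℝ) : ℂ) + (y : ℂ) * I)⁻¹)
      (fun x _ => by
        have h := ((((hasDerivAt_id x).ofReal_comp).mul_const I).const_sub (a : ℂ)).clog_real (hs x)
        rw [hn, inv_neg]
        simpa [div_eq_mul_inv] using h) ?_
    · simpa [sub_eq_add_neg] using this
    · apply Continuous.intervalIntegrable
      refine (Continuous.inv₀ (by fun_prop : Continuous fun y : ℝ => ((-a : ℝ) : ℂ) + (y : ℂ) * I)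
        (fun x => ?_)).const_smul I
      rw [hn]; exact neg_ne_zero.2 (slitPlane_ne_zero (hs x))
  have e1 : log (-a + c * I) = log (a + (-c) * I) + Real.pi * I := by
    rw [show (-a + c * I : ℂ) = -(a + (-c) * I) by ring]
    unfold Complex.log
    rw [norm_neg, arg_neg_eq_arg_add_pi_of_im_neg (by simpa using hc)]
    push_cast; ring
  have e2 : log (-a + (-c) * I) = log (a + c * I) - Real.pi * I := by
    rw [show (-a + (-c) * I : ℂ) = -(a + c * I) by ring]
    unfold Complex.log
    rw [norm_neg, arg_neg_eq_arg_sub_pi_of_im_pos (by simpa using hc)]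
    push_cast; ring
  rw [hor _ (by simpa using hc.ne'), hor _ hc.ne', hr, hl]
  push_cast
  rw [e1, e2]; ring

lemma rect_notMem (L : PeriodPair) (h1 : L.ω₁.im = 0) (h1' : 0 < L.ω₁.re) (h2 : 0 < L.ω₂.im)
    {z : ℂ} (hr : |z.re| ≤ L.ω₁.re / 2) (hi : |z.im| ≤ L.ω₂.im / 2) (h : z ∈ L.lattice) :
    z = 0 := by
  obtain ⟨m, n, rfl⟩ := PeriodPair.mem_lattice.1 h
  have key : ∀ (k : ℤ) (t : ℝ), 0 < t → |(k : ℝ) * t| ≤ t / 2 → k = 0 := by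
    intro k t ht h
    rw [abs_mul, abs_of_pos ht] at h
    have h3 : |(k : ℝ)| < 1 := by nlinarith
    have : |k| < 1 := by exact_mod_cast h3
    exact Int.abs_lt_one_iff.1 this
  have hn : n = 0 := key n _ h2 (by simpa [h1] using hi)
  subst hn
  have hm : m = 0 := key m _ h1' (by simpa using hr)
  subst hm
  simp

lemma im_notMem (L : PeriodPair) (h1 : L.ω₁.im = 0) (h2 : 0 < L.ω₂.im)
    {z : ℂ} (hi : |z.im| = L.ω₂.im / 2) : z ∉ L.lattice := by
  intro h
  obtain ⟨m, n, rfl⟩ := PeriodPair.mem_lattice.1 h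
  simp [h1, abs_mul, abs_of_pos h2] at hi
  have h3 : 2 * |(n : ℝ)| = 1 := by
    have : (2 * |(n : ℝ)| - 1) * L.ω₂.im = 0 := by linarith
    rcases mul_eq_zero.1 this with h | h <;> linarith
  have : 2 * |n| = 1 := by exact_mod_cast h3
  omega

open Complex in
lemma legendre (L : PeriodPair) (h1 : L.ω₁.im = 0) (h1' : 0 < L.ω₁.re) (h2 : 0 < L.ω₂.im) :
    2 * logDeriv (S L) (L.ω₁ / 2) * L.ω₂ - 2 * logDeriv (S L) (L.ω₂ / 2) * L.ω₁
      = 2 * Real.pi * I := by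
  set η₁ := 2 * logDeriv (S L) (L.ω₁ / 2) with hη₁
  set η₂ := 2 * logDeriv (S L) (L.ω₂ / 2) with hη₂
  set a := L.ω₁.re / 2 with ha
  set c := L.ω₂.im / 2 with hc
  have ha0 : 0 < a := by positivity
  have hc0 : 0 < c := by positivity
  have hω₁ : L.ω₁ = ((2 * a : ℝ) : ℂ) := by
    apply Complex.ext <;> simp [ha, h1]
    ring
  set k := η₁ / L.ω₁ with hk
  have hω₁0 : L.ω₁ ≠ 0 := by
    rw [hω₁]; exact_mod_cast (by positivity : (2 * a) ≠ 0)
  have hkω : k * L.ω₁ = η₁ := div_mul_cancel₀ _ hω₁0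
  let H : ℂ → ℂ := fun z => logDeriv (S L) z - k * z
  let g : ℂ → ℂ := fun z => logDeriv (tp L) z - k * z
  have Hper : ∀ z ∉ L.lattice, H (z + L.ω₁) = H z := fun z hz => by
    simp only [H]
    rw [Z_add L L.ω₁_mem_lattice L.ω₁_div_two_notMem_lattice hz]
    linear_combination -hkω
  have Hper2 : ∀ z ∉ L.lattice, H (z + L.ω₂) = H z + (η₂ - k * L.ω₂) := fun z hz => by
    simp only [H]
    rw [Z_add L L.ω₂_mem_lattice L.ω₂_div_two_notMem_lattice hz]
    ring
  have Hcont : ∀ z ∉ L.lattice, ContinuousAt H z := fun z hz =>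
    (hasDerivAt_Z L hz).continuousAt.sub (by fun_prop)
  have rectp : ∀ z : ℂ, |z.re| ≤ a → |z.im| ≤ c → ∀ p, z ≠ lat L p := by
    intro z hr hi p h
    have := rect_notMem L h1 h1' h2 hr hi (h ▸ lat_mem L p)
    exact lat_ne L p (h.symm.trans this)
  have Hg : ∀ z : ℂ, |z.re| ≤ a → |z.im| ≤ c → z ≠ 0 → H z = z⁻¹ + g z := by
    intro z hr hi h0
    simp only [H, g, logDeriv_S L h0 (rectp z hr hi)]
    ring
  have gdiff : ∀ z : ℂ, |z.re| ≤ a → |z.im| ≤ c → DifferentiableAt ℂ g z := by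
    intro z hr hi
    exact (deriv_logDeriv (tp_diff L) z (tp_ne L z (rectp z hr hi))).differentiableAt.sub
      (by fun_prop)
  have mem : ∀ t x : ℝ, 0 < t → x ∈ Set.uIcc (-t) t → |x| ≤ t := by
    intro t x ht hx
    rw [Set.uIcc_of_le (by linarith)] at hx
    exact abs_le.2 hx
  have R1 := Complex.integral_boundary_rect_eq_zero_of_differentiableOn g ⟨-a, -c⟩ ⟨a, c⟩ (by
    intro z hz
    obtain ⟨hz1, hz2⟩ := hz
    exact (gdiff z (mem _ _ ha0 hz1) (mem _ _ hc0 hz2)).differentiableWithinAt)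
  have R2 := rect_inv a c ha0 hc0
  -- splitting of edge integrals
  have split : ∀ (t : ℝ) (ht : 0 < t) (φ : ℝ → ℂ), Continuous φ →
      (∀ x, |x| ≤ t → |(φ x).re| ≤ a ∧ |(φ x).im| ≤ c ∧ φ x ≠ 0) →
      (∫ x in (-t)..t, H (φ x)) = (∫ x in (-t)..t, (φ x)⁻¹) + ∫ x in (-t)..t, g (φ x) := by
    intro t ht φ hφ hb
    rw [← intervalIntegral.integral_add]
    · refine intervalIntegral.integral_congr fun x hx => ?_
      obtain ⟨b1, b2, b3⟩ := hb x (mem t x ht hx)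
      exact Hg _ b1 b2 b3
    · apply ContinuousOn.intervalIntegrable
      exact hφ.continuousOn.inv₀ fun x hx => (hb x (mem t x ht hx)).2.2
    · apply ContinuousOn.intervalIntegrable
      intro x hx
      obtain ⟨b1, b2, b3⟩ := hb x (mem t x ht hx)
      have := (gdiff _ b1 b2).continuousAt
      exact (ContinuousAt.comp (f := φ) (g := g) this hφ.continuousAt).continuousWithinAt
  have im_ne : ∀ z : ℂ, z.im ≠ 0 → z ≠ 0 := by rintro z h rfl; simp at h
  have re_ne : ∀ z : ℂ, z.re ≠ 0 → z ≠ 0 := by rintro z h rfl; simp at h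
  have sB := split a ha0 (fun x => (x : ℂ) + ((-c : ℝ) : ℂ) * I) (by fun_prop) (fun x hx =>
    ⟨by simpa using hx, by simp [abs_of_pos hc0], im_ne _ (by simpa using hc0.ne')⟩)
  have sT := split a ha0 (fun x => (x : ℂ) + (c : ℂ) * I) (by fun_prop) (fun x hx =>
    ⟨by simpa using hx, by simp [abs_of_pos hc0], im_ne _ (by simpa using hc0.ne')⟩)
  have sR := split c hc0 (fun y => (a : ℂ) + (y : ℂ) * I) (by fun_prop) (fun x hx =>
    ⟨by simp [abs_of_pos ha0], by simpa using hx, re_ne _ (by simpa using ha0.ne')⟩)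
  have sL := split c hc0 (fun y => ((-a : ℝ) : ℂ) + (y : ℂ) * I) (by fun_prop) (fun x hx =>
    ⟨by simp [abs_of_pos ha0], by simpa using hx, re_ne _ (by simpa using ha0.ne')⟩)
  -- right = left
  have RL : (∫ y : ℝ in (-c)..c, H ((a : ℂ) + (y : ℂ) * I))
      = ∫ y : ℝ in (-c)..c, H (((-a : ℝ) : ℂ) + (y : ℂ) * I) := by
    refine intervalIntegral.integral_congr fun y hy => ?_
    rw [← Hper (((-a : ℝ) : ℂ) + (y : ℂ) * I)]
    · congr 1; rw [hω₁]; push_cast; ring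
    · intro h
      have := rect_notMem L h1 h1' h2 (z := ((-a : ℝ) : ℂ) + (y : ℂ) * I)
        (by simp [← ha, abs_of_pos ha0]) (by simpa using mem _ _ hc0 hy) h
      exact re_ne _ (by simpa using ha0.ne') this
  have nB : ∀ x : ℝ, (x : ℂ) + ((-c : ℝ) : ℂ) * I ∉ L.lattice := fun x =>
    im_notMem L h1 h2 (by simp [← hc, abs_of_pos hc0])
  have nT : ∀ x : ℝ, (x : ℂ) + (c : ℂ) * I ∉ L.lattice := fun x =>
    im_notMem L h1 h2 (by simp [← hc, abs_of_pos hc0])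
  have TB : (∫ x : ℝ in (-a)..a, H ((x : ℂ) + (c : ℂ) * I))
      = (∫ x : ℝ in (-a)..a, H ((x : ℂ) + ((-c : ℝ) : ℂ) * I)) + L.ω₁ * (η₂ - k * L.ω₂) := by
    have per : Function.Periodic (fun x : ℝ => H ((x : ℂ) + (c : ℂ) * I)) (2 * a) := by
      intro x
      simp only
      rw [← Hper _ (nT x), hω₁]
      congr 1; push_cast; ring
    have e1 := per.intervalIntegral_add_eq (-a) (-a + L.ω₂.re)
    have e2 : (∫ x : ℝ in (-a)..a, H ((x : ℂ) + ((-c : ℝ) : ℂ) * I + L.ω₂))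
      = ∫ x : ℝ in (-a + L.ω₂.re)..(-a + L.ω₂.re + 2 * a), H ((x : ℂ) + (c : ℂ) * I) := by
      rw [show -a + L.ω₂.re + 2 * a = a + L.ω₂.re by ring]
      rw [← intervalIntegral.integral_comp_add_right
        (fun x : ℝ => H ((x : ℂ) + (c : ℂ) * I)) L.ω₂.re]
      refine intervalIntegral.integral_congr fun x _ => ?_
      congr 1
      apply Complex.ext <;> simp [hc]
      ring
    rw [show -a + 2 * a = a by ring] at e1
    rw [e1, ← e2]
    have e3 : (∫ x : ℝ in (-a)..a, H ((x : ℂ) + ((-c : ℝ) : ℂ) * I + L.ω₂))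
      = ∫ x : ℝ in (-a)..a, (H ((x : ℂ) + ((-c : ℝ) : ℂ) * I) + (η₂ - k * L.ω₂)) :=
      intervalIntegral.integral_congr fun x _ => Hper2 _ (nB x)
    rw [e3, intervalIntegral.integral_add, intervalIntegral.integral_const, hω₁]
    · rw [show a - -a = 2 * a by ring]; simp
    · apply Continuous.intervalIntegrable
      rw [continuous_iff_continuousAt]
      intro x
      exact ContinuousAt.comp (f := fun x : ℝ => (x : ℂ) + ((-c : ℝ) : ℂ) * I) (g := H)
        (Hcont _ (nB x)) (by fun_prop)
    · simp
  simp only [smul_eq_mul] at R1 R2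
  rw [RL] at sR
  rw [TB] at sT
  linear_combination R1 + R2 + sB - sT + I * sR - I * sL - L.ω₂ * hkω

lemma star_add (b η ω z : ℂ) (s t : ℂ) (hb : 2 * b * ω + η = 2 * (starRingEnd ℂ) ω)
    (h : t = - Complex.exp (η * (z + ω / 2)) * s) :
    Complex.exp (b * z ^ 2) * s =
      -Complex.exp (-2 * (starRingEnd ℂ) ω * z - ((‖ω‖ ^ 2 : ℝ) : ℂ)) *
        (Complex.exp (b * (z + ω) ^ 2) * t) := by
  have hn : ((‖ω‖ ^ 2 : ℝ) : ℂ) = ω * (starRingEnd ℂ) ω := by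
    rw [Complex.mul_conj, Complex.normSq_eq_norm_sq]
  have e : Complex.exp (b * z ^ 2) =
      Complex.exp (-2 * (starRingEnd ℂ) ω * z - ((‖ω‖ ^ 2 : ℝ) : ℂ)) *
        Complex.exp (b * (z + ω) ^ 2) * Complex.exp (η * (z + ω / 2)) := by
    rw [← Complex.exp_add, ← Complex.exp_add, hn]
    congr 1
    linear_combination (-(z + ω / 2)) * hb
  rw [h, e]; ring

lemma per_of (f : ℂ → ℂ) (ω : ℂ) (h : ∀ z, f z =
      -Complex.exp (-2 * (starRingEnd ℂ) ω * z - ((‖ω‖ ^ 2 : ℝ) : ℂ)) * f (z + ω)) :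
    Function.Periodic (fun z => Real.exp (-‖z‖ ^ 2) * ‖f z‖) ω := by
  intro z
  simp only
  rw [h z, norm_mul, norm_neg, Complex.norm_exp, ← mul_assoc, ← Real.exp_add]
  congr 2
  rw [← Complex.normSq_eq_norm_sq, ← Complex.normSq_eq_norm_sq, ← Complex.normSq_eq_norm_sq]
  simp [Complex.normSq_apply]
  ring

end SigmaAux

/-- periodicity-type identity for the modified sigma function,
and the `Λ`-periodicity of `e^{−|z|²}|σ_*(z)|`. -/
theorem sigmaStar_periodicity (ω₁ ω₂ : ℂ)
    (h1 : ω₁.im = 0) (h1' : 0 < ω₁.re) (h2 : 0 < ω₂.im)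
    (harea : ω₁.re * ω₂.im = Real.pi / 2) :
    (∀ ω ∈ ({ω₁, ω₂} : Set ℂ), ∀ z : ℂ,
      sigmaStar ω₁ ω₂ z =
        -Complex.exp (-2 * (starRingEnd ℂ) ω * z - ((‖ω‖ ^ 2 : ℝ) : ℂ)) *
          sigmaStar ω₁ ω₂ (z + ω)) ∧
    (∀ ω ∈ latticeSet ω₁ ω₂, ∀ z : ℂ,
      Real.exp (-‖z + ω‖ ^ 2) * ‖sigmaStar ω₁ ω₂ (z + ω)‖ =
        Real.exp (-‖z‖ ^ 2) * ‖sigmaStar ω₁ ω₂ z‖) := by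
  have indep : LinearIndependent ℝ ![ω₁, ω₂] := by
    rw [LinearIndependent.pair_iff]
    intro s t hst
    have hi := congrArg Complex.im hst
    have hr := congrArg Complex.re hst
    simp [h1] at hi hr
    rcases hi with ht | ht
    · subst ht
      simp at hr
      exact ⟨hr.resolve_right h1'.ne', rfl⟩
    · exact absurd ht h2.ne'
  let L : PeriodPair := ⟨ω₁, ω₂, indep⟩
  have hS : ∀ z, wSigma ω₁ ω₂ z = SigmaAux.S L z := fun z => SigmaAux.wSigma_eq L z
  have hS' : wSigma ω₁ ω₂ = SigmaAux.S L := funext hS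
  have hb : bconst ω₁ ω₂ = 1 - 2 * logDeriv (SigmaAux.S L) (ω₁ / 2) / (2 * ω₁) := by
    rw [bconst, lambda1, wZeta, hS']; rfl
  have a1 := SigmaAux.S_add L L.ω₁_mem_lattice L.ω₁_div_two_notMem_lattice
  have a2 := SigmaAux.S_add L L.ω₂_mem_lattice L.ω₂_div_two_notMem_lattice
  have hleg := SigmaAux.legendre L h1 h1' h2
  change ∀ z, SigmaAux.S L (z + ω₁)
    = - Complex.exp (2 * logDeriv (SigmaAux.S L) (ω₁ / 2) * (z + ω₁ / 2)) * SigmaAux.S L z at a1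
  change ∀ z, SigmaAux.S L (z + ω₂)
    = - Complex.exp (2 * logDeriv (SigmaAux.S L) (ω₂ / 2) * (z + ω₂ / 2)) * SigmaAux.S L z at a2
  change 2 * logDeriv (SigmaAux.S L) (ω₁ / 2) * ω₂ - 2 * logDeriv (SigmaAux.S L) (ω₂ / 2) * ω₁
      = 2 * Real.pi * Complex.I at hleg
  generalize logDeriv (SigmaAux.S L) (ω₁ / 2) = Z₁ at *
  generalize logDeriv (SigmaAux.S L) (ω₂ / 2) = Z₂ at *
  have hω₁ : ω₁ ≠ 0 := by rintro rfl; simp at h1'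
  have hc1 : (starRingEnd ℂ) ω₁ = ω₁ := Complex.conj_eq_iff_im.2 h1
  have b1 : 2 * bconst ω₁ ω₂ * ω₁ + 2 * Z₁ = 2 * (starRingEnd ℂ) ω₁ := by
    rw [hb, hc1]; field_simp; ring
  have hpi : (2 * Real.pi : ℂ) = 4 * (ω₁ * ω₂.im) := by
    have e : ω₁ = (ω₁.re : ℂ) := (Complex.conj_eq_iff_re.1 hc1).symm
    rw [e]
    have : 2 * Real.pi = 4 * (ω₁.re * ω₂.im) := by linarith
    exact_mod_cast this
  have hc2 : (starRingEnd ℂ) ω₂ = ω₂ - 2 * ω₂.im * Complex.I := by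
    apply Complex.ext <;> simp
    ring
  have b2 : 2 * bconst ω₁ ω₂ * ω₂ + 2 * Z₂ = 2 * (starRingEnd ℂ) ω₂ := by
    rw [hpi] at hleg
    rw [hb, hc2]
    apply mul_left_cancel₀ hω₁
    field_simp
    linear_combination (-1 / 2 : ℂ) * hleg
  have part1 : ∀ ω ∈ ({ω₁, ω₂} : Set ℂ), ∀ z : ℂ,
      sigmaStar ω₁ ω₂ z =
        -Complex.exp (-2 * (starRingEnd ℂ) ω * z - ((‖ω‖ ^ 2 : ℝ) : ℂ)) *
          sigmaStar ω₁ ω₂ (z + ω) := by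
    rintro ω (rfl | rfl) z
    · rw [sigmaStar, sigmaStar, hS']
      exact SigmaAux.star_add _ _ _ _ _ _ b1 (a1 z)
    · rw [sigmaStar, sigmaStar, hS']
      exact SigmaAux.star_add _ _ _ _ _ _ b2 (a2 z)
  refine ⟨part1, ?_⟩
  rintro _ ⟨m, n, rfl⟩ z
  have p1 := SigmaAux.per_of _ _ (part1 ω₁ (by simp))
  have p2 := SigmaAux.per_of _ _ (part1 ω₂ (by simp))
  exact ((p1.int_mul m).add_period (p2.int_mul n)) z
end

section
/- Let Λ = ω₁ℤ + ω₂ℤ with ω₁ > 0 real, Im ω₂ > 0, and ω₁·Im ω₂ = π/2, and let π_α be the monic first degree pseudopolynomial with root α. Then for j = 1, 2, all α ∈ ℂ and all z ∈ ℂ: (i) π_{α+ω_j}(z) = −e^{2i·Im(ω̄_j α)} π_α(z), and (ii) π_α(z+ω_j) = −e^{2i·Im(ω̄_j(z−2α))} π_α(z). -/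
open MeasureTheory

open Filter Topology

namespace PP
variable (L : PeriodPair)

/-- elementary factor -/
noncomputable def E (l z : ℂ) : ℂ := (1 - z / l) * Complex.exp (z / l + z ^ 2 / (2 * l ^ 2))

lemma E_zero (z : ℂ) : E 0 z = 1 := by simp [E]

lemma E_bound_aux (w : ℂ) (hw : ‖w‖ ≤ 1/2) :
    ‖(1 - w) * Complex.exp (w + w ^ 2 / 2) - 1‖ ≤ 2 * ‖w‖ ^ 3 := by
  have h := Complex.norm_log_sub_logTaylor_le 2 (z := -w) (by simp; linarith)
  have h0 : (1 + -w) ≠ 0 := by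
    intro h
    have : w = 1 := by linear_combination -h
    simp [this] at hw; norm_num at hw
  set x := Complex.log (1 + -w) - Complex.logTaylor (2+1) (-w) with hx
  have hexp : (1 - w) * Complex.exp (w + w ^ 2 / 2) = Complex.exp x := by
    rw [hx, sub_eq_add_neg (Complex.log _), Complex.exp_add (Complex.log _), Complex.exp_log h0,
      ← sub_eq_add_neg 1 w]
    congr 2
    simp [Complex.logTaylor, Finset.sum_range_succ]
    ring
  have hb : ‖x‖ ≤ ‖w‖ ^ 3 := by
    refine h.trans ?_
    rw [norm_neg]
    have h2 : (1 - ‖w‖)⁻¹ ≤ 2 := by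
      rw [inv_le_comm₀ (by linarith) (by norm_num)]; linarith
    have h3 : 0 ≤ ‖w‖ ^ 3 := by positivity
    norm_num
    nlinarith
  have hb1 : ‖x‖ ≤ 1 := hb.trans (pow_le_one₀ (norm_nonneg _) (by linarith))
  rw [hexp]
  exact (Complex.norm_exp_sub_one_le hb1).trans (by linarith)

lemma E_bound (r : ℝ) (hr : 0 < r) (z : ℂ) (hz : ‖z‖ ≤ r) (l : ℂ) (hl : 2 * r ≤ ‖l‖) :
    ‖E l z - 1‖ ≤ 2 * r ^ 3 * ‖l‖ ^ (-3 : ℝ) := by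
  have hl0 : 0 < ‖l‖ := by linarith
  have hw : ‖z / l‖ ≤ r / ‖l‖ := by rw [norm_div]; gcongr
  have hw2 : r / ‖l‖ ≤ 1 / 2 := by rw [div_le_div_iff₀ hl0 (by norm_num)]; linarith
  have h := E_bound_aux (z / l) (hw.trans hw2)
  have e : E l z = (1 - z / l) * Complex.exp (z / l + (z / l) ^ 2 / 2) := by
    unfold E; congr 3; rw [div_pow, div_div, mul_comm]
  rw [e]
  refine h.trans ?_
  have : ‖l‖ ^ (-3 : ℝ) = (‖l‖ ^ 3)⁻¹ := by
    rw [Real.rpow_neg hl0.le]; norm_cast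
  rw [this, mul_assoc, ← div_eq_mul_inv, ← div_pow]
  gcongr

lemma eventually_norm (R : ℝ) : ∀ᶠ l : L.lattice in cofinite, R ≤ ‖(l : ℂ)‖ := by
  refine (isCompact_iff_finite.mp (isCompact_closedBall (0 : L.lattice) R)).subset ?_
  intro l hl
  simp only [Metric.mem_closedBall, dist_zero_right]
  simp only [Set.mem_compl_iff, Set.mem_ofPred_eq, not_le] at hl
  exact hl.le

lemma summable3 : Summable fun l : L.lattice ↦ ‖(l : ℂ)‖ ^ (-3 : ℝ) :=
  ZLattice.summable_norm_rpow _ _ (by simp; norm_num)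

noncomputable def H (z : ℂ) : ℂ := ∏' l : L.lattice, E l z

lemma E_diff (l : ℂ) : Differentiable ℂ (E l) := by
  unfold E; fun_prop

lemma hasProdH : HasProdLocallyUniformlyOn (fun (l : L.lattice) z ↦ E l z) (H L) Set.univ := by
  apply hasProdLocallyUniformlyOn_of_forall_compact isOpen_univ
  intro K _ hK
  obtain ⟨r, hr⟩ := hK.isBounded.exists_pos_norm_le
  have := Summable.hasProdUniformlyOn_one_add (f := fun (l : L.lattice) z ↦ E l z - 1) hK
    ((summable3 L).mul_left (2 * r ^ 3)) ?_ ?_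
  · simpa [H] using! this
  · filter_upwards [eventually_norm L (2 * r)] with l hl z hz
    exact E_bound r hr.1 z (hr.2 z hz) l hl
  · intro l
    exact ((E_diff l).continuous.sub continuous_const).continuousOn

lemma H_diff : Differentiable ℂ (H L) := by
  rw [← differentiableOn_univ]
  exact (hasProdH L).differentiableOn (.of_forall fun s ↦ by
    exact DifferentiableOn.fun_finsetProd (fun (i : L.lattice) _ ↦ (E_diff i).differentiableOn)) isOpen_univ

lemma E_ne (l z : ℂ) (h : l = 0 ∨ z ≠ l) : E l z ≠ 0 := by
  by_cases hl : l = 0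
  · simp [hl, E_zero]
  · have hz : z ≠ l := by tauto
    refine mul_ne_zero ?_ (Complex.exp_ne_zero _)
    rw [sub_ne_zero]
    intro h
    exact hz ((div_eq_one_iff_eq hl).1 h.symm)

lemma H_ne (z : ℂ) (hz : z ∈ ((L.lattice : Set ℂ) \ {0})ᶜ) : H L z ≠ 0 := by
  have := tprod_one_add_ne_zero_of_summable (f := fun l : L.lattice ↦ E l z - 1) ?_ ?_
  · simpa [H] using this
  · intro l
    rw [add_sub_cancel]
    apply E_ne
    by_contra! h
    exact hz ⟨h.2 ▸ l.2, by simp [h]⟩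
  · have : 0 < ‖z‖ + 1 := by positivity
    refine ((summable3 L).mul_left (2 * (‖z‖ + 1) ^ 3)).of_norm_bounded_eventually ?_
    filter_upwards [eventually_norm L (2 * (‖z‖ + 1))] with l hl
    rw [norm_norm]
    exact E_bound _ this z (by linarith) l hl

/-- zeta minus 1/z -/
noncomputable def Z0 (z : ℂ) : ℂ := ∑' l : L.lattice, z ^ 2 / ((l : ℂ) ^ 2 * (z - l))

lemma hasSumZ0 : HasSumLocallyUniformly (fun (l : L.lattice) z ↦ z ^ 2 / ((l : ℂ) ^ 2 * (z - l)))
    (Z0 L) := by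
  refine L.hasSumLocallyUniformly_aux (u := fun r l ↦ 2 * r ^ 2 * ‖(l : ℂ)‖ ^ (-3 : ℝ)) _
    (fun r _ ↦ (summable3 L).mul_left _) fun r hr ↦ Filter.eventually_atTop.mpr ⟨2 * r, ?_⟩
  rintro _ h s hs l rfl
  have hl0 : 0 < ‖(l : ℂ)‖ := by linarith
  have h1 : ‖(l : ℂ)‖ / 2 ≤ ‖s - l‖ := by
    rw [norm_sub_rev]
    exact .trans (by linarith) (norm_sub_norm_le (l : ℂ) s)
  have : ‖(l : ℂ)‖ ^ (-3 : ℝ) = (‖(l : ℂ)‖ ^ 3)⁻¹ := by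
    rw [Real.rpow_neg hl0.le]; norm_cast
  rw [this, norm_div, norm_mul, norm_pow, norm_pow]
  calc _ ≤ r ^ 2 / (‖(l : ℂ)‖ ^ 2 * (‖(l : ℂ)‖ / 2)) := by gcongr
    _ = _ := by field_simp

lemma logDeriv_E (l z : ℂ) (h : l = 0 ∨ z ≠ l) : logDeriv (E l) z = z ^ 2 / (l ^ 2 * (z - l)) := by
  by_cases hl : l = 0
  · have : E l = fun _ ↦ 1 := by ext; simp [hl, E_zero]
    rw [this]; simp [hl]
  · have hz : z - l ≠ 0 := sub_ne_zero.2 (by tauto)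
    have hz' : l - z ≠ 0 := by rw [← neg_sub]; exact neg_ne_zero.2 hz
    have hd : HasDerivAt (E l) ((-(1 / l)) * Complex.exp (z / l + z ^ 2 / (2 * l ^ 2)) +
        (1 - z / l) * (Complex.exp (z / l + z ^ 2 / (2 * l ^ 2)) *
          (1 / l + (2 * z) / (2 * l ^ 2)))) z := by
      have h1 : HasDerivAt (fun z : ℂ ↦ 1 - z / l) (-(1 / l)) z :=
        ((hasDerivAt_id z).div_const l).const_sub 1
      have h2 : HasDerivAt (fun z : ℂ ↦ z / l + z ^ 2 / (2 * l ^ 2))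
          (1 / l + (2 * z) / (2 * l ^ 2)) z := by
        have := (hasDerivAt_pow 2 z).div_const (2 * l ^ 2)
        simpa using! ((hasDerivAt_id z).div_const l).add this
      exact h1.mul h2.cexp
    rw [logDeriv_apply, hd.deriv]
    unfold E
    have he := Complex.exp_ne_zero (z / l + z ^ 2 / (2 * l ^ 2))
    have h3 : 1 - z / l ≠ 0 := by
      rw [one_sub_div hl]; exact div_ne_zero hz' hl
    rw [div_eq_div_iff (mul_ne_zero h3 he) (by positivity)]
    field_simp
    ring

lemma logDeriv_H (z : ℂ) (hz : z ∈ ((L.lattice : Set ℂ) \ {0})ᶜ) : logDeriv (H L) z = Z0 L z := by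
  have hz' : ∀ l : L.lattice, (l : ℂ) = 0 ∨ z ≠ l := by
    intro l
    by_contra! h
    exact hz ⟨h.2 ▸ l.2, by simp [h]⟩
  have e : ∀ l : L.lattice, logDeriv (E l) z = z ^ 2 / ((l : ℂ) ^ 2 * (z - l)) :=
    fun l ↦ logDeriv_E _ _ (hz' l)
  have := logDeriv_tprod_eq_tsum isOpen_univ (Set.mem_univ z)
    (f := fun (l : L.lattice) z ↦ E l z) (fun l ↦ E_ne _ _ (hz' l))
    (fun l ↦ (E_diff l).differentiableOn) (by simp_rw [e]; exact (hasSumZ0 L).hasSum.summable)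
    (hasProdH L).multipliableLocallyUniformlyOn (H_ne L z hz)
  refine this.trans ?_
  simp_rw [e]
  rfl

lemma Z0_term (l x : ℂ) (h : l = 0 ∨ x ≠ l) : HasDerivAt (fun z ↦ z ^ 2 / (l ^ 2 * (z - l)))
    (-(if l = 0 then 0 else (1 / (x - l) ^ 2 - 1 / l ^ 2))) x := by
  by_cases hl : l = 0
  · simp [hl]; exact hasDerivAt_const _ _
  · have hx : x - l ≠ 0 := sub_ne_zero.2 (by tauto)
    rw [if_neg hl]
    have h1 : HasDerivAt (fun z : ℂ ↦ l ^ 2 * (z - l)) (l ^ 2) x := by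
      simpa using ((hasDerivAt_id x).sub_const l).const_mul (l ^ 2)
    convert! (hasDerivAt_pow 2 x).div h1 (by positivity) using 1
    field_simp
    ring

lemma Z0_diff : DifferentiableOn ℂ (Z0 L) ((L.lattice : Set ℂ) \ {0})ᶜ := by
  refine (hasSumZ0 L).hasSumLocallyUniformlyOn.differentiableOn
    (.of_forall fun s ↦ .fun_sum fun l hi x hx ↦ ?_) L.isOpen_compl_lattice_sdiff
  refine (Z0_term l x ?_).differentiableAt.differentiableWithinAt
  by_contra! h
  exact hx ⟨h.2 ▸ l.2, by simp [h]⟩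

lemma Z0_deriv (z : ℂ) (hz : z ∈ ((L.lattice : Set ℂ) \ {0})ᶜ) :
    deriv (Z0 L) z = - L.weierstrassPExcept 0 z := by
  have key : ∀ x ∈ ((L.lattice : Set ℂ) \ {0})ᶜ, ∀ l : L.lattice, (l : ℂ) = 0 ∨ x ≠ l := by
    intro x hx l
    by_contra! h
    exact hx ⟨h.2 ▸ l.2, by simp [h]⟩
  have := ((hasSumZ0 L).tendstoLocallyUniformlyOn (s := ((L.lattice : Set ℂ) \ {0})ᶜ)).deriv
    (.of_forall fun s ↦ .fun_sum fun l hi x hx ↦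
      (Z0_term l x (key x hx l)).differentiableAt.differentiableWithinAt)
      L.isOpen_compl_lattice_sdiff
  refine tendsto_nhds_unique (this.tendsto_at hz) ?_
  refine (L.hasSum_weierstrassPExcept 0 z).neg.congr ?_
  intro s
  simp only [Function.comp_apply]
  rw [deriv_fun_sum fun (l : L.lattice) _ ↦ (Z0_term l z (key z hz l)).differentiableAt]
  exact Finset.sum_congr rfl fun l _ ↦ ((Z0_term l z (key z hz l)).deriv).symm



lemma notMem_iff (z : ℂ) (hz : z ∉ L.lattice) : z ∈ ((L.lattice : Set ℂ) \ {0})ᶜ :=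
  fun h ↦ hz h.1

lemma ne_zero' {z : ℂ} (hz : z ∉ L.lattice) : z ≠ 0 := fun h ↦ hz (h ▸ zero_mem _)

/-- sigma -/
noncomputable def S (z : ℂ) : ℂ := z * H L z

/-- zeta -/
noncomputable def Zt (z : ℂ) : ℂ := Z0 L z + 1 / z

lemma S_ne {z : ℂ} (hz : z ∉ L.lattice) : S L z ≠ 0 :=
  mul_ne_zero (ne_zero' L hz) (H_ne L z (notMem_iff L z hz))

lemma S_zero {z : ℂ} (hz : z ∈ L.lattice) : S L z = 0 := by
  by_cases h : z = 0
  · simp [h, S]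
  · have : H L z = 0 := tprod_of_exists_eq_zero ⟨⟨z, hz⟩, by simp [E, h]⟩
    simp [S, this]

lemma S_deriv {z : ℂ} (hz : z ∉ L.lattice) : HasDerivAt (S L) (Zt L z * S L z) z := by
  have h0 := ne_zero' L hz
  have hH := H_ne L z (notMem_iff L z hz)
  have h1 := logDeriv_H L z (notMem_iff L z hz)
  rw [logDeriv_apply, div_eq_iff hH] at h1
  have := (hasDerivAt_id z).mul (H_diff L z).hasDerivAt
  convert! this using 1
  rw [h1, Zt, S]
  simp only [id]
  field_simp
  ring

lemma H_neg (z : ℂ) : H L (-z) = H L z := by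
  unfold H
  rw [← (Equiv.neg L.lattice).tprod_eq]
  congr! 2 with l
  simp [E]

lemma S_neg (z : ℂ) : S L (-z) = - S L z := by
  simp [S, H_neg]

lemma Z0_neg (z : ℂ) : Z0 L (-z) = - Z0 L z := by
  unfold Z0
  rw [← (Equiv.neg L.lattice).tsum_eq, ← tsum_neg]
  congr! 2 with l
  simp only [Equiv.neg_apply, NegMemClass.coe_neg, even_two, Even.neg_pow]
  rw [← div_neg]
  congr 1
  ring

lemma Zt_neg (z : ℂ) : Zt L (-z) = - Zt L z := by
  simp [Zt, Z0_neg]; ring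

lemma Zt_deriv {z : ℂ} (hz : z ∉ L.lattice) : HasDerivAt (Zt L) (- L.weierstrassP z) z := by
  have hz' := notMem_iff L z hz
  have h1 : HasDerivAt (Z0 L) (- L.weierstrassPExcept 0 z) z := by
    rw [← Z0_deriv L z hz']
    exact ((Z0_diff L).differentiableAt (L.isOpen_compl_lattice_sdiff.mem_nhds hz')).hasDerivAt
  have h2 : HasDerivAt (fun z : ℂ ↦ 1 / z) (-(1 / z ^ 2)) z := by
    simpa using hasDerivAt_inv (ne_zero' L hz)
  convert! h1.add h2 using 1
  have := L.weierstrassPExcept_add 0 z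
  simp at this
  rw [← this]
  simp; ring

lemma compl_open : IsOpen ((L.lattice : Set ℂ)ᶜ) := L.isClosed_lattice.isOpen_compl

lemma compl_conn : IsPreconnected ((L.lattice : Set ℂ)ᶜ) := by
  have hc : (L.lattice : Set ℂ).Countable := by
    have : Countable L.lattice := L.latticeEquivProd.toEquiv.countable_iff.2 inferInstance
    exact Set.countable_coe_iff.1 this
  exact (hc.isPathConnected_compl_of_one_lt_rank
    (by rw [Complex.rank_real_complex]; norm_num)).isConnected.isPreconnected

lemma add_notMem {z ω : ℂ} (hω : ω ∈ L.lattice) (hz : z ∉ L.lattice) : z + ω ∉ L.lattice :=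
  fun h ↦ hz ((Submodule.add_mem_iff_left _ hω).1 h)

lemma neg_half {ω : ℂ} (hω2 : ω / 2 ∉ L.lattice) : -(ω / 2) ∉ L.lattice := by
  simpa using hω2

lemma Zt_add {ω : ℂ} (hω : ω ∈ L.lattice) (hω2 : ω / 2 ∉ L.lattice) {z : ℂ} (hz : z ∉ L.lattice) :
    Zt L (z + ω) = Zt L z + 2 * Zt L (ω / 2) := by
  have hd : ∀ x ∈ (L.lattice : Set ℂ)ᶜ, HasDerivAt (fun z ↦ Zt L (z + ω) - Zt L z) 0 x := by
    intro x hx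
    have h1 := (Zt_deriv L (add_notMem L hω hx)).comp_add_const x ω
    convert! h1.sub (Zt_deriv L hx) using 1
    have := L.weierstrassP_add_coe x ⟨ω, hω⟩
    simp at this
    simp [this]
  have := (compl_open L).is_const_of_deriv_eq_zero (compl_conn L)
    (fun x hx ↦ (hd x hx).differentiableAt.differentiableWithinAt)
    (fun x hx ↦ (hd x hx).deriv) (x := z) (y := -(ω / 2)) hz (neg_half L hω2)
  simp only [Zt_neg] at this
  rw [show -(ω / 2) + ω = ω / 2 by ring] at this
  linear_combination this

lemma S_add {ω : ℂ} (hω : ω ∈ L.lattice) (hω2 : ω / 2 ∉ L.lattice) (z : ℂ) :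
    S L (z + ω) = - Complex.exp (2 * Zt L (ω / 2) * (z + ω / 2)) * S L z := by
  by_cases hz : z ∈ L.lattice
  · rw [S_zero L hz, S_zero L (add_mem hz hω), mul_zero]
  set η := 2 * Zt L (ω / 2) with hη
  have hd : ∀ x ∈ (L.lattice : Set ℂ)ᶜ,
      HasDerivAt (fun z ↦ S L (z + ω) * Complex.exp (-(η * (z + ω / 2))) / S L z) 0 x := by
    intro x hx
    have h1 := (S_deriv L (add_notMem L hω hx)).comp_add_const x ω
    have h2 : HasDerivAt (fun z : ℂ ↦ -(η * (z + ω / 2))) (-(η * 1)) x :=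
      (((hasDerivAt_id x).add_const (ω / 2)).const_mul η).neg
    convert! (h1.mul h2.cexp).div (S_deriv L hx) (S_ne L hx) using 1
    rw [Zt_add L hω hω2 hx, ← hη]
    simp only [Pi.mul_apply]
    ring
  have := (compl_open L).is_const_of_deriv_eq_zero (compl_conn L)
    (fun x hx ↦ (hd x hx).differentiableAt.differentiableWithinAt)
    (fun x hx ↦ (hd x hx).deriv) (x := z) (y := -(ω / 2)) hz (neg_half L hω2)
  simp only [S_neg] at this
  rw [show -(ω / 2) + ω = ω / 2 by ring, show -(ω / 2) + ω / 2 = 0 by ring] at this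
  have hs := S_ne L hω2
  rw [mul_zero, neg_zero, Complex.exp_zero, mul_one, div_neg, div_self hs,
    div_eq_iff (S_ne L hz), Complex.exp_neg] at this
  have he := Complex.exp_ne_zero (η * (z + ω / 2))
  field_simp at this
  rw [this]; ring

lemma const_seg (f : ℂ → ℂ) (a w : ℂ)
    (h : ∀ t : ℝ, 0 ≤ t → t ≤ 1 → HasDerivAt f 0 (a + t * w)) : f (a + w) = f a := by
  have := (convex_segment (𝕜 := ℝ) a (a + w)).norm_image_sub_le_of_norm_hasDerivWithin_le
    (f := f) (f' := fun _ ↦ 0) (C := 0) (x := a) (y := a + w) ?_ (by simp)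
    (left_mem_segment _ _ _) (right_mem_segment _ _ _)
  · simpa [sub_eq_zero] using this
  · intro x hx
    rw [segment_eq_image'] at hx
    obtain ⟨t, ht, rfl⟩ := hx
    simpa using (h t ht.1 ht.2).hasDerivWithinAt

lemma log_neg_sub {A : ℂ} (hA : A.im < 0) : Complex.log (-A) - Complex.log A = Real.pi * Complex.I := by
  have h : Complex.arg A = Complex.arg (-A) - Real.pi := by
    have := Complex.arg_neg_eq_arg_sub_pi_of_im_pos (x := -A) (by simpa using hA)
    simpa using this
  simp only [Complex.log, h, norm_neg]
  push_cast; ring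

/-- open parallelogram -/
def Par : Set ℂ := {z | (z.im < L.ω₂.im ∧ -L.ω₂.im < z.im) ∧
  (z.re * L.ω₂.im - z.im * L.ω₂.re < L.ω₁.re * L.ω₂.im ∧
    -(L.ω₁.re * L.ω₂.im) < z.re * L.ω₂.im - z.im * L.ω₂.re)}

lemma par_open : IsOpen (Par L) := by
  have c1 := Complex.continuous_re
  have c2 := Complex.continuous_im
  exact ((isOpen_lt c2 continuous_const).inter (isOpen_lt continuous_const c2)).inter
    ((isOpen_lt (f := fun z : ℂ ↦ z.re * L.ω₂.im - z.im * L.ω₂.re) (by fun_prop)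
      continuous_const).inter
      (isOpen_lt (g := fun z : ℂ ↦ z.re * L.ω₂.im - z.im * L.ω₂.re) continuous_const
        (by fun_prop)))

lemma par_convex : Convex ℝ (Par L) := by
  intro x hx y hy a b ha hb hab
  obtain ⟨⟨h1, h2⟩, h3, h4⟩ := hx
  obtain ⟨⟨k1, k2⟩, k3, k4⟩ := hy
  have key : ∀ u v C : ℝ, u < C → v < C → a * u + b * v < C := by
    intro u v C hu hv
    rcases ha.eq_or_lt with rfl | ha
    · have : b = 1 := by linarith
      subst this; linarith
    · have q1 : a * u < a * C := mul_lt_mul_of_pos_left hu ha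
      have q2 : b * v ≤ b * C := mul_le_mul_of_nonneg_left hv.le hb
      have q3 : a * C + b * C = C := by rw [← add_mul, hab, one_mul]
      linarith
  have key2 : ∀ u v C : ℝ, C < u → C < v → C < a * u + b * v := by
    intro u v C hu hv
    have := key (-u) (-v) (-C) (by linarith) (by linarith)
    linarith
  refine ⟨⟨?_, ?_⟩, ?_, ?_⟩
  · simpa using key _ _ _ h1 k1
  · simpa using key2 _ _ _ h2 k2
  · have := key _ _ _ h3 k3
    simp; linarith
  · have := key2 _ _ _ h4 k4
    simp; linarith

section
variable (h1 : L.ω₁.im = 0) (h1' : 0 < L.ω₁.re) (h2 : 0 < L.ω₂.im)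
include h1 h1' h2

lemma par_sub : Par L ⊆ ((L.lattice : Set ℂ) \ {0})ᶜ := by
  rintro z ⟨⟨a1, a2⟩, a3, a4⟩ ⟨hz, hz0⟩
  obtain ⟨m, n, rfl⟩ := PeriodPair.mem_lattice.1 hz
  simp [h1] at a1 a2 a3 a4
  have hn : n = 0 := by
    have b1 : (n : ℝ) < 1 := by nlinarith
    have b2 : (-1 : ℝ) < n := by nlinarith
    have b1' : n < 1 := by exact_mod_cast b1
    have b2' : -1 < n := by exact_mod_cast b2
    omega
  subst hn
  have hp : 0 < L.ω₁.re * L.ω₂.im := by positivity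
  simp at a3 a4
  have hm : m = 0 := by
    have b1 : (m : ℝ) < 1 := by nlinarith
    have b2 : (-1 : ℝ) < m := by nlinarith
    have b1' : m < 1 := by exact_mod_cast b1
    have b2' : -1 < m := by exact_mod_cast b2
    omega
  subst hm
  simp at hz0

lemma par_mem (x y : ℝ) (hx : -1 < x) (hx' : x < 1) (hy : -1 < y) (hy' : y < 1) :
    (x * L.ω₁ + y * L.ω₂ : ℂ) ∈ Par L := by
  have hp : 0 < L.ω₁.re * L.ω₂.im := by positivity
  refine ⟨⟨?_, ?_⟩, ?_, ?_⟩ <;> simp [h1] <;> nlinarith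

theorem legendre : 2 * Zt L (L.ω₁ / 2) * L.ω₂ - 2 * Zt L (L.ω₂ / 2) * L.ω₁ =
    2 * Real.pi * Complex.I := by
  set η₁ := 2 * Zt L (L.ω₁ / 2) with hη₁
  set η₂ := 2 * Zt L (L.ω₂ / 2) with hη₂
  obtain ⟨P, hP⟩ := (par_convex L).exists_forall_hasDerivWithinAt
    ((Z0_diff L).mono (par_sub L h1 h1' h2))
  have hP' : ∀ z ∈ Par L, HasDerivAt P (Z0 L z) z := fun z hz ↦
    (hP z hz).hasDerivAt ((par_open L).mem_nhds hz)
  have hnm : ∀ z ∈ Par L, z ≠ 0 → z ∉ L.lattice := fun z hz h0 h ↦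
    par_sub L h1 h1' h2 hz ⟨h, h0⟩
  set A : ℂ := -(L.ω₁ / 2) - L.ω₂ / 2 with hA
  set B : ℂ := L.ω₁ / 2 - L.ω₂ / 2 with hB
  have e1 := const_seg (fun z ↦ P (z + L.ω₂) + Complex.log (z + L.ω₂) - P z - Complex.log z
    - η₂ * z) A L.ω₁ (by
      intro t ht0 ht1
      have hz : A + t * L.ω₁ = ((t - 1/2 : ℝ) : ℂ) * L.ω₁ + ((-1/2 : ℝ) : ℂ) * L.ω₂ := by
        rw [hA]; push_cast; ring
      have hz2 : A + t * L.ω₁ + L.ω₂ = ((t - 1/2 : ℝ) : ℂ) * L.ω₁ + ((1/2 : ℝ) : ℂ) * L.ω₂ := by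
        rw [hA]; push_cast; ring
      have m1 : A + t * L.ω₁ ∈ Par L := by
        rw [hz]; apply par_mem L h1 h1' h2 <;> linarith
      have m2 : A + t * L.ω₁ + L.ω₂ ∈ Par L := by
        rw [hz2]; apply par_mem L h1 h1' h2 <;> linarith
      have s1 : (A + t * L.ω₁).im < 0 := by rw [hz]; simp [h1]; linarith
      have s2 : 0 < (A + t * L.ω₁ + L.ω₂).im := by rw [hz2]; simp [h1]; linarith
      have n1 := hnm _ m1 (by intro h; rw [h] at s1; simp at s1)
      set z := A + t * L.ω₁
      have d1 := (hP' _ m2).comp_add_const z L.ω₂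
      have d2 := (Complex.hasDerivAt_log (Or.inr s2.ne')).comp_add_const z L.ω₂
      have d3 := Complex.hasDerivAt_log (z := z) (Or.inr s1.ne)
      have d4 := (hasDerivAt_id z).const_mul η₂
      convert! (((d1.add d2).sub (hP' _ m1)).sub d3).sub d4 using 1
      have := Zt_add L L.ω₂_mem_lattice L.ω₂_div_two_notMem_lattice n1
      rw [← hη₂, Zt, Zt] at this
      simp only [one_div] at this
      linear_combination -this)
  have slit : ∀ u : ℝ, ((1/2 : ℝ) : ℂ) * L.ω₁ + (u : ℂ) * L.ω₂ ∈ Complex.slitPlane := by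
    intro u
    by_cases hu : u = 0
    · left; simp [hu, h1, h1']
    · right; simp [hu, h1, h2.ne']
  have e2 := const_seg (fun z ↦ P (z + L.ω₁) + Complex.log (z + L.ω₁) - P z - Complex.log (-z)
    - η₁ * z) A L.ω₂ (by
      intro t ht0 ht1
      have hz : A + t * L.ω₂ = ((-1/2 : ℝ) : ℂ) * L.ω₁ + ((t - 1/2 : ℝ) : ℂ) * L.ω₂ := by
        rw [hA]; push_cast; ring
      have hz3 : -(A + t * L.ω₂) = ((1/2 : ℝ) : ℂ) * L.ω₁ + ((1/2 - t : ℝ) : ℂ) * L.ω₂ := by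
        rw [hA]; push_cast; ring
      have hz2 : A + t * L.ω₂ + L.ω₁ = ((1/2 : ℝ) : ℂ) * L.ω₁ + ((t - 1/2 : ℝ) : ℂ) * L.ω₂ := by
        rw [hA]; push_cast; ring
      have m1 : A + t * L.ω₂ ∈ Par L := by
        rw [hz]; apply par_mem L h1 h1' h2 <;> linarith
      have m2 : A + t * L.ω₂ + L.ω₁ ∈ Par L := by
        rw [hz2]; apply par_mem L h1 h1' h2 <;> linarith
      have s1 : -(A + t * L.ω₂) ∈ Complex.slitPlane := by rw [hz3]; exact slit _
      have s2 : A + t * L.ω₂ + L.ω₁ ∈ Complex.slitPlane := by rw [hz2]; exact slit _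
      have n1 := hnm _ m1 (by intro h; rw [h] at s1; simp at s1)
      set z := A + t * L.ω₂
      have d1 := (hP' _ m2).comp_add_const z L.ω₁
      have d2 := (Complex.hasDerivAt_log s2).comp_add_const z L.ω₁
      have d3 := (hasDerivAt_id z).neg.clog s1
      have d4 := (hasDerivAt_id z).const_mul η₁
      convert! (((d1.add d2).sub (hP' _ m1)).sub d3).sub d4 using 1
      have := Zt_add L L.ω₁_mem_lattice L.ω₁_div_two_notMem_lattice n1
      rw [← hη₁, Zt, Zt] at this
      simp only [one_div] at this
      simp
      linear_combination -this)
  have lA := log_neg_sub (A := A) (by simp [hA, h1, h2])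
  have lB := log_neg_sub (A := B) (by simp [hB, h1, h2])
  have q1 : A + L.ω₁ = B := by rw [hA, hB]; ring
  have q2 : A + L.ω₂ = -B := by rw [hA, hB]; ring
  have q3 : B + L.ω₂ = -A := by rw [hA, hB]; ring
  have q4 : -B + L.ω₁ = -A := by rw [hA, hB]; ring
  simp only [q1, q2, q3, q4, neg_neg] at e1 e2
  have qa : η₂ * L.ω₁ = η₂ * B - η₂ * A := by rw [hA, hB]; ring
  have qb : η₁ * L.ω₂ = η₁ * (-B) - η₁ * A := by rw [hA, hB]; ring
  rw [qa, qb]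
  linear_combination e1 - e2 + lA + lB

end
end PP


theorem PP.wSigma_eq (L : PeriodPair) : wSigma L.ω₁ L.ω₂ = PP.S L := by
  funext z
  unfold wSigma PP.S PP.H
  congr 1
  rw [← L.latticeEquivProd.symm.toEquiv.tprod_eq]
  have : ∀ x : ℤ × ℤ, ((L.latticeEquivProd.symm.toEquiv x : L.lattice) : ℂ) =
    x.1 * L.ω₁ + x.2 * L.ω₂ := fun x ↦ L.latticeEquiv_symm_apply x
  simp_rw [this]
  refine Function.Injective.tprod_eq (g := fun p : {p : ℤ × ℤ // p ≠ 0} ↦ (p : ℤ × ℤ))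
    (f := fun p : ℤ × ℤ ↦ PP.E (p.1 * L.ω₁ + p.2 * L.ω₂) z) Subtype.val_injective ?_
  intro p hp
  simp only [Subtype.range_coe_subtype]
  intro h0
  apply hp
  simp [h0, PP.E_zero]

theorem PP.sigmaStar_add (L : PeriodPair) (h1 : L.ω₁.im = 0) (h1' : 0 < L.ω₁.re) (h2 : 0 < L.ω₂.im)
    (harea : L.ω₁.re * L.ω₂.im = Real.pi / 2) (ω : ℂ) (hω : ω ∈ ({L.ω₁, L.ω₂} : Set ℂ)) (u : ℂ) :
    sigmaStar L.ω₁ L.ω₂ (u + ω) =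
      -Complex.exp (2 * (starRingEnd ℂ) ω * (u + ω / 2)) * sigmaStar L.ω₁ L.ω₂ u := by
  have hl : lambda1 L.ω₁ L.ω₂ = 2 * PP.Zt L (L.ω₁ / 2) := by
    have hn := L.ω₁_div_two_notMem_lattice
    rw [lambda1, wZeta, PP.wSigma_eq, (PP.S_deriv L hn).deriv,
      mul_div_cancel_right₀ _ (PP.S_ne L hn)]
  have hw : L.ω₁ ≠ 0 := by intro h; simp [h] at h1'
  have hb : 2 * bconst L.ω₁ L.ω₂ * L.ω₁ + 2 * PP.Zt L (L.ω₁ / 2) = 2 * L.ω₁ := by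
    rw [bconst, hl]; field_simp; ring
  have hleg := PP.legendre L h1 h1' h2
  have hr : L.ω₁ = (L.ω₁.re : ℂ) := by apply Complex.ext <;> simp [h1]
  have hc1 : (starRingEnd ℂ) L.ω₁ = L.ω₁ := by rw [hr]; simp
  have hc2 : (starRingEnd ℂ) L.ω₂ = L.ω₂ - 2 * L.ω₂.im * Complex.I := by
    apply Complex.ext <;> simp; ring
  have harea' : L.ω₁ * L.ω₂.im = (Real.pi : ℂ) / 2 := by
    rw [hr, ← Complex.ofReal_mul, harea]; push_cast; rfl
  have hω' : ω ∈ L.lattice ∧ ω / 2 ∉ L.lattice ∧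
      2 * bconst L.ω₁ L.ω₂ * ω + 2 * PP.Zt L (ω / 2) = 2 * (starRingEnd ℂ) ω := by
    rcases hω with rfl | rfl
    · exact ⟨L.ω₁_mem_lattice, L.ω₁_div_two_notMem_lattice, by rw [hc1, hb]⟩
    · refine ⟨L.ω₂_mem_lattice, L.ω₂_div_two_notMem_lattice, ?_⟩
      rw [hc2]
      apply mul_left_cancel₀ hw
      linear_combination L.ω₂ * hb - hleg + 4 * Complex.I * harea'
  obtain ⟨m1, m2, m3⟩ := hω'
  unfold sigmaStar
  rw [PP.wSigma_eq, PP.S_add L m1 m2, ← m3]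
  have : Complex.exp (bconst L.ω₁ L.ω₂ * (u + ω) ^ 2) *
      Complex.exp (2 * PP.Zt L (ω / 2) * (u + ω / 2)) =
      Complex.exp ((2 * bconst L.ω₁ L.ω₂ * ω + 2 * PP.Zt L (ω / 2)) * (u + ω / 2)) *
      Complex.exp (bconst L.ω₁ L.ω₂ * u ^ 2) := by
    rw [← Complex.exp_add, ← Complex.exp_add]; congr 1; ring
  linear_combination (- PP.S L u) * this

theorem PP.main_ii (L : PeriodPair) (h1 : L.ω₁.im = 0) (h1' : 0 < L.ω₁.re) (h2 : 0 < L.ω₂.im)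
    (harea : L.ω₁.re * L.ω₂.im = Real.pi / 2) (ω : ℂ) (hω : ω ∈ ({L.ω₁, L.ω₂} : Set ℂ)) (u : ℂ) :
    Complex.exp (-((‖u + ω‖ ^ 2 : ℝ) : ℂ)) * sigmaStar L.ω₁ L.ω₂ (u + ω) =
      -Complex.exp (2 * Complex.I * (((starRingEnd ℂ) ω * u).im : ℂ)) *
      (Complex.exp (-((‖u‖ ^ 2 : ℝ) : ℂ)) * sigmaStar L.ω₁ L.ω₂ u) := by
  rw [PP.sigmaStar_add L h1 h1' h2 harea ω hω]
  have : Complex.exp (-((‖u + ω‖ ^ 2 : ℝ) : ℂ)) *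
      Complex.exp (2 * (starRingEnd ℂ) ω * (u + ω / 2)) =
      Complex.exp (2 * Complex.I * (((starRingEnd ℂ) ω * u).im : ℂ)) *
      Complex.exp (-((‖u‖ ^ 2 : ℝ) : ℂ)) := by
    rw [← Complex.exp_add, ← Complex.exp_add]; congr 1
    rw [← Complex.normSq_eq_norm_sq, ← Complex.normSq_eq_norm_sq, Complex.normSq_apply,
      Complex.normSq_apply]
    apply Complex.ext <;> simp [Complex.div_re, Complex.div_im, Complex.normSq_apply] <;> ring
  linear_combination (-sigmaStar L.ω₁ L.ω₂ u) * this

/-- periodicity-type properties of the monic first degree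
pseudopolynomials on the torus. -/
theorem pseudoPoly_periodicity (ω₁ ω₂ : ℂ)
    (h1 : ω₁.im = 0) (h1' : 0 < ω₁.re) (h2 : 0 < ω₂.im)
    (harea : ω₁.re * ω₂.im = Real.pi / 2) :
    ∀ ω ∈ ({ω₁, ω₂} : Set ℂ), ∀ α z : ℂ,
      pseudoPoly ω₁ ω₂ (α + ω) z =
        -Complex.exp (2 * Complex.I * ((((starRingEnd ℂ) ω) * α).im : ℂ)) *
          pseudoPoly ω₁ ω₂ α z ∧
      pseudoPoly ω₁ ω₂ α (z + ω) =
        -Complex.exp (2 * Complex.I * ((((starRingEnd ℂ) ω) * (z - 2 * α)).im : ℂ)) *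
          pseudoPoly ω₁ ω₂ α z := by
  have hind : LinearIndependent ℝ ![ω₁, ω₂] := by
    rw [LinearIndependent.pair_iff]
    intro s t hst
    have ha := congrArg Complex.im hst
    have hb := congrArg Complex.re hst
    simp [h1] at ha hb
    have ht : t = 0 := ha.resolve_right h2.ne'
    subst ht
    simp at hb
    exact ⟨hb.resolve_right h1'.ne', rfl⟩
  intro ω hω α z
  have key := PP.main_ii ⟨ω₁, ω₂, hind⟩ h1 h1' h2 harea ω hω
  simp only at key
  constructor
  · have k := key (z - α - ω)
    rw [sub_add_cancel] at k
    unfold pseudoPoly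
    rw [k, ← sub_sub]
    have : Complex.exp (2 * Complex.I * (((starRingEnd ℂ) (α + ω) * z).im : ℂ)) =
        Complex.exp (2 * Complex.I * (((starRingEnd ℂ) ω * α).im : ℂ)) *
        Complex.exp (2 * Complex.I * (((starRingEnd ℂ) α * z).im : ℂ)) *
        Complex.exp (2 * Complex.I * (((starRingEnd ℂ) ω * (z - α - ω)).im : ℂ)) := by
      rw [← Complex.exp_add, ← Complex.exp_add]; congr 1
      apply Complex.ext <;> simp; ring
    rw [this]; ring
  · have k := key (z - α)
    unfold pseudoPoly
    rw [show z + ω - α = z - α + ω by ring, k]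
    have : Complex.exp (2 * Complex.I * (((starRingEnd ℂ) α * (z + ω)).im : ℂ)) *
        Complex.exp (2 * Complex.I * (((starRingEnd ℂ) ω * (z - α)).im : ℂ)) =
        Complex.exp (2 * Complex.I * (((starRingEnd ℂ) ω * (z - 2 * α)).im : ℂ)) *
        Complex.exp (2 * Complex.I * (((starRingEnd ℂ) α * z).im : ℂ)) := by
      rw [← Complex.exp_add, ← Complex.exp_add]; congr 1
      apply Complex.ext <;> simp; ring
    linear_combination -(Complex.exp (-((‖z - α‖ ^ 2 : ℝ) : ℂ)) * sigmaStar ω₁ ω₂ (z - α)) * this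
end
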